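/- arXiv:1712.09223 — 2 statements merged into one kernel-verified Lean document; each statement's English description precedes it below -/
import Mathlib

section
/- Let V be a finite-dimensional real normed vector space, C ⊆ V a solid closed cone, Ω ⊆ V a nonempty open connected set, and f : Ω → Ω a homeomorphism that is monotone with respect to C. If the set Per(f) of periodic points of f is dense in Ω, then f is periodic; that is, there exists an integer p ≥ 1 such that f^p(x) = x for all x ∈ Ω. -/
open Set Filter Topology

/-- The cone hypotheses, in a convenient form. -/
structure GoodCone {V : Type*} [NormedAddCommGroup V] [NormedSpace ℝ V] (C : Set V) : Prop where
  add : ∀ x ∈ C, ∀ y ∈ C, x + y ∈ C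
  smul : ∀ c : ℝ, 0 ≤ c → ∀ x ∈ C, c • x ∈ C
  pointed : ∀ x, x ∈ C → -x ∈ C → x = 0
  closed : IsClosed C
  zero : (0 : V) ∈ C

/-- A bijection of `Ω` which preserves and reflects the order. -/
structure OI {V : Type*} [NormedAddCommGroup V] [NormedSpace ℝ V] (C Ω : Set V)
    (k : Ω → Ω) : Prop where
  bij : Function.Bijective k
  iff : ∀ x y : Ω, ((y : V) - x) ∈ C ↔ ((k y : V) - k x) ∈ C

/-- `v` spans an extreme ray. -/
def ExtRay {V : Type*} [NormedAddCommGroup V] [NormedSpace ℝ V] (C : Set V) (v : V) : Prop :=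
  v ∈ C ∧ v ≠ 0 ∧ ‖v‖ ≤ 1 ∧ ∀ u ∈ C, v - u ∈ C → ∃ c : ℝ, u = c • v

section
variable {V : Type*} [NormedAddCommGroup V] [NormedSpace ℝ V]

theorem OI.iterate {C Ω : Set V} {k : Ω → Ω} (h : OI C Ω k) (n : ℕ) : OI C Ω (k^[n]) := by
  induction n with
  | zero => exact ⟨Function.bijective_id, fun x y => Iff.rfl⟩
  | succ n ih =>
    rw [Function.iterate_succ]
    exact ⟨ih.bij.comp h.bij, fun x y => (h.iff x y).trans (ih.iff _ _)⟩

theorem GoodCone.normal [FiniteDimensional ℝ V] {C : Set V} (hC : GoodCone C) :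
    ∃ K : ℝ, 0 < K ∧ ∀ a b : V, a ∈ C → b - a ∈ C → ‖a‖ ≤ K * ‖b‖ := by
  have hS : IsCompact (C ∩ Metric.sphere (0 : V) 1) :=
    (isCompact_sphere (0 : V) 1).inter_left hC.closed
  have hcont : Continuous fun a : V => Metric.infDist (-a) C :=
    (Metric.continuous_infDist_pt C).comp continuous_neg
  have : ∃ δ : ℝ, 0 < δ ∧ ∀ a ∈ C ∩ Metric.sphere (0 : V) 1, δ ≤ Metric.infDist (-a) C := by
    rcases (C ∩ Metric.sphere (0 : V) 1).eq_empty_or_nonempty with he | hne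
    · exact ⟨1, one_pos, by simp [he]⟩
    · obtain ⟨a, ha, hmin⟩ := hS.exists_isMinOn hne hcont.continuousOn
      refine ⟨Metric.infDist (-a) C, ?_, fun b hb => hmin hb⟩
      rw [← hC.closed.notMem_iff_infDist_pos ⟨0, hC.zero⟩]
      intro h
      have := hC.pointed a ha.1 h
      have h2 := ha.2
      simp [this] at h2
  obtain ⟨δ, hδ, hδ'⟩ := this
  refine ⟨1 / δ, by positivity, fun a b ha hb => ?_⟩
  by_cases h0 : a = 0
  · subst h0; simp; positivity
  have hn : 0 < ‖a‖ := norm_pos_iff.2 h0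
  have h1 := hδ' (‖a‖⁻¹ • a) ⟨hC.smul _ (by positivity) _ ha, by
    simp [norm_smul, hn.ne']⟩
  have h2 := Metric.infDist_le_dist_of_mem (x := -(‖a‖⁻¹ • a))
    (hC.smul (‖a‖⁻¹) (by positivity) _ hb)
  rw [dist_eq_norm, smul_sub] at h2
  have h3 : -(‖a‖⁻¹ • a) - (‖a‖⁻¹ • b - ‖a‖⁻¹ • a) = -(‖a‖⁻¹ • b) := by abel
  rw [h3, norm_neg, norm_smul, norm_inv, norm_norm] at h2
  have h4 : δ ≤ ‖a‖⁻¹ * ‖b‖ := h1.trans h2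
  rw [div_mul_eq_mul_div, le_div_iff₀ hδ]
  calc ‖a‖ * δ ≤ ‖a‖ * (‖a‖⁻¹ * ‖b‖) := by gcongr
    _ = 1 * ‖b‖ := by field_simp

theorem GoodCone.functional [FiniteDimensional ℝ V] {C : Set V} (hC : GoodCone C) :
    ∃ (φ : V →L[ℝ] ℝ) (c : ℝ), 0 < c ∧ ∀ x ∈ C, c * ‖x‖ ≤ φ x := by
  have hCconv : Convex ℝ C := fun x hx y hy a b ha hb _ =>
    hC.add _ (hC.smul a ha _ hx) _ (hC.smul b hb _ hy)
  have hS : IsCompact (C ∩ Metric.sphere (0 : V) 1) :=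
    (isCompact_sphere (0 : V) 1).inter_left hC.closed
  have hloc : ∀ u ∈ C ∩ Metric.sphere (0 : V) 1, ∃ φ : V →L[ℝ] ℝ, (∀ x ∈ C, 0 ≤ φ x) ∧
      0 < φ u := by
    intro u hu
    have hnu : -u ∉ C := by
      intro h
      have h0 := hC.pointed u hu.1 h
      have h2 := hu.2
      simp [h0] at h2
    obtain ⟨φ, c, h1, h2⟩ := geometric_hahn_banach_point_closed hCconv hC.closed hnu
    have hc : c < 0 := by simpa using h2 0 hC.zero
    refine ⟨φ, fun x hx => ?_, ?_⟩
    · by_contra! hneg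
      have := h2 ((c / φ x) • x) (hC.smul _ (div_nonneg_of_nonpos hc.le hneg.le) _ hx)
      rw [map_smul, smul_eq_mul, div_mul_cancel₀ _ hneg.ne] at this
      exact lt_irrefl _ this
    · rw [map_neg] at h1; linarith
  choose! ψ hψ1 hψ2 using hloc
  obtain ⟨s, hs, hcov⟩ := hS.elim_nhds_subcover (fun u => {x | 0 < ψ u x}) (fun u hu =>
    (isOpen_lt continuous_const (ψ u).continuous).mem_nhds (hψ2 u hu))
  let φ : V →L[ℝ] ℝ := ∑ u ∈ s, ψ u
  have hφ : ∀ x ∈ C ∩ Metric.sphere (0 : V) 1, 0 < φ x := by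
    intro x hx
    have := hcov hx
    simp only [mem_iUnion] at this
    obtain ⟨u, hu, hux⟩ := this
    simp only [φ, ContinuousLinearMap.sum_apply]
    exact Finset.sum_pos' (fun v hv => hψ1 v (hs v hv) x hx.1) ⟨u, hu, hux⟩
  have : ∃ c : ℝ, 0 < c ∧ ∀ a ∈ C ∩ Metric.sphere (0 : V) 1, c ≤ φ a := by
    rcases (C ∩ Metric.sphere (0 : V) 1).eq_empty_or_nonempty with he | hne
    · exact ⟨1, one_pos, by simp [he]⟩
    · obtain ⟨a, ha, hmin⟩ := hS.exists_isMinOn hne φ.continuous.continuousOn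
      exact ⟨φ a, hφ a ha, fun b hb => hmin hb⟩
  obtain ⟨c, hc, hφc⟩ := this
  refine ⟨φ, c, hc, fun x hx => ?_⟩
  by_cases hx0 : x = 0
  · simp [hx0]
  have hn : 0 < ‖x‖ := norm_pos_iff.2 hx0
  have := hφc (‖x‖⁻¹ • x) ⟨hC.smul _ (by positivity) _ hx, by
    simp [norm_smul, hn.ne']⟩
  rwa [map_smul, smul_eq_mul, inv_mul_eq_div, le_div_iff₀ hn] at this

theorem GoodCone.exists_basis [FiniteDimensional ℝ V] {C : Set V} (hC : GoodCone C)
    (hsolid : (interior C).Nonempty) :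
    ∃ (s : Set V) (b : Module.Basis s ℝ V), ∀ i, ExtRay C (b i) := by
  obtain ⟨φ, c, hc, hφ⟩ := hC.functional
  set B : Set V := C ∩ {x | φ x = 1} with hB
  have hBcl : IsClosed B := hC.closed.inter (isClosed_eq φ.continuous continuous_const)
  have hBc : IsCompact B := by
    refine Metric.isCompact_of_isClosed_isBounded hBcl
      ((Metric.isBounded_closedBall (x := (0 : V)) (r := 1 / c)).subset ?_)
    intro x hx
    have h1 := hφ x hx.1
    have h2 : φ x = 1 := hx.2
    rw [mem_closedBall_zero_iff, le_div_iff₀ hc]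
    linarith
  have hCconv : Convex ℝ C := fun x hx y hy a b ha hb _ =>
    hC.add _ (hC.smul a ha _ hx) _ (hC.smul b hb _ hy)
  have hBconv : Convex ℝ B := by
    refine hCconv.inter ?_
    intro x hx y hy a b ha hb hab
    have h1 : φ x = 1 := hx
    have h2 : φ y = 1 := hy
    simp [h1, h2, hab]
  have hKM := closure_convexHull_extremePoints hBc hBconv
  have hzero : ∀ x ∈ C, φ x ≤ 0 → x = 0 := by
    intro x hx h
    have h1 := hφ x hx
    have : ‖x‖ ≤ 0 := by
      by_contra! h2
      nlinarith
    simpa using this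
  have hext : ∀ x ∈ extremePoints ℝ B, ∀ u ∈ C, x - u ∈ C → ∃ c : ℝ, u = c • x := by
    intro x hx u hu hxu
    have hx1 : φ x = 1 := hx.1.2
    have hxu' : φ (x - u) = 1 - φ u := by rw [map_sub, hx1]
    by_cases h0 : φ u ≤ 0
    · exact ⟨0, by simp [hzero u hu h0]⟩
    by_cases h1 : 1 ≤ φ u
    · refine ⟨1, ?_⟩
      have := hzero _ hxu (by linarith)
      rw [one_smul]; exact (sub_eq_zero.1 this).symm
    push Not at h0 h1
    have h1' : 0 < 1 - φ u := by linarith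
    refine ⟨φ u, ?_⟩
    have := hx.2 (x₁ := (φ u)⁻¹ • u) ⟨hC.smul _ (by positivity) _ hu, by
        simp [h0.ne']⟩
      (x₂ := (1 - φ u)⁻¹ • (x - u)) ⟨hC.smul _ (by positivity) _ hxu, by
        show φ _ = 1
        rw [map_smul, hxu', smul_eq_mul, inv_mul_cancel₀ h1'.ne']⟩
      ⟨φ u, 1 - φ u, h0, h1', by ring, by
        rw [smul_smul, smul_smul, mul_inv_cancel₀ h0.ne', mul_inv_cancel₀ h1'.ne']; simp⟩
    rw [← this, smul_smul, mul_inv_cancel₀ h0.ne', one_smul]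
  set E : Set V := {v | ExtRay C v} with hE
  have hspan : Submodule.span ℝ E = ⊤ := by
    have hexE : extremePoints ℝ B ⊆ (Submodule.span ℝ E : Set V) := by
      intro x hx
      have hx1 : φ x = 1 := hx.1.2
      have hx0 : x ≠ 0 := by rintro rfl; simp at hx1
      have hn : 0 < ‖x‖ := norm_pos_iff.2 hx0
      have hmem : ‖x‖⁻¹ • x ∈ E := by
        refine ⟨hC.smul _ (by positivity) _ hx.1.1, by simp [hx0], by
          simp [norm_smul, hn.ne'], fun u hu hxu => ?_⟩
        obtain ⟨c, hc⟩ := hext x hx (‖x‖ • u) (hC.smul _ hn.le _ hu) (by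
          have := hC.smul ‖x‖ hn.le _ hxu
          rwa [smul_sub, smul_smul, mul_inv_cancel₀ hn.ne', one_smul] at this)
        refine ⟨c, ?_⟩
        rw [smul_comm, ← hc, smul_smul, inv_mul_cancel₀ hn.ne', one_smul]
      have := (Submodule.span ℝ E).smul_mem ‖x‖ (Submodule.subset_span hmem)
      rwa [smul_smul, mul_inv_cancel₀ hn.ne', one_smul] at this
    have hBE : B ⊆ (Submodule.span ℝ E : Set V) := by
      rw [← hKM]
      exact closure_minimal (convexHull_min hexE (Submodule.convex _))
        (Submodule.closed_of_finiteDimensional _)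
    have hCE : C ⊆ (Submodule.span ℝ E : Set V) := by
      intro x hx
      by_cases h0 : φ x ≤ 0
      · rw [hzero x hx h0]; exact Submodule.zero_mem _
      push Not at h0
      have := (Submodule.span ℝ E).smul_mem (φ x)
        (hBE (a := (φ x)⁻¹ • x) ⟨hC.smul _ (by positivity) _ hx, by simp [h0.ne']⟩)
      rwa [smul_smul, mul_inv_cancel₀ h0.ne', one_smul] at this
    exact Submodule.eq_top_of_nonempty_interior' _ (hsolid.mono (interior_mono hCE))
  obtain ⟨s, hsE, hsp, hli⟩ := exists_linearIndependent ℝ E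
  refine ⟨s, Module.Basis.mk hli (by simp [hsp, hspan]), fun i => ?_⟩
  rw [Module.Basis.mk_apply]
  exact hsE i.2

theorem seg_image {C Ω : Set V} (hC : GoodCone C) (hΩ : IsOpen Ω) {k : Ω → Ω} (hk : OI C Ω k)
    {v : V} (hv : ExtRay C v) {T : ℝ} (hT : 0 < T) (x y z : Ω) (hy : (y : V) = x + T • v)
    {t : ℝ} (ht : 0 ≤ t) (htT : t ≤ T) (hz : (z : V) = x + t • v) :
    ∃ σ : ℝ, 0 ≤ σ ∧ ((k z : V) - k x) = σ • ((k y : V) - k x) := by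
  obtain ⟨hvC, hv0, -, hvE⟩ := hv
  set w : V := (k y : V) - k x with hw
  set u : V := (k z : V) - k x with hu
  have huC : u ∈ C := (hk.iff x z).1 (by rw [hz]; simpa using hC.smul t ht _ hvC)
  have hwC : w ∈ C := (hk.iff x y).1 (by rw [hy]; simpa using hC.smul T hT.le _ hvC)
  have hwu : w - u ∈ C := by
    have : w - u = (k y : V) - k z := by rw [hw, hu]; abel
    rw [this]
    refine (hk.iff z y).1 ?_
    rw [hy, hz]
    have : (x : V) + T • v - (x + t • v) = (T - t) • v := by rw [sub_smul]; abel
    rw [this]; exact hC.smul _ (by linarith) _ hvC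
  -- preimages of points of the interval lie on the segment
  have hpre : ∀ q : V, q ∈ C → w - q ∈ C → ∀ hq : (k x : V) + q ∈ Ω,
      ∃ (q' : Ω) (c : ℝ), k q' = ⟨(k x : V) + q, hq⟩ ∧ (q' : V) = x + c • v := by
    intro q hqC hwq hq
    obtain ⟨q', hq'⟩ := hk.bij.2 ⟨(k x : V) + q, hq⟩
    have h1 : (q' : V) - x ∈ C := (hk.iff x q').2 (by rw [hq']; simpa using hqC)
    have h2 : (y : V) - q' ∈ C := (hk.iff q' y).2 (by
      rw [hq']
      have : (k y : V) - ((k x : V) + q) = w - q := by rw [hw]; abel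
      simpa [this] using hwq)
    obtain ⟨c, hc⟩ := hvE (T⁻¹ • ((q' : V) - x)) (hC.smul _ (by positivity) _ h1) (by
      have := hC.smul T⁻¹ (by positivity) _ h2
      have e : T⁻¹ • ((y : V) - q') = v - T⁻¹ • ((q' : V) - x) := by
        rw [hy, show (x : V) + T • v - q' = T • v - (q' - x) by abel, smul_sub, smul_smul,
          inv_mul_cancel₀ hT.ne', one_smul]
      rwa [e] at this)
    refine ⟨q', T * c, hq', ?_⟩
    have : (q' : V) - x = (T * c) • v := by
      rw [mul_smul, ← hc, smul_smul, mul_inv_cancel₀ hT.ne', one_smul]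
    rw [← this]; abel
  have hcmp : ∀ c ∈ Icc (0 : ℝ) 1, u - c • w ∈ C ∨ c • w - u ∈ C := by
    intro c hc
    -- choose a small scale
    have hev : ∀ q : V, ∀ᶠ l : ℝ in 𝓝[>] 0, (k x : V) + l • q ∈ Ω := by
      intro q
      have hcont : Continuous fun l : ℝ => (k x : V) + l • q := by fun_prop
      have : ∀ᶠ l : ℝ in 𝓝 0, (k x : V) + l • q ∈ Ω :=
        hcont.continuousAt.eventually_mem (hΩ.mem_nhds (by simp))
      exact this.filter_mono nhdsWithin_le_nhds
    have hI : ∀ᶠ l : ℝ in 𝓝[>] 0, l ∈ Ioo (0 : ℝ) 1 := Ioo_mem_nhdsGT one_pos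
    obtain ⟨l, ⟨hl1, hl2⟩, hl0, hl1'⟩ := ((((hev u).and (hev (c • w))).and hI)).exists
    have hcw : c • w ∈ C := hC.smul c hc.1 _ hwC
    have hA : ∀ q ∈ C, w - q ∈ C → w - l • q ∈ C := by
      intro q hq hwq
      have : w - l • q = (w - q) + (1 - l) • q := by rw [sub_smul, one_smul]; abel
      rw [this]
      exact hC.add _ hwq _ (hC.smul _ (by linarith) _ hq)
    have hwcw : w - c • w ∈ C := by
      have : w - c • w = (1 - c) • w := by rw [sub_smul, one_smul]
      rw [this]; exact hC.smul _ (by linarith [hc.2]) _ hwC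
    obtain ⟨p, a, hp, hp'⟩ := hpre (l • u) (hC.smul _ hl0.le _ huC) (hA u huC hwu) hl1
    obtain ⟨q, b, hq, hq'⟩ := hpre (l • c • w) (hC.smul _ hl0.le _ hcw) (hA _ hcw hwcw) hl2
    have hscale : ∀ r : V, l • r ∈ C → r ∈ C := by
      intro r hr
      have := hC.smul l⁻¹ (by positivity) _ hr
      rwa [smul_smul, inv_mul_cancel₀ hl0.ne', one_smul] at this
    rcases le_total a b with hab | hab
    · right
      have : (q : V) - p ∈ C := by
        rw [hp', hq', show (x : V) + b • v - (x + a • v) = (b - a) • v by rw [sub_smul]; abel]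
        exact hC.smul _ (by linarith) _ hvC
      have := (hk.iff p q).1 this
      rw [hp, hq] at this
      apply hscale
      rw [smul_sub]
      simpa using this
    · left
      have : (p : V) - q ∈ C := by
        rw [hp', hq', show (x : V) + a • v - (x + b • v) = (a - b) • v by rw [sub_smul]; abel]
        exact hC.smul _ (by linarith) _ hvC
      have := (hk.iff q p).1 this
      rw [hp, hq] at this
      apply hscale
      rw [smul_sub]
      simpa using this
  have hpc := isPreconnected_closed_iff.1 (isPreconnected_Icc (a := (0 : ℝ)) (b := 1))
    {c | u - c • w ∈ C} {c | c • w - u ∈ C}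
    (hC.closed.preimage (by fun_prop)) (hC.closed.preimage (by fun_prop))
    hcmp ⟨0, by simp, by simpa using huC⟩ ⟨1, by simp, by simpa using hwu⟩
  obtain ⟨c, hc, h1, h2⟩ := hpc
  refine ⟨c, hc.1, ?_⟩
  have := hC.pointed _ h1 (by rw [neg_sub]; exact h2)
  exact sub_eq_zero.1 this

theorem interior_add {C : Set V} (hC : GoodCone C) {x y : V} (hx : x ∈ C) (hy : y ∈ interior C) :
    x + y ∈ interior C := by
  have h : (fun z => x + z) '' interior C ⊆ interior C := by
    refine interior_maximal ?_ ((Homeomorph.addLeft x).isOpenMap _ isOpen_interior)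
    rintro _ ⟨z, hz, rfl⟩
    exact hC.add _ hx _ (interior_subset hz)
  exact h ⟨y, hy, rfl⟩

theorem interior_smul' {C : Set V} (hC : GoodCone C) {l : ℝ} (hl : 0 < l) {y : V}
    (hy : y ∈ interior C) : l • y ∈ interior C := by
  have h : (fun z => l • z) '' interior C ⊆ interior C := by
    refine interior_maximal ?_ (isOpenMap_smul₀ hl.ne' _ isOpen_interior)
    rintro _ ⟨z, hz, rfl⟩
    exact hC.smul _ hl.le _ (interior_subset hz)
  exact h ⟨y, hy, rfl⟩

theorem mono_iterate {C Ω : Set V} {f : Ω → Ω}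
    (hmono : ∀ x y : Ω, ((y : V) - x) ∈ C → ((f y : V) - f x) ∈ C) (n : ℕ) (x y : Ω)
    (h : ((y : V) - x) ∈ C) : ((f^[n] y : V) - f^[n] x) ∈ C := by
  induction n with
  | zero => exact h
  | succ n ih => rw [Function.iterate_succ_apply', Function.iterate_succ_apply']; exact hmono _ _ ih

theorem iterate_mul_fixed {α : Type*} {f : α → α} {p : ℕ} {x : α} (h : f^[p] x = x) (n : ℕ) :
    f^[p * n] x = x := by
  rw [Function.iterate_mul]
  exact Function.iterate_fixed h n

theorem f_OI {C Ω : Set V} (hC : GoodCone C) (hsolid : (interior C).Nonempty) (hΩ : IsOpen Ω)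
    (f : Ω ≃ₜ Ω)
    (hmono : ∀ x y : Ω, ((y : V) - x) ∈ C → ((f y : V) - f x) ∈ C)
    (hdense : Dense {x : Ω | ∃ p : ℕ, 1 ≤ p ∧ (⇑f)^[p] x = x}) : OI C Ω f := by
  refine ⟨f.bijective, fun x y => ⟨hmono x y, fun h => ?_⟩⟩
  obtain ⟨e, he⟩ := hsolid
  by_contra hxy
  -- first move `y`
  have hO : IsOpen {y' : Ω | (y' : V) - x ∉ C} :=
    (hC.closed.preimage (by fun_prop : Continuous fun y' : Ω => (y' : V) - x)).isOpen_compl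
  obtain ⟨y', hy'1, hy'2⟩ : ∃ y' : Ω, (y' : V) - x ∉ C ∧ (f y' : V) - f x ∈ interior C := by
    have hO2 := f.isOpenMap _ hO
    obtain ⟨U, hU, hUO⟩ := isOpen_induced_iff.1 hO2
    have hyU : (f y : V) ∈ U ∩ Ω := by
      refine ⟨?_, (f y).2⟩
      have : f y ∈ Subtype.val ⁻¹' U := by rw [hUO]; exact ⟨y, hxy, rfl⟩
      exact this
    have hcont : Continuous fun l : ℝ => (f y : V) + l • e := by fun_prop
    have hev : ∀ᶠ l : ℝ in 𝓝 0, (f y : V) + l • e ∈ U ∩ Ω :=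
      hcont.continuousAt.eventually_mem ((hU.inter hΩ).mem_nhds (by simpa using hyU))
    obtain ⟨l, hl, hl0⟩ := ((hev.filter_mono (nhdsWithin_le_nhds (s := Ioi 0))).and
      self_mem_nhdsWithin).exists
    have hmem : (⟨(f y : V) + l • e, hl.2⟩ : Ω) ∈ f '' {y' : Ω | (y' : V) - x ∉ C} := by
      rw [← hUO]; exact hl.1
    obtain ⟨y', hy', hfy'⟩ := hmem
    refine ⟨y', hy', ?_⟩
    rw [hfy']
    have : (f y : V) + l • e - f x = ((f y : V) - f x) + l • e := by abel
    show (f y : V) + l • e - f x ∈ _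
    rw [this]
    exact interior_add hC h (interior_smul' hC hl0 he)
  have hO3 : IsOpen {q : Ω × Ω | (q.2 : V) - q.1 ∉ C ∧ (f q.2 : V) - f q.1 ∈ interior C} := by
    refine IsOpen.inter ?_ ?_
    · exact (hC.closed.preimage
        (by fun_prop : Continuous fun q : Ω × Ω => (q.2 : V) - q.1)).isOpen_compl
    · exact isOpen_interior.preimage (by
        have := f.continuous
        fun_prop : Continuous fun q : Ω × Ω => (f q.2 : V) - f q.1)
  obtain ⟨⟨a, b⟩, hab, ⟨p, hp, hpa⟩, ⟨r, hr, hrb⟩⟩ :=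
    (hdense.prod hdense).inter_open_nonempty _ hO3 ⟨(x, y'), hy'1, hy'2⟩
  apply hab.1
  simp only at hpa hrb
  have h1 := mono_iterate hmono (p * r - 1) (f a) (f b) (interior_subset hab.2)
  rw [← Function.iterate_succ_apply, ← Function.iterate_succ_apply,
    show (p * r - 1).succ = p * r from Nat.succ_pred_eq_of_pos (Nat.mul_pos hp hr),
    iterate_mul_fixed hpa, mul_comm, iterate_mul_fixed hrb] at h1
  exact h1

theorem exists_per_near {C Ω : Set V} (hΩ : IsOpen Ω) (f : Ω ≃ₜ Ω)
    (hdense : Dense {x : Ω | ∃ p : ℕ, 1 ≤ p ∧ (⇑f)^[p] x = x}) {U : Set V} (hU : IsOpen U)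
    (hne : (U ∩ Ω).Nonempty) : ∃ x : Ω, (x : V) ∈ U ∧ ∃ p : ℕ, 1 ≤ p ∧ (⇑f)^[p] x = x := by
  obtain ⟨x, hx, hx'⟩ := hne
  obtain ⟨y, hy, hy'⟩ := hdense.inter_open_nonempty _ (hU.preimage continuous_subtype_val)
    ⟨⟨x, hx'⟩, hx⟩
  exact ⟨y, hy, hy'⟩

theorem displacement [FiniteDimensional ℝ V] {C Ω : Set V} (hC : GoodCone C)
    (hsolid : (interior C).Nonempty) (hΩ : IsOpen Ω) (f : Ω ≃ₜ Ω)
    (hmono : ∀ x y : Ω, ((y : V) - x) ∈ C → ((f y : V) - f x) ∈ C)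
    (hdense : Dense {x : Ω | ∃ p : ℕ, 1 ≤ p ∧ (⇑f)^[p] x = x})
    (x₀ : V) (R : ℝ) (hR : Metric.closedBall x₀ R ⊆ Ω) (ε : ℝ) (hε : 0 < ε) :
    ∃ M : ℕ, 1 ≤ M ∧ ∀ z : Ω, ‖(z : V) - x₀‖ ≤ R → ∀ n : ℕ,
      ‖((f^[M * n] z : Ω) : V) - z‖ ≤ ε := by
  obtain ⟨K, hK, hnorm⟩ := hC.normal
  obtain ⟨e, he⟩ := hsolid
  -- local statement
  have hloc : ∀ z ∈ Metric.closedBall x₀ R, ∃ (N : Set V) (M : ℕ), N ∈ 𝓝 z ∧ 1 ≤ M ∧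
      ∀ y : Ω, (y : V) ∈ N → ∀ n : ℕ, ‖((f^[M * n] y : Ω) : V) - y‖ ≤ ε := by
    intro z hz
    have hη : 0 < ε / (4 * K) := by positivity
    have aux : ∀ e' : V, ∀ᶠ l : ℝ in 𝓝[>] 0, z + l • e' ∈ Metric.ball z (ε / (4 * K)) ∩ Ω := by
      intro e'
      have hcont : Continuous fun l : ℝ => z + l • e' := by fun_prop
      exact (hcont.continuousAt.eventually_mem ((Metric.isOpen_ball.inter hΩ).mem_nhds (by
        simpa [hη] using hR hz))).filter_mono nhdsWithin_le_nhds
    obtain ⟨l, hl, hl0⟩ := ((aux e).and self_mem_nhdsWithin).exists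
    obtain ⟨m, hm, hm0⟩ := ((aux (-e)).and self_mem_nhdsWithin).exists
    have hc1 : Continuous fun q : V => q - z := by fun_prop
    have hc2 : Continuous fun q : V => z - q := by fun_prop
    obtain ⟨b, ⟨hb1, hb2⟩, p, hp, hpb⟩ := exists_per_near (C := C) hΩ f hdense
      (Metric.isOpen_ball.inter (isOpen_interior.preimage hc1) :
        IsOpen (Metric.ball z (ε / (4 * K)) ∩ (fun q => q - z) ⁻¹' interior C))
      ⟨z + l • e, ⟨hl.1, by simpa using interior_smul' hC hl0 he⟩, hl.2⟩
    obtain ⟨a, ⟨ha1, ha2⟩, r, hr, hra⟩ := exists_per_near (C := C) hΩ f hdense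
      (Metric.isOpen_ball.inter (isOpen_interior.preimage hc2) :
        IsOpen (Metric.ball z (ε / (4 * K)) ∩ (fun q => z - q) ⁻¹' interior C))
      ⟨z + m • -e, ⟨hm.1, by simpa using interior_smul' hC hm0 he⟩, hm.2⟩
    have hd : ‖(b : V) - a‖ ≤ ε / (2 * K) := by
      rw [Metric.mem_ball, dist_eq_norm] at hb1 ha1
      calc ‖(b : V) - a‖ = ‖((b : V) - z) - (a - z)‖ := by congr 1; abel
        _ ≤ ‖(b : V) - z‖ + ‖(a : V) - z‖ := norm_sub_le _ _
        _ ≤ ε / (4 * K) + ε / (4 * K) := by gcongr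
        _ = ε / (2 * K) := by field_simp; norm_num
    refine ⟨(fun q => q - (a : V)) ⁻¹' interior C ∩ (fun q => (b : V) - q) ⁻¹' interior C,
      p * r, ?_, Nat.mul_pos hp hr, ?_⟩
    · have hc3 : Continuous fun q : V => q - (a : V) := by fun_prop
      have hc4 : Continuous fun q : V => (b : V) - q := by fun_prop
      exact ((isOpen_interior.preimage hc3).inter (isOpen_interior.preimage hc4)).mem_nhds
        ⟨ha2, hb2⟩
    · intro y hy n
      have hya : (y : V) - a ∈ C := interior_subset hy.1
      have hby : (b : V) - y ∈ C := interior_subset hy.2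
      have h1 := mono_iterate hmono (p * r * n) _ _ hya
      have h2 := mono_iterate hmono (p * r * n) _ _ hby
      rw [show p * r * n = r * (p * n) by ring, iterate_mul_fixed hra,
        show r * (p * n) = p * r * n by ring] at h1
      rw [show p * r * n = p * (r * n) by ring, iterate_mul_fixed hpb,
        show p * (r * n) = p * r * n by ring] at h2
      set y' : V := ((f^[p * r * n] y : Ω) : V) with hy'
      have h3 := hnorm _ ((b : V) - a) h1 (by
        have : (b : V) - a - (y' - a) = b - y' := by abel
        rwa [this])
      have h4 := hnorm _ ((b : V) - a) hya (by
        have : (b : V) - a - (y - a) = b - y := by abel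
        rwa [this])
      calc ‖y' - y‖ = ‖(y' - a) - (y - a)‖ := by congr 1; abel
        _ ≤ ‖y' - a‖ + ‖(y : V) - a‖ := norm_sub_le _ _
        _ ≤ K * ‖(b : V) - a‖ + K * ‖(b : V) - a‖ := add_le_add h3 h4
        _ ≤ K * (ε / (2 * K)) + K * (ε / (2 * K)) := by gcongr
        _ = ε := by field_simp; norm_num
  choose! N M hN hM hNM using hloc
  obtain ⟨s, hs, hcov⟩ := (isCompact_closedBall x₀ R).elim_nhds_subcover N hN
  refine ⟨∏ i ∈ s, M i, Nat.succ_le_of_lt (Finset.prod_pos fun i hi => hM i (hs i hi)), fun z hz n => ?_⟩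
  have hz' := hcov (show (z : V) ∈ Metric.closedBall x₀ R by
    rwa [Metric.mem_closedBall, dist_eq_norm])
  simp only [mem_iUnion] at hz'
  obtain ⟨i, hi, hzi⟩ := hz'
  classical
  rw [← Finset.mul_prod_erase s M hi, mul_assoc]
  exact hNM i (hs i hi) z hzi _

theorem basis_bound [FiniteDimensional ℝ V] {ι : Type*} [Fintype ι] (b : Module.Basis ι ℝ V) :
    ∃ L : ℝ, 0 < L ∧ ∀ x : V, ∑ i, |b.repr x i| ≤ L * ‖x‖ := by
  let φ : V →ₗ[ℝ] (ι → ℝ) := b.equivFun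
  let ψ := LinearMap.toContinuousLinearMap φ
  refine ⟨Fintype.card ι * ‖ψ‖ + 1, by positivity, fun x => ?_⟩
  have : ∀ i, |b.repr x i| ≤ ‖ψ‖ * ‖x‖ := by
    intro i
    calc |b.repr x i| = ‖ψ x i‖ := by simp [ψ, φ, Real.norm_eq_abs]
      _ ≤ ‖ψ x‖ := norm_le_pi_norm _ _
      _ ≤ ‖ψ‖ * ‖x‖ := ψ.le_opNorm x
  calc ∑ i, |b.repr x i| ≤ ∑ i : ι, ‖ψ‖ * ‖x‖ := Finset.sum_le_sum fun i _ => this i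
    _ = Fintype.card ι * ‖ψ‖ * ‖x‖ := by simp; ring
    _ ≤ _ := by nlinarith [norm_nonneg x]

/-- One step of the averaging argument. -/
theorem step_pos {C Ω : Set V} (hC : GoodCone C) (hΩ : IsOpen Ω) (f : Ω → Ω) (hf : OI C Ω f)
    {x₀ : V} {R T ε : ℝ} (hR : Metric.closedBall x₀ R ⊆ Ω) (hT : 0 < T) (hTR : T = R / 4)
    {M : ℕ} (hM : ∀ z : Ω, ‖(z : V) - x₀‖ ≤ R → ∀ n : ℕ, ‖((f^[M * n] z : Ω) : V) - z‖ ≤ ε)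
    {v : V} (hv : ExtRay C v) (P : ℕ) (hP : 1 ≤ P) (z z' : Ω) {t : ℝ} (ht : 0 ≤ t) (htT : t ≤ T)
    (hzz : (z' : V) = z + t • v) (hz : ‖(z : V) - x₀‖ ≤ R / 2) :
    ∃ S : ℝ, (S = 0 → t = 0) ∧
      ‖(∑ n ∈ Finset.range P, (((f^[M * n] z' : Ω) : V) - f^[M * n] z)) - S • v‖
        ≤ 2 * ε / T * |S| := by
  have hnv : ‖v‖ ≤ 1 := hv.2.2.1
  have hy' : ‖(z : V) + T • v - x₀‖ ≤ R := by
    calc ‖(z : V) + T • v - x₀‖ = ‖((z : V) - x₀) + T • v‖ := by congr 1; abel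
      _ ≤ ‖(z : V) - x₀‖ + ‖T • v‖ := norm_add_le _ _
      _ = ‖(z : V) - x₀‖ + T * ‖v‖ := by rw [norm_smul, Real.norm_of_nonneg hT.le]
      _ ≤ R / 2 + T * 1 := by gcongr
      _ ≤ R := by linarith
  let y : Ω := ⟨(z : V) + T • v, hR (by rwa [Metric.mem_closedBall, dist_eq_norm])⟩
  have key : ∀ n : ℕ, ∃ σ : ℝ, 0 ≤ σ ∧
      (((f^[M * n] z' : Ω) : V) - f^[M * n] z) =
        σ • (((f^[M * n] y : Ω) : V) - f^[M * n] z) := fun n =>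
    seg_image hC hΩ (hf.iterate (M * n)) hv hT z y z' rfl ht htT hzz
  choose σ hσ hσ' using key
  have hw : ∀ n : ℕ, ‖((((f^[M * n] y : Ω) : V) - f^[M * n] z)) - T • v‖ ≤ 2 * ε := by
    intro n
    have h1 := hM y hy' n
    have h2 := hM z (by linarith) n
    calc _ = ‖(((f^[M * n] y : Ω) : V) - y) - (((f^[M * n] z : Ω) : V) - z)‖ := by
          congr 1; simp only [y]; abel
      _ ≤ _ := norm_sub_le _ _
      _ ≤ 2 * ε := by linarith
  refine ⟨T * ∑ n ∈ Finset.range P, σ n, fun h0 => ?_, ?_⟩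
  · have h1 : ∑ n ∈ Finset.range P, σ n = 0 := by
      rcases mul_eq_zero.1 h0 with h | h
      · exact absurd h hT.ne'
      · exact h
    have h2 := (Finset.sum_eq_zero_iff_of_nonneg (fun n _ => hσ n)).1 h1 0
      (Finset.mem_range.2 hP)
    have h3 := hσ' 0
    rw [h2] at h3
    simp [hzz] at h3
    exact h3.resolve_right hv.2.1
  · have e1 : (∑ n ∈ Finset.range P, (((f^[M * n] z' : Ω) : V) - f^[M * n] z))
        - (T * ∑ n ∈ Finset.range P, σ n) • v
        = ∑ n ∈ Finset.range P, σ n • ((((f^[M * n] y : Ω) : V) - f^[M * n] z) - T • v) := by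
      rw [mul_comm, mul_smul, Finset.sum_smul, ← Finset.sum_sub_distrib]
      exact Finset.sum_congr rfl fun n _ => by rw [hσ' n, smul_sub (σ n) _ (T • v)]
    rw [e1]
    calc _ ≤ ∑ n ∈ Finset.range P, ‖σ n • ((((f^[M * n] y : Ω) : V) - f^[M * n] z) - T • v)‖ :=
          norm_sum_le _ _
      _ ≤ ∑ n ∈ Finset.range P, σ n * (2 * ε) := by
          refine Finset.sum_le_sum fun n _ => ?_
          rw [norm_smul, Real.norm_of_nonneg (hσ n)]
          exact mul_le_mul_of_nonneg_left (hw n) (hσ n)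
      _ = 2 * ε / T * |T * ∑ n ∈ Finset.range P, σ n| := by
          rw [abs_of_nonneg (mul_nonneg hT.le (Finset.sum_nonneg fun n _ => hσ n)),
            ← Finset.sum_mul]
          field_simp

theorem step_all {C Ω : Set V} (hC : GoodCone C) (hΩ : IsOpen Ω) (f : Ω → Ω) (hf : OI C Ω f)
    {x₀ : V} {R T ε : ℝ} (hR : Metric.closedBall x₀ R ⊆ Ω) (hT : 0 < T) (hTR : T = R / 4)
    {M : ℕ} (hM : ∀ z : Ω, ‖(z : V) - x₀‖ ≤ R → ∀ n : ℕ, ‖((f^[M * n] z : Ω) : V) - z‖ ≤ ε)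
    {v : V} (hv : ExtRay C v) (P : ℕ) (hP : 1 ≤ P) (z z' : Ω) {t : ℝ} (htT : |t| ≤ T)
    (hzz : (z' : V) = z + t • v) (hz : ‖(z : V) - x₀‖ ≤ R / 2) (hz' : ‖(z' : V) - x₀‖ ≤ R / 2) :
    ∃ S : ℝ, (S = 0 → t = 0) ∧
      ‖(∑ n ∈ Finset.range P, (((f^[M * n] z' : Ω) : V) - f^[M * n] z)) - S • v‖
        ≤ 2 * ε / T * |S| := by
  rcases le_total 0 t with ht | ht
  · exact step_pos hC hΩ f hf hR hT hTR hM hv P hP z z' ht (by rwa [abs_of_nonneg ht] at htT)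
      hzz hz
  · obtain ⟨S, h1, h2⟩ := step_pos hC hΩ f hf hR hT hTR hM hv P hP z' z (t := -t) (by linarith)
      (by rwa [abs_of_nonpos ht] at htT) (by rw [hzz]; simp) hz'
    refine ⟨-S, fun h => by simpa using h1 (by simpa using h), ?_⟩
    rw [abs_neg]
    refine le_trans (le_of_eq ?_) h2
    rw [← norm_neg]
    congr 1
    rw [neg_smul]
    simp only [Finset.sum_sub_distrib]
    abel

theorem local_periodic [FiniteDimensional ℝ V] {C Ω : Set V} (hC : GoodCone C)
    (hsolid : (interior C).Nonempty) (hΩ : IsOpen Ω) (f : Ω ≃ₜ Ω)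
    (hmono : ∀ x y : Ω, ((y : V) - x) ∈ C → ((f y : V) - f x) ∈ C)
    (hdense : Dense {x : Ω | ∃ p : ℕ, 1 ≤ p ∧ (⇑f)^[p] x = x}) (x₀ : Ω) :
    ∃ M : ℕ, 1 ≤ M ∧ x₀ ∈ interior {z : Ω | (⇑f)^[M] z = z} := by
  have hf := f_OI hC hsolid hΩ f hmono hdense
  obtain ⟨s, b, hb⟩ := hC.exists_basis hsolid
  haveI : Fintype s := FiniteDimensional.fintypeBasisIndex b
  obtain ⟨L, hL, hbL⟩ := basis_bound b
  obtain ⟨R, hR0, hR⟩ := Metric.nhds_basis_closedBall.mem_iff.1 (hΩ.mem_nhds x₀.2)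
  set T : ℝ := R / 4 with hTR
  have hT : 0 < T := by positivity
  set ε : ℝ := T / (4 * (L + 1)) with hε
  have hε0 : 0 < ε := by positivity
  have hLε : L * ε < T / 4 := by
    rw [hε, mul_div_assoc', div_lt_div_iff₀ (by positivity) (by positivity)]
    nlinarith
  have hθ : L * (2 * ε / T) < 1 := by
    rw [mul_div_assoc', div_lt_one hT]; linarith
  obtain ⟨M, hM1, hM⟩ := displacement hC hsolid hΩ f hmono hdense x₀ R hR ε hε0
  refine ⟨M, hM1, ?_⟩
  have hclosed : IsClosed {z : Ω | (⇑f)^[M] z = z} :=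
    isClosed_eq (f.continuous.iterate M) continuous_id
  have hopen : IsOpen {z : Ω | ‖(z : V) - x₀‖ < R / 4} :=
    isOpen_lt (by fun_prop) continuous_const
  refine mem_interior.2 ⟨_, ?_, hopen, by simpa using (by positivity : 0 < R / 4)⟩
  refine (hdense.open_subset_closure_inter hopen).trans (closure_minimal ?_ hclosed)
  rintro x ⟨hx, P, hP, hPx⟩
  have hx : ‖(x : V) - x₀‖ < R / 4 := hx
  show (⇑f)^[M] x = x
  set y := (⇑f)^[M] x with hy
  have hyx : ‖(y : V) - x‖ ≤ ε := by
    have := hM x (by linarith) 1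
    rwa [mul_one] at this
  set t : s → ℝ := fun i => b.repr ((y : V) - x) i with ht
  have hts : ∑ i, |t i| < T / 4 := (hbL _).trans_lt (lt_of_le_of_lt (by gcongr) hLε)
  have hpart : ∀ A : Finset s, ‖∑ i ∈ A, t i • b i‖ ≤ T / 4 := by
    intro A
    calc _ ≤ ∑ i ∈ A, ‖t i • b i‖ := norm_sum_le _ _
      _ ≤ ∑ i ∈ A, |t i| := Finset.sum_le_sum fun i _ => by
          rw [norm_smul, Real.norm_eq_abs]
          exact mul_le_of_le_one_right (abs_nonneg _) (hb i).2.2.1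
      _ ≤ ∑ i, |t i| := Finset.sum_le_univ_sum_of_nonneg fun i => abs_nonneg _
      _ ≤ _ := hts.le
  have hball : ∀ A : Finset s, ‖(x : V) + ∑ i ∈ A, t i • b i - x₀‖ ≤ R / 2 := by
    intro A
    calc _ = ‖((x : V) - x₀) + ∑ i ∈ A, t i • b i‖ := by congr 1; abel
      _ ≤ _ := norm_add_le _ _
      _ ≤ R / 4 + T / 4 := add_le_add hx.le (hpart A)
      _ ≤ R / 2 := by linarith
  let zz : Finset s → Ω := fun A => ⟨(x : V) + ∑ i ∈ A, t i • b i, hR (by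
    rw [Metric.mem_closedBall, dist_eq_norm]; linarith [hball A])⟩
  have main : ∀ A : Finset s, ∃ S : s → ℝ, (∀ i ∈ A, S i = 0 → t i = 0) ∧
      ‖(∑ n ∈ Finset.range P, (((f^[M * n] (zz A) : Ω) : V) - f^[M * n] x))
        - ∑ i ∈ A, S i • b i‖ ≤ 2 * ε / T * ∑ i ∈ A, |S i| := by
    classical
    intro A
    induction A using Finset.induction_on with
    | empty =>
      refine ⟨fun _ => 0, by simp, ?_⟩
      have : zz ∅ = x := Subtype.ext (by simp [zz])
      simp [this]
    | insert a A ha ih =>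
      obtain ⟨S, hS1, hS2⟩ := ih
      obtain ⟨c, hc1, hc2⟩ := step_all hC hΩ f hf hR hT hTR hM (hb a) P hP (zz A)
        (zz (insert a A)) (t := t a) (by
          have := Finset.single_le_sum (f := fun i => |t i|) (fun i _ => abs_nonneg _)
            (Finset.mem_univ a)
          linarith) (by
          simp only [zz]
          rw [Finset.sum_insert ha]; abel) (hball _) (hball _)
      have hne : ∀ i ∈ A, i ≠ a := fun i hi h => ha (h ▸ hi)
      have e1 : ∑ i ∈ A, Function.update S a c i • b i = ∑ i ∈ A, S i • b i :=
        Finset.sum_congr rfl fun i hi => by rw [Function.update_of_ne (hne i hi)]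
      have e2 : ∑ i ∈ A, |Function.update S a c i| = ∑ i ∈ A, |S i| :=
        Finset.sum_congr rfl fun i hi => by rw [Function.update_of_ne (hne i hi)]
      refine ⟨Function.update S a c, ?_, ?_⟩
      · intro i hi h
        rcases Finset.mem_insert.1 hi with rfl | hi
        · exact hc1 (by simpa using h)
        · exact hS1 i hi (by rwa [Function.update_of_ne (hne i hi)] at h)
      · rw [Finset.sum_insert ha, Finset.sum_insert ha, e1, e2, Function.update_self, mul_add]
        refine le_trans ?_ (add_le_add hc2 hS2)
        refine le_trans (le_of_eq ?_) (norm_add_le _ _)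
        congr 1
        simp only [Finset.sum_sub_distrib]
        abel
  obtain ⟨S, hS1, hS2⟩ := main Finset.univ
  have hzy : zz Finset.univ = y := Subtype.ext (by
    simp only [zz, ht]
    rw [b.sum_repr]; abel)
  have htel : ∑ n ∈ Finset.range P, (((f^[M * n] y : Ω) : V) - f^[M * n] x) = 0 := by
    have : ∀ n, (⇑f)^[M * n] y = (⇑f)^[M * (n + 1)] x := by
      intro n
      rw [hy, ← Function.iterate_add_apply, mul_add, mul_one]
    simp only [this]
    rw [Finset.sum_range_sub (fun n => (((f^[M * n] x : Ω) : V)))]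
    rw [mul_comm M P, iterate_mul_fixed hPx]
    simp
  rw [hzy, htel, zero_sub, norm_neg] at hS2
  have h5 := hbL (∑ i, S i • b i)
  have h6 : ∀ i, b.repr (∑ i, S i • b i) i = S i := fun i => by
    rw [b.repr_sum_self]
  simp only [h6] at h5
  have hsum0 : ∑ i, |S i| = 0 := by
    have hnn : 0 ≤ ∑ i, |S i| := Finset.sum_nonneg fun i _ => abs_nonneg _
    have : ∑ i, |S i| ≤ L * (2 * ε / T) * ∑ i, |S i| := by
      calc _ ≤ _ := h5
        _ ≤ L * (2 * ε / T * ∑ i, |S i|) := by gcongr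
        _ = _ := by ring
    nlinarith
  have hS0 : ∀ i, S i = 0 := fun i => by
    have := (Finset.sum_eq_zero_iff_of_nonneg (fun i _ => abs_nonneg (S i))).1 hsum0 i
      (Finset.mem_univ i)
    simpa using this
  have ht0 : ∀ i, t i = 0 := fun i => hS1 i (Finset.mem_univ i) (hS0 i)
  rw [← hzy]
  exact Subtype.ext (by simp [zz, ht0])

/-- A periodic point comparable with its image is fixed. -/
theorem comparable_fixed {C Ω : Set V} (hC : GoodCone C) {k : Ω → Ω}
    (hmono : ∀ x y : Ω, ((y : V) - x) ∈ C → ((k y : V) - k x) ∈ C) {P : ℕ} (hP : 1 ≤ P) {y : Ω}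
    (hy : k^[P] y = y) (h : (k y : V) - y ∈ C ∨ (y : V) - k y ∈ C) : k y = y := by
  obtain ⟨Q, rfl⟩ : ∃ Q, P = Q + 1 := ⟨P - 1, by omega⟩
  rw [Function.iterate_succ_apply] at hy
  rcases h with h | h
  · have : ∀ n, ((k^[n] (k y) : Ω) : V) - k y ∈ C := by
      intro n
      induction n with
      | zero => simpa using hC.zero
      | succ n ih =>
        have h1 := mono_iterate hmono (n + 1) _ _ h
        rw [Function.iterate_succ_apply k n y] at h1
        have := hC.add _ h1 _ ih
        simpa using this
    have h1 := this Q
    rw [hy] at h1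
    have := hC.pointed _ h (by rwa [neg_sub])
    exact Subtype.ext (sub_eq_zero.1 this)
  · have : ∀ n, (k y : V) - ((k^[n] (k y) : Ω) : V) ∈ C := by
      intro n
      induction n with
      | zero => simpa using hC.zero
      | succ n ih =>
        have h1 := mono_iterate hmono (n + 1) _ _ h
        rw [Function.iterate_succ_apply k n y] at h1
        have := hC.add _ h1 _ ih
        simpa using this
    have h1 := this Q
    rw [hy] at h1
    have := hC.pointed _ h (by rwa [neg_sub])
    exact Subtype.ext (sub_eq_zero.1 this).symm

/-- Fixed open sets spread along extreme rays. -/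
theorem spread {C Ω : Set V} (hC : GoodCone C) (hΩ : IsOpen Ω) (f : Ω ≃ₜ Ω) (hf : OI C Ω f)
    (hdense : Dense {x : Ω | ∃ p : ℕ, 1 ≤ p ∧ (⇑f)^[p] x = x}) (M : ℕ) {v : V}
    (hv : ExtRay C v) {t : ℝ} (z z' : Ω) (hzz : (z' : V) = z + t • v)
    (hz : z ∈ interior {z : Ω | (⇑f)^[M] z = z}) :
    z' ∈ interior {z : Ω | (⇑f)^[M] z = z} := by
  have hk := hf.iterate M
  have hclosed : IsClosed {z : Ω | (⇑f)^[M] z = z} :=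
    isClosed_eq (f.continuous.iterate M) continuous_id
  obtain ⟨U, hU, hUeq⟩ := isOpen_induced_iff.1
    (isOpen_interior (s := {z : Ω | (⇑f)^[M] z = z}))
  have hUfix : ∀ q : Ω, (q : V) ∈ U → (⇑f)^[M] q = q := by
    intro q hq
    have : q ∈ Subtype.val ⁻¹' U := hq
    rw [hUeq] at this
    exact (interior_subset this : q ∈ {z : Ω | (⇑f)^[M] z = z})
  have hzU : (z : V) ∈ U := by
    have : z ∈ Subtype.val ⁻¹' U := by rw [hUeq]; exact hz
    exact this
  have hc : Continuous fun q : Ω => (q : V) - t • v := by fun_prop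
  have hO : IsOpen ((fun q : Ω => (q : V) - t • v) ⁻¹' (U ∩ Ω)) := (hU.inter hΩ).preimage hc
  refine mem_interior.2 ⟨_, ?_, hO, by
    show (z' : V) - t • v ∈ U ∩ Ω
    rw [hzz, add_sub_cancel_right]; exact ⟨hzU, z.2⟩⟩
  refine (hdense.open_subset_closure_inter hO).trans (closure_minimal ?_ hclosed)
  rintro y ⟨hy, P, hP, hPy⟩
  show (⇑f)^[M] y = y
  have hyP : ((⇑f)^[M])^[P] y = y := by
    rw [← Function.iterate_mul, mul_comm, iterate_mul_fixed hPy]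
  refine comparable_fixed hC (fun a b => (hk.iff a b).1) hP hyP ?_
  set k := (⇑f)^[M] with hkdef
  let q : Ω := ⟨(y : V) - t • v, hy.2⟩
  have hq : k q = q := hUfix q hy.1
  have hyq : (y : V) = q + t • v := by simp [q]
  -- it suffices that `k y` lies on the line
  suffices h : ∃ c : ℝ, (k y : V) = q + c • v by
    obtain ⟨c, hc⟩ := h
    rcases le_total t c with h | h
    · left
      rw [hc, hyq, show (q : V) + c • v - (q + t • v) = (c - t) • v by rw [sub_smul]; abel]
      exact hC.smul _ (by linarith) _ hv.1
    · right
      rw [hc, hyq, show (q : V) + t • v - (q + c • v) = (t - c) • v by rw [sub_smul]; abel]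
      exact hC.smul _ (by linarith) _ hv.1
  have hev : ∀ e : V, ∀ᶠ l : ℝ in 𝓝[>] 0, (q : V) + l • e ∈ U ∩ Ω := by
    intro e
    have hcont : Continuous fun l : ℝ => (q : V) + l • e := by fun_prop
    exact (hcont.continuousAt.eventually_mem ((hU.inter hΩ).mem_nhds (by
      rw [zero_smul, add_zero]; exact hy))).filter_mono nhdsWithin_le_nhds
  rcases lt_trichotomy t 0 with ht | ht | ht
  · obtain ⟨l, hl, hl0, hlt⟩ := ((hev (-v)).and
      (Ioo_mem_nhdsGT (show (0 : ℝ) < -t by linarith))).exists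
    let r : Ω := ⟨_, hl.2⟩
    have hr : k r = r := hUfix r hl.1
    obtain ⟨σ, -, hσ⟩ := seg_image hC hΩ hk hv (T := -t) (t := -t - l) (by linarith) y q r
      (by rw [hyq]; simp) (by linarith) (by linarith)
      (by rw [hyq]; show (q : V) + l • -v = _; module)
    rw [hr, hq] at hσ
    have h1 : (1 - σ) • ((q : V) - k y) = l • v := by
      rw [sub_smul, ← hσ]
      show (1 : ℝ) • ((q : V) - k y) - ((q : V) + l • -v - k y) = l • v
      module
    have h2 : 1 - σ ≠ 0 := by
      intro h0
      rw [h0, zero_smul] at h1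
      exact (smul_ne_zero hl0.ne' hv.2.1) h1.symm
    refine ⟨-((1 - σ)⁻¹ * l), ?_⟩
    have h3 : (q : V) - k y = ((1 - σ)⁻¹ * l) • v := by
      rw [mul_smul, ← h1, smul_smul, inv_mul_cancel₀ h2, one_smul]
    rw [neg_smul, ← h3]; abel
  · refine ⟨0, ?_⟩
    have : y = q := Subtype.ext (by rw [hyq, ht]; simp)
    rw [this, hq]; simp
  · obtain ⟨l, hl, hl0, hlt⟩ := ((hev v).and (Ioo_mem_nhdsGT ht)).exists
    let r : Ω := ⟨_, hl.2⟩
    have hr : k r = r := hUfix r hl.1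
    obtain ⟨σ, -, hσ⟩ := seg_image hC hΩ hk hv (T := t) (t := l) ht q y r hyq hl0.le hlt.le rfl
    rw [hr, hq] at hσ
    have h1 : σ • ((k y : V) - q) = l • v := by
      rw [← hσ]
      show (q : V) + l • v - q = l • v
      abel
    have h2 : σ ≠ 0 := by
      intro h0
      rw [h0, zero_smul] at h1
      exact (smul_ne_zero hl0.ne' hv.2.1) h1.symm
    refine ⟨σ⁻¹ * l, ?_⟩
    rw [mul_smul, ← h1, smul_smul, inv_mul_cancel₀ h2, one_smul]; abel

end


/-- Hirsch's conjecture: a monotone homeomorphism of a nonempty open connected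
subset of a finite-dimensional real vector space with dense periodic points is
periodic. -/
theorem monotone_dense_periodic_points_implies_periodic
    {V : Type*} [NormedAddCommGroup V] [NormedSpace ℝ V] [FiniteDimensional ℝ V]
    (C : Set V)
    (hCconv : Convex ℝ C)
    (hCscal : ∀ (c : ℝ), 0 ≤ c → ∀ x ∈ C, c • x ∈ C)
    (hCpointed : C ∩ (-C) = {0})
    (hCclosed : IsClosed C)
    (hCsolid : (interior C).Nonempty)
    (Ω : Set V) (hΩne : Ω.Nonempty) (hΩopen : IsOpen Ω) (hΩconn : IsConnected Ω)
    (f : Ω ≃ₜ Ω)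
    (hmono : ∀ x y : Ω, ((y : V) - (x : V)) ∈ C → ((f y : V) - (f x : V)) ∈ C)
    (hdense : Dense {x : Ω | ∃ p : ℕ, 1 ≤ p ∧ (⇑f)^[p] x = x}) :
    ∃ p : ℕ, 1 ≤ p ∧ ∀ x : Ω, (⇑f)^[p] x = x := by
  have hzero : (0 : V) ∈ C := by
    have : (0 : V) ∈ C ∩ -C := by rw [hCpointed]; rfl
    exact this.1
  have hC : GoodCone C := by
    refine ⟨fun x hx y hy => ?_, hCscal, fun x hx hx' => ?_, hCclosed, hzero⟩
    · have h := hCscal 2 (by norm_num) _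
        (hCconv hx hy (a := 1 / 2) (b := 1 / 2) (by norm_num) (by norm_num) (by norm_num))
      have e : (2 : ℝ) • ((1 / 2 : ℝ) • x + (1 / 2 : ℝ) • y) = x + y := by module
      rwa [e] at h
    · have : x ∈ C ∩ -C := ⟨hx, hx'⟩
      rw [hCpointed] at this
      exact this
  have hf := f_OI hC hCsolid hΩopen f hmono hdense
  obtain ⟨x₁, hx₁⟩ := hΩne
  obtain ⟨M, hM, hx₁M⟩ := local_periodic hC hCsolid hΩopen f hmono hdense ⟨x₁, hx₁⟩
  refine ⟨M, hM, ?_⟩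
  haveI : PreconnectedSpace Ω := Subtype.preconnectedSpace hΩconn.isPreconnected
  set W := interior {z : Ω | (⇑f)^[M] z = z} with hW
  have hclosed : IsClosed W := by
    refine isClosed_of_closure_subset fun x₀ hx₀ => ?_
    obtain ⟨s, b, hb⟩ := hC.exists_basis hCsolid
    haveI : Fintype s := FiniteDimensional.fintypeBasisIndex b
    obtain ⟨L, hL, hbL⟩ := basis_bound b
    obtain ⟨R, hR0, hR⟩ := Metric.nhds_basis_closedBall.mem_iff.1 (hΩopen.mem_nhds x₀.2)
    obtain ⟨z, hz, hzd⟩ := Metric.mem_closure_iff.1 hx₀ (R / (L + 1)) (by positivity)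
    have hzd' : ‖(x₀ : V) - z‖ < R / (L + 1) := by
      rwa [Subtype.dist_eq, dist_eq_norm] at hzd
    rw [lt_div_iff₀ (by positivity)] at hzd'
    set t : s → ℝ := fun i => b.repr ((x₀ : V) - z) i with ht
    have hpart : ∀ A : Finset s, ‖∑ i ∈ A, t i • b i‖ ≤ L * ‖(x₀ : V) - z‖ := by
      intro A
      calc _ ≤ ∑ i ∈ A, ‖t i • b i‖ := norm_sum_le _ _
        _ ≤ ∑ i ∈ A, |t i| := Finset.sum_le_sum fun i _ => by
            rw [norm_smul, Real.norm_eq_abs]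
            exact mul_le_of_le_one_right (abs_nonneg _) (hb i).2.2.1
        _ ≤ ∑ i, |t i| := Finset.sum_le_univ_sum_of_nonneg fun i => abs_nonneg _
        _ ≤ _ := hbL _
    have hball : ∀ A : Finset s, (z : V) + ∑ i ∈ A, t i • b i ∈ Ω := by
      intro A
      refine hR ?_
      rw [Metric.mem_closedBall, dist_eq_norm]
      calc _ = ‖∑ i ∈ A, t i • b i - ((x₀ : V) - z)‖ := by congr 1; abel
        _ ≤ _ := norm_sub_le _ _
        _ ≤ L * ‖(x₀ : V) - z‖ + ‖(x₀ : V) - z‖ := by gcongr; exact hpart A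
        _ ≤ R := by linarith
    have main : ∀ A : Finset s, (⟨_, hball A⟩ : Ω) ∈ W := by
      classical
      intro A
      induction A using Finset.induction_on with
      | empty =>
        have : (⟨_, hball ∅⟩ : Ω) = z := Subtype.ext (by simp)
        rw [this]; exact hz
      | insert a A ha ih =>
        refine spread hC hΩopen f hf hdense M (hb a) (t := t a) _ _ ?_ ih
        show (z : V) + ∑ i ∈ insert a A, t i • b i = z + ∑ i ∈ A, t i • b i + t a • b a
        rw [Finset.sum_insert ha]; abel
    have : (⟨_, hball Finset.univ⟩ : Ω) = x₀ := Subtype.ext (by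
      show (z : V) + ∑ i, t i • b i = x₀
      simp only [ht]
      rw [b.sum_repr]; abel)
    rw [← this]; exact main _
  have huniv : W = Set.univ :=
    IsClopen.eq_univ ⟨hclosed, isOpen_interior⟩ ⟨_, hx₁M⟩
  intro x
  have : x ∈ W := by rw [huniv]; trivial
  exact (interior_subset this : x ∈ {z : Ω | (⇑f)^[M] z = z})
end

section
/- If f : Ω → Ω is a homeomorphism of a nonempty open connected subset Ω of a finite-dimensional real normed vector space V and every point x ∈ Ω is a periodic point of f, then f is periodic; that is, there exists an integer p ≥ 1 such that f^p(x) = x for all x ∈ Ω. -/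
namespace Mont

/-- coboundary of a cochain -/
def cob {X R : Type*} [CommRing R] {m : ℕ} (c : (Fin m → X) → R) (x : Fin (m+1) → X) : R :=
  ∑ i : Fin (m+1), (-1)^(i:ℕ) * c (fun j => x (i.succAbove j))

/-- the sign of a labelling, zero if a label is missing -/
noncomputable def eps {n : ℕ} (R : Type*) [CommRing R] (l : Fin (n+1) → Fin (n+1)) : R :=
  Matrix.det (Matrix.of fun i j => if l i = j then (1:R) else 0)

theorem eps_id {n : ℕ} (R : Type*) [CommRing R] (l : Fin (n+1) → Fin (n+1)) (hl : ∀ i, l i = i) :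
    eps R l = 1 := by
  unfold eps
  have : (Matrix.of fun i j => if l i = j then (1:R) else 0) = 1 := by
    ext i j
    simp [hl, Matrix.one_apply]
  rw [this, Matrix.det_one]

theorem eps_inj {n : ℕ} (R : Type*) [CommRing R] (l : Fin (n+1) → Fin (n+1))
    (h : eps R l ≠ 0) : Function.Injective l := by
  intro i j hij
  by_contra hne
  apply h
  unfold eps
  apply Matrix.det_zero_of_row_eq hne
  ext k
  simp [hij]

theorem cob_eps {n : ℕ} (R : Type*) [CommRing R] [IsDomain R] (l : Fin (n+2) → Fin (n+1)) :
    cob (eps R) l = 0 := by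
  let A : Matrix (Fin (n+2)) (Fin (n+2)) R :=
    Matrix.of fun i j => Fin.cases 1 (fun k => if l i = k then (1:R) else 0) j
  have h0 : A.det = 0 := by
    apply Matrix.exists_mulVec_eq_zero_iff.1
    refine ⟨fun j => Fin.cases 1 (fun _ => -1) j, ?_, ?_⟩
    · intro h
      have := congrFun h 0
      simp at this
    · ext i
      simp [Matrix.mulVec, dotProduct, Fin.sum_univ_succ (n := n+1), A]
  rw [Matrix.det_succ_column_zero] at h0
  rw [← h0]
  unfold cob eps
  apply Finset.sum_congr rfl
  intro i _
  have : A i 0 = 1 := rfl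
  rw [this, mul_one]
  rfl

/-- prism tuples -/
def pr {X V : Type*} {m : ℕ} (φ ψ : V → X) (i : Fin m) (x : Fin m → V) : Fin (m+1) → X :=
  fun j => if h : (j:ℕ) ≤ i then φ (x ⟨j, by omega⟩) else ψ (x ⟨j-1, by omega⟩)

theorem sum_split {R : Type*} [CommRing R] (g : ℕ → R) (n i : ℕ) (hi : i ≤ n) :
    ∑ j ∈ Finset.range (n+2), g j = (∑ j ∈ Finset.range (n+1), if j < i then g j else 0)
      + g i + g (i+1) + ∑ j ∈ Finset.range (n+1), if i < j then g (j+1) else 0 := by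
  obtain ⟨m, rfl⟩ := Nat.exists_eq_add_of_le hi
  induction m with
  | zero =>
    rw [Finset.sum_range_succ, Finset.sum_range_succ]
    have h1 : (∑ j ∈ Finset.range (i+0+1), if i < j then g (j+1) else 0) = 0 := by
      apply Finset.sum_eq_zero
      intro j hj
      rw [Finset.mem_range] at hj
      rw [if_neg (by omega)]
    have h2 : (∑ j ∈ Finset.range (i+0+1), if j < i then g j else 0) = ∑ j ∈ Finset.range (i+0), g j := by
      rw [Finset.sum_range_succ, if_neg (by omega), add_zero]
      apply Finset.sum_congr rfl
      intro j hj
      rw [Finset.mem_range] at hj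
      rw [if_pos (by omega)]
    rw [h1, h2]; ring_nf
  | succ m ih =>
    have := ih (by omega)
    rw [Finset.sum_range_succ, show i + (m+1) + 1 = i + m + 2 by ring, this,
      show i + m + 2 = (i + m + 1) + 1 by ring, Finset.sum_range_succ _ (i+m+1),
      Finset.sum_range_succ _ (i+m+1), if_neg (by omega), if_pos (by omega)]
    ring

theorem prism {X V R : Type*} [CommRing R] {n : ℕ} (φ ψ : V → X) (c : (Fin (n+1) → X) → R)
    (x : Fin (n+1) → V) (h : ∀ i, cob c (pr φ ψ i x) = 0) :
    c (fun j => ψ (x j)) - c (fun j => φ (x j)) =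
      cob (fun y : Fin n → V => ∑ i : Fin n, (-1)^(i:ℕ) * c (pr φ ψ i y)) x := by
  let xx : ℕ → V := fun b => x ⟨min b n, by omega⟩
  let sk : ℕ → ℕ → ℕ := fun j b => if b < j then b else b+1
  let q : ℕ → ℕ → R := fun i j => c (fun a => if (a:ℕ) ≤ i then φ (xx (sk j a)) else ψ (xx (sk j (a-1))))
  let M : ℕ → R := fun k => c (fun a => if (a:ℕ) < k then φ (xx a) else ψ (xx a))
  let P : ℕ → ℕ → X := fun i a => if a ≤ i then φ (xx a) else ψ (xx (a-1))
  have hxx : ∀ (b : ℕ) (hb : b < n+1), x ⟨b, hb⟩ = xx b := by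
    intro b hb
    simp only [xx]
    congr 2
    omega
  have hsk : ∀ {m : ℕ} (j : Fin (m+1)) (a : Fin m), ((j.succAbove a : Fin (m+1)) : ℕ) = sk j a := by
    intro m j a
    simp only [sk, Fin.succAbove, Fin.lt_def]
    split_ifs <;> simp_all
  have key : ∀ i ∈ Finset.range (n+1), M i - M (i+1) =
      (-1)^i * (∑ j ∈ Finset.range (n+1), if i < j then (-1)^j * q i j else 0)
      - (-1)^i * ∑ j ∈ Finset.range (n+1), if j < i then (-1)^j * q (i-1) j else 0 := by
    intro i hi
    rw [Finset.mem_range] at hi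
    have h1 := h ⟨i, hi⟩
    unfold cob at h1
    have h2 : (∑ j ∈ Finset.range (n+2), (-1)^j * c (fun a => P i (sk j a))) = 0 := by
      rw [← h1, Finset.sum_range]
      apply Finset.sum_congr rfl
      intro j _
      congr 2
      ext a
      simp only [pr, P, hsk]
      by_cases hh : sk j a ≤ i
      · rw [if_pos hh, dif_pos hh, hxx]
      · rw [if_neg hh, dif_neg hh, hxx]
    rw [sum_split _ n i (by omega)] at h2
    have e1 : (∑ j ∈ Finset.range (n+1), if j < i then (-1)^j * c (fun a => P i (sk j a)) else 0)
        = ∑ j ∈ Finset.range (n+1), if j < i then (-1)^j * q (i-1) j else 0 := by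
      apply Finset.sum_congr rfl
      intro j _
      split_ifs with hj
      · congr 2
        ext a
        simp only [P, sk]
        split_ifs <;> first | rfl | omega | (congr 2; omega)
      · rfl
    have e2 : (∑ j ∈ Finset.range (n+1), if i < j then (-1)^(j+1) * c (fun a => P i (sk (j+1) a)) else 0)
        = - ∑ j ∈ Finset.range (n+1), if i < j then (-1)^j * q i j else 0 := by
      rw [← Finset.sum_neg_distrib]
      apply Finset.sum_congr rfl
      intro j _
      split_ifs with hj
      · rw [pow_succ, mul_neg_one, neg_mul]
        congr 3
        ext a
        simp only [P, sk]
        split_ifs <;> first | rfl | omega | (congr 2; omega)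
      · simp
    have e3 : c (fun a => P i (sk i a)) = M i := by
      simp only [M]
      congr 1
      ext a
      simp only [P, sk]
      split_ifs <;> first | rfl | omega | (congr 2; omega)
    have e4 : c (fun a => P i (sk (i+1) a)) = M (i+1) := by
      simp only [M]
      congr 1
      ext a
      simp only [P, sk]
      split_ifs <;> first | rfl | omega | (congr 2; omega)
    rw [e1, e2, e3, e4] at h2
    have hs : ((-1:R)^i) * (-1)^i = 1 := by rw [← mul_pow]; simp
    rw [pow_succ] at h2
    linear_combination (-1)^i * h2 - (M i - M (i+1)) * hs
  have hM0 : M 0 = c (fun j => ψ (x j)) := by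
    simp only [M]
    congr 1
    ext a
    rw [if_neg (by omega), ← hxx a a.2]
  have hMn : M (n+1) = c (fun j => φ (x j)) := by
    simp only [M]
    congr 1
    ext a
    rw [if_pos a.2, ← hxx a a.2]
  have htel : ∑ i ∈ Finset.range (n+1), (M i - M (i+1)) = M 0 - M (n+1) :=
    Finset.sum_range_sub' M (n+1)
  rw [← hM0, ← hMn, ← htel, Finset.sum_congr rfl key, Finset.sum_sub_distrib,
    Finset.sum_range_succ]
  have z1 : (∑ j ∈ Finset.range (n+1), if n < j then (-1)^j * q n j else 0) = 0 := by
    apply Finset.sum_eq_zero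
    intro j hj
    rw [Finset.mem_range] at hj
    rw [if_neg (by omega)]
  rw [z1, Finset.sum_range_succ']
  simp only [Nat.not_lt_zero, if_false, Finset.sum_const_zero, mul_zero, add_zero]
  rw [← Finset.sum_sub_distrib]
  unfold cob
  simp only [Finset.mul_sum]
  rw [Finset.sum_comm, Finset.sum_range]
  apply Finset.sum_congr rfl
  intro i _
  rw [← Finset.sum_sub_distrib, Finset.sum_range]
  apply Finset.sum_congr rfl
  intro j _
  have e : c (pr φ ψ i fun k => x (j.succAbove k)) = q i j := by
    simp only [q]
    congr 1
    ext a
    simp only [pr]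
    have hh : ∀ (b : ℕ) (hb : b < n), x (j.succAbove ⟨b, hb⟩) = xx (sk j b) := by
      intro b hb
      rw [← hxx _ (by rw [← hsk j ⟨b, hb⟩]; exact Fin.is_lt _)]
      congr 1
      ext
      exact hsk j ⟨b, hb⟩
    split_ifs <;> rw [hh]
  rw [e, Nat.add_sub_cancel, pow_succ]
  split_ifs <;> first | omega | ring

end Mont

namespace Mont

/-- indicator of an inequality -/
def ind (t j : ℕ) : ℤ := if t < j then 1 else 0

/-- vertices of the Kuhn simplex -/
def vert {n : ℕ} (v : Fin n → ℤ) (π : Equiv.Perm (Fin n)) (j : Fin (n+1)) : Fin n → ℤ :=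
  fun a => v a + ind (π.symm a : Fin n) j

/-- integer box -/
noncomputable def box (n : ℕ) (M : ℤ) : Finset (Fin n → ℤ) := Fintype.piFinset fun _ => Finset.Icc (-M) M

theorem mem_box {n : ℕ} {M : ℤ} {v : Fin n → ℤ} : v ∈ box n M ↔ ∀ a, |v a| ≤ M := by
  simp [box, abs_le]

theorem box_shift {n : ℕ} {R : Type*} [CommRing R] (M : ℤ) (f : (Fin n → ℤ) → R) (e : Fin n → ℤ)
    (h1 : ∀ v, f v ≠ 0 → v ∈ box n M) (h2 : ∀ v, f (v + e) ≠ 0 → v ∈ box n M) :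
    ∑ v ∈ box n M, f (v + e) = ∑ v ∈ box n M, f v := by
  rw [← finsum_eq_sum_of_support_subset (s := box n M) f (fun v hv => h1 v hv),
    ← finsum_eq_sum_of_support_subset (s := box n M) (fun v => f (v + e)) (fun v hv => h2 v hv)]
  exact finsum_comp_equiv (Equiv.addRight e)

theorem kuhn_stokes {k : ℕ} {R : Type*} [CommRing R] (M : ℤ)
    (B : (Fin (k+1) → (Fin (k+1) → ℤ)) → R)
    (hB : ∀ y, B y ≠ 0 → ∀ j a, |y j a| ≤ M - 1) :
    ∑ v ∈ box (k+1) M, ∑ π : Equiv.Perm (Fin (k+1)),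
      ((Equiv.Perm.sign π : ℤ) : R) * cob B (vert v π) = 0 := by
  have e1 : ∑ v ∈ box (k+1) M, ∑ π : Equiv.Perm (Fin (k+1)),
      ((Equiv.Perm.sign π : ℤ) : R) * cob B (vert v π) =
      ∑ i : Fin (k+2), (-1)^(i:ℕ) * ∑ π : Equiv.Perm (Fin (k+1)), ((Equiv.Perm.sign π : ℤ) : R) *
        ∑ v ∈ box (k+1) M, B (fun j => vert v π (i.succAbove j)) := by
    unfold cob
    simp only [Finset.mul_sum]
    rw [Finset.sum_comm, Finset.sum_congr rfl (fun π _ => Finset.sum_comm), Finset.sum_comm]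
    apply Finset.sum_congr rfl
    intro i _
    apply Finset.sum_congr rfl
    intro π _
    apply Finset.sum_congr rfl
    intro v _
    ring
  rw [e1, Fin.sum_univ_succ, Fin.sum_univ_castSucc]
  have mid : ∀ i : Fin k, ∑ π : Equiv.Perm (Fin (k+1)), ((Equiv.Perm.sign π : ℤ) : R) *
        ∑ v ∈ box (k+1) M, B (fun j => vert v π (i.castSucc.succ.succAbove j)) = 0 := by
    intro i
    have hne : i.castSucc ≠ i.succ := by simp [Fin.ext_iff]
    apply Finset.sum_involution (fun π _ => π * Equiv.swap i.castSucc i.succ)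
    · intro π _
      have : ∀ v, (fun j => vert v (π * Equiv.swap i.castSucc i.succ) (i.castSucc.succ.succAbove j))
          = fun j => vert v π (i.castSucc.succ.succAbove j) := by
        intro v
        ext j a
        have hs : (π * Equiv.swap i.castSucc i.succ).symm a = Equiv.swap i.castSucc i.succ (π.symm a) := rfl
        unfold vert
        rw [hs]
        congr 1
        have hj : ((i.castSucc.succ.succAbove j : Fin (k+2)) : ℕ) ≠ i + 1 := by
          intro h
          apply Fin.succAbove_ne i.castSucc.succ j
          ext
          simpa using h
        generalize π.symm a = t
        generalize ((i.castSucc.succ.succAbove j : Fin (k+2)) : ℕ) = q at hj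
        rw [Equiv.swap_apply_def]
        by_cases h1 : t = i.castSucc
        · rw [if_pos h1, h1]; simp only [ind, Fin.val_succ, Fin.val_castSucc]; split_ifs <;> omega
        · rw [if_neg h1]
          by_cases h2 : t = i.succ
          · rw [if_pos h2, h2]; simp only [ind, Fin.val_succ, Fin.val_castSucc]; split_ifs <;> omega
          · rw [if_neg h2]
      simp only [this, Equiv.Perm.sign_mul, Equiv.Perm.sign_swap hne]
      push_cast
      ring
    · intro π _ _ h
      have h2 : Equiv.swap i.castSucc i.succ = 1 := by simpa using h
      rw [Equiv.swap_eq_one_iff] at h2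
      exact hne h2
    · intro π _
      exact Finset.mem_univ _
    · intro π _
      simp [mul_assoc]
  have mid' : (∑ i : Fin k, (-1 : R) ^ ((i.castSucc.succ : Fin (k+2)) : ℕ) *
      ∑ π : Equiv.Perm (Fin (k+1)), ((Equiv.Perm.sign π : ℤ) : R) *
        ∑ v ∈ box (k+1) M, B (fun j => vert v π (i.castSucc.succ.succAbove j))) = 0 := by
    apply Finset.sum_eq_zero
    intro i _
    rw [mid i, mul_zero]
  rw [mid', zero_add]
  have hface : ∀ (v : Fin (k+1) → ℤ) (π : Equiv.Perm (Fin (k+1))),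
      (fun j => vert v π ((0 : Fin (k+2)).succAbove j)) =
      fun j => vert (v + Pi.single (π 0) 1) (π * finRotate (k+1)) ((Fin.last (k+1)).succAbove j) := by
    intro v π
    ext j a
    obtain ⟨t, rfl⟩ := π.surjective a
    have hs : (π * finRotate (k+1)).symm (π t) = (finRotate (k+1)).symm t := by
      show (finRotate (k+1)).symm (π.symm (π t)) = _
      rw [Equiv.symm_apply_apply]
    unfold vert
    rw [hs, Equiv.symm_apply_apply, Pi.add_apply, Fin.succAbove_zero, Fin.succAbove_last, Fin.val_succ, Fin.val_castSucc,
      Pi.single_apply]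
    by_cases ht : t = 0
    · subst ht
      have : (finRotate (k+1)).symm 0 = Fin.last k := by
        rw [Equiv.symm_apply_eq]; simp
      rw [this]
      simp only [ind, Fin.val_zero, Fin.val_last, if_true]
      have := j.2
      split_ifs <;> omega
    · obtain ⟨s, rfl⟩ := Fin.exists_succ_eq.2 ht
      have : (finRotate (k+1)).symm s.succ = s.castSucc := by
        rw [Equiv.symm_apply_eq]
        simp
      rw [this]
      simp [ind, Fin.succ_ne_zero]
  have hz : ∑ π : Equiv.Perm (Fin (k+1)), ((Equiv.Perm.sign π : ℤ) : R) *
        ∑ v ∈ box (k+1) M, B (fun j => vert v π ((0 : Fin (k+2)).succAbove j)) =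
      (-1)^k * ∑ π : Equiv.Perm (Fin (k+1)), ((Equiv.Perm.sign π : ℤ) : R) *
        ∑ v ∈ box (k+1) M, B (fun j => vert v π ((Fin.last (k+1)).succAbove j)) := by
    rw [← Equiv.sum_comp (Equiv.mulRight (finRotate (k+1))) (fun π : Equiv.Perm (Fin (k+1)) => ((Equiv.Perm.sign π : ℤ) : R) *
        ∑ v ∈ box (k+1) M, B (fun j => vert v π ((Fin.last (k+1)).succAbove j))), Finset.mul_sum]
    apply Finset.sum_congr rfl
    intro π _
    simp only [hface]
    rw [box_shift M (fun v => B (fun j => vert v (π * finRotate (k+1)) ((Fin.last (k+1)).succAbove j)))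
      (Pi.single (π 0) 1)]
    · simp only [Equiv.coe_mulRight, Equiv.Perm.sign_mul, sign_finRotate]
      push_cast
      have : ((-1:R)^k) * (-1)^k = 1 := by rw [← mul_pow]; simp
      linear_combination (-(((Equiv.Perm.sign π : ℤ) : R) * ∑ v ∈ box (k+1) M, B (fun j => vert v (π * finRotate (k+1)) ((Fin.last (k+1)).succAbove j)))) * this
    · intro v hv
      rw [mem_box]
      intro a
      have := hB _ hv 0 a
      simp [vert, ind] at this
      rw [abs_lt] at this; rw [abs_le]
      omega
    · intro v hv
      rw [mem_box]
      intro a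
      have := hB _ hv 0 a
      simp [vert, ind, Pi.single_apply] at this
      rw [abs_lt] at this; rw [abs_le]
      split_ifs at this <;> omega
  have e2 : ∀ x : R, (-1)^k * x + (-1)^(k+1) * x = 0 := by intro x; ring
  simp only [Fin.val_zero, pow_zero, one_mul, Fin.succ_last, Fin.val_last]
  rw [hz]
  simpa using e2 _

end Mont

namespace Mont
open Filter
set_option autoImplicit false

/-- small tuples -/
def sm {X : Type*} [PseudoMetricSpace X] {m : ℕ} (δ : ℝ) (x : Fin m → X) : Prop :=
  ∀ i j, dist (x i) (x j) < δ

/-- mesh points -/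
noncomputable def pt {n : ℕ} (N : ℕ) (v : Fin n → ℤ) : Fin n → ℝ := fun a => (v a : ℝ) / (N + 1)

variable {k p : ℕ}

/-- discrete integral -/
noncomputable def IN (N : ℕ) (c : (Fin (k+2) → (Fin (k+1) → ℝ)) → ZMod p) : ZMod p :=
  ∑ v ∈ box (k+1) (((N:ℤ)+1)^2), ∑ π : Equiv.Perm (Fin (k+1)),
    ((Equiv.Perm.sign π : ℤ) : ZMod p) * c (fun j => pt N (vert v π j))

/-- the integral, as a germ at infinity -/
noncomputable def I (c : (Fin (k+2) → (Fin (k+1) → ℝ)) → ZMod p) : Germ (atTop : Filter ℕ) (ZMod p) :=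
  ((fun N => IN N c : ℕ → ZMod p) : Germ (atTop : Filter ℕ) (ZMod p))

theorem pt_small (N : ℕ) (v : Fin (k+1) → ℤ) (π : Equiv.Perm (Fin (k+1))) (i j : Fin (k+2)) :
    dist (pt N (vert v π i)) (pt N (vert v π j)) ≤ 1 / ((N:ℝ) + 1) := by
  have hN : (0:ℝ) < N + 1 := by positivity
  rw [dist_pi_le_iff (by positivity)]
  intro a
  rw [Real.dist_eq]
  unfold pt
  rw [← sub_div, abs_div, abs_of_pos hN]
  gcongr
  have : |vert v π i a - vert v π j a| ≤ 1 := by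
    simp only [vert, ind]
    rw [abs_le]
    split_ifs <;> omega
  exact_mod_cast this

theorem I_congr {c c' : (Fin (k+2) → (Fin (k+1) → ℝ)) → ZMod p} {δ : ℝ} (hδ : 0 < δ)
    (h : ∀ x, sm δ x → c x = c' x) : I c = I c' := by
  unfold I
  rw [Germ.coe_eq]
  filter_upwards [tendsto_one_div_add_atTop_nhds_zero_nat.eventually (gt_mem_nhds hδ)] with N hN
  unfold IN
  refine Finset.sum_congr rfl fun v _ => Finset.sum_congr rfl fun π _ => ?_
  rw [h]
  intro i j
  exact (pt_small N v π i j).trans_lt hN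

theorem I_add (c c' : (Fin (k+2) → (Fin (k+1) → ℝ)) → ZMod p) :
    I (fun x => c x + c' x) = I c + I c' := by
  unfold I
  rw [← Germ.coe_add, Germ.coe_eq]
  refine Eventually.of_forall fun N => ?_
  simp [IN, mul_add, Finset.sum_add_distrib]

theorem I_zero : I (fun _ => 0 : (Fin (k+2) → (Fin (k+1) → ℝ)) → ZMod p) = 0 := by
  unfold I
  rw [← Germ.coe_zero, Germ.coe_eq]
  refine Eventually.of_forall fun N => ?_
  simp [IN]

theorem I_sub (c c' : (Fin (k+2) → (Fin (k+1) → ℝ)) → ZMod p) :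
    I (fun x => c x - c' x) = I c - I c' := by
  rw [eq_sub_iff_add_eq, ← I_add]
  simp

theorem I_sum {ι : Type*} (s : Finset ι) (c : ι → (Fin (k+2) → (Fin (k+1) → ℝ)) → ZMod p) :
    I (fun x => ∑ i ∈ s, c i x) = ∑ i ∈ s, I (c i) := by
  classical
  induction s using Finset.induction_on with
  | empty => simpa using I_zero
  | insert a s ha ih =>
    rw [Finset.sum_insert ha, ← ih, ← I_add]
    congr 1
    ext x
    rw [Finset.sum_insert ha]

theorem I_nsmul (c : (Fin (k+2) → (Fin (k+1) → ℝ)) → ZMod p) : p • I c = 0 := by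
  have := I_sum (Finset.range p) (fun _ => c)
  simp only [Finset.sum_const, Finset.card_range] at this
  rw [← this]
  simpa using I_zero

theorem cob_congr {X R : Type*} [CommRing R] {m : ℕ} {c c' : (Fin m → X) → R} {x : Fin (m+1) → X}
    (h : ∀ i : Fin (m+1), c (fun j => x (i.succAbove j)) = c' (fun j => x (i.succAbove j))) :
    cob c x = cob c' x := by
  unfold cob
  exact Finset.sum_congr rfl fun i _ => by rw [h i]

theorem I_cob {b : (Fin (k+1) → (Fin (k+1) → ℝ)) → ZMod p} {δ R₀ : ℝ} (hδ : 0 < δ)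
    (h : ∀ x, sm δ x → (∃ j, R₀ < ‖x j‖) → b x = 0) : I (cob b) = 0 := by
  classical
  let b' : (Fin (k+1) → (Fin (k+1) → ℝ)) → ZMod p :=
    fun x => if ∀ j, ‖x j‖ ≤ R₀ then b x else 0
  have h1 : I (cob b) = I (cob b') := by
    refine I_congr hδ fun x hx => cob_congr fun i => ?_
    show _ = if _ then _ else _
    split_ifs with h2
    · rfl
    · push Not at h2
      exact h _ (fun i j => hx _ _) h2
  rw [h1, ← Germ.coe_zero]
  unfold I
  rw [Germ.coe_eq]
  filter_upwards [eventually_ge_atTop ⌈R₀⌉₊] with N hN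
  have hN1 : R₀ ≤ N := (Nat.le_ceil _).trans (by exact_mod_cast hN)
  have hNp : (0:ℝ) < N + 1 := by positivity
  have := kuhn_stokes (k := k) (((N:ℤ)+1)^2) (fun y => b' (fun j => pt N (y j))) ?_
  · exact this
  · intro y hy j a
    have h3 : ‖pt N (y j)‖ ≤ R₀ := by
      by_contra h4
      apply hy
      show (if _ then _ else _) = _
      rw [if_neg]
      push Not
      exact ⟨j, lt_of_not_ge h4⟩
    have h5 := (norm_le_pi_norm (pt N (y j)) a).trans h3
    unfold pt at h5
    rw [Real.norm_eq_abs, abs_div, abs_of_pos hNp, div_le_iff₀ hNp] at h5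
    have h6 : (|((y j a : ℤ):ℝ)|) ≤ ((N:ℝ)+1)^2 - 1 := by nlinarith
    exact_mod_cast h6

/-- least negative coordinate -/
noncomputable def lab (y : Fin (k+1) → ℝ) : Fin (k+2) := by
  classical
  exact ⟨Nat.find (p := fun m => m = k+1 ∨ ∃ h : m < k+1, y ⟨m, h⟩ < 0) ⟨k+1, Or.inl rfl⟩, by
    have := Nat.find_min' (p := fun m => m = k+1 ∨ ∃ h : m < k+1, y ⟨m, h⟩ < 0) ⟨k+1, Or.inl rfl⟩ (Or.inl rfl)
    omega⟩

theorem lab_spec (y : Fin (k+1) → ℝ) :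
    (lab y : ℕ) = k+1 ∨ ∃ h : (lab y : ℕ) < k+1, y ⟨lab y, h⟩ < 0 := by
  classical
  exact Nat.find_spec (p := fun m => m = k+1 ∨ ∃ h : m < k+1, y ⟨m, h⟩ < 0) ⟨k+1, Or.inl rfl⟩

theorem lab_min (y : Fin (k+1) → ℝ) (i : Fin (k+1)) (hi : (i:ℕ) < lab y) : 0 ≤ y i := by
  classical
  have := Nat.find_min (p := fun m => m = k+1 ∨ ∃ h : m < k+1, y ⟨m, h⟩ < 0) ⟨k+1, Or.inl rfl⟩ hi
  by_contra h
  exact this (Or.inr ⟨i.2, lt_of_not_ge h⟩)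

theorem lab_le (y : Fin (k+1) → ℝ) (i : Fin (k+1)) (hi : y i < 0) : (lab y : ℕ) ≤ i := by
  by_contra h
  exact absurd (lab_min y i (by omega)) (not_le.2 hi)

theorem lab_neg (y : Fin (k+1) → ℝ) (i : Fin (k+1)) (hi : (lab y : ℕ) = i) : y i < 0 := by
  rcases lab_spec y with h | ⟨h, h2⟩
  · omega
  · have : (⟨lab y, h⟩ : Fin (k+1)) = i := by ext; exact hi
    rwa [this] at h2

theorem lab_mono (y y' : Fin (k+1) → ℝ) (h : ∀ i, y i ≤ y' i) : lab y ≤ lab y' := by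
  rcases lab_spec y' with h' | ⟨h1, h2⟩
  · rw [Fin.le_def]; omega
  · exact lab_le y _ ((h _).trans_lt h2)

theorem inj_le {m : ℕ} (f : Fin m → Fin m) (hf : Function.Injective f) (h : ∀ j, j ≤ f j) :
    ∀ j, f j = j := by
  have h1 : ∑ j : Fin m, ((j : Fin m) : ℕ) = ∑ j, ((f j : Fin m) : ℕ) :=
    ((Equiv.ofBijective f (Finite.injective_iff_bijective.1 hf)).sum_comp (fun j => ((j : Fin m):ℕ))).symm
  rw [Finset.sum_eq_sum_iff_of_le (fun i _ => Fin.le_def.1 (h i))] at h1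
  intro j
  ext
  exact (h1 j (Finset.mem_univ _)).symm

theorem lab_mesh (N : ℕ) (w : Fin (k+1) → ℝ) (u : Fin (k+1) → ℤ)
    (hu : ∀ i (t : ℤ), (t:ℝ) / (N+1) - w i < 0 ↔ t ≤ u i)
    (v : Fin (k+1) → ℤ) (π : Equiv.Perm (Fin (k+1))) (R : Type*) [CommRing R]
    (h : eps R (fun j => lab (pt N (vert v π j) - w)) ≠ 0) : v = u ∧ π = 1 := by
  have hN : (0:ℝ) < N + 1 := by positivity
  have hi := eps_inj _ _ h
  have hm : Monotone (fun j => lab (pt N (vert v π j) - w)) := by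
    intro i j hij
    apply lab_mono
    intro a
    simp only [Pi.sub_apply, pt]
    gcongr
    simp only [vert, ind]
    have : (i:ℕ) ≤ j := hij
    split_ifs <;> omega
  have hid : ∀ j, lab (pt N (vert v π j) - w) = j :=
    inj_le _ hi (fun j => (hm.strictMono_of_injective hi).le_apply)
  have e1 : ∀ i : Fin (k+1), vert v π i.castSucc i ≤ u i := by
    intro i
    have := lab_neg (pt N (vert v π i.castSucc) - w) i (by rw [hid]; rfl)
    rw [← hu]
    exact this
  have e2 : ∀ i : Fin (k+1), u i < vert v π (Fin.last _) i := by
    intro i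
    have := lab_min (pt N (vert v π (Fin.last _)) - w) i (by rw [hid]; exact i.2)
    rw [← not_le, ← hu, not_lt]
    exact this
  have e3 : ∀ i, v i = u i := by
    intro i
    have h1 := e1 i
    have h2 := e2 i
    simp only [vert, ind] at h1 h2
    split_ifs at h1 h2 <;> omega
  refine ⟨funext e3, ?_⟩
  have e4 : ∀ i, i ≤ π.symm i := by
    intro i
    have h1 := e1 i
    have h3 := e3 i
    simp only [vert, ind, Fin.val_castSucc] at h1
    rw [Fin.le_def]
    split_ifs at h1 <;> omega
  have e5 := inj_le _ π.symm.injective e4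
  refine Equiv.ext fun i => ?_
  have := e5 (π i)
  rw [Equiv.symm_apply_apply] at this
  exact this.symm

theorem I_lab [Fact p.Prime] (w : Fin (k+1) → ℝ) :
    I (fun x : Fin (k+2) → (Fin (k+1) → ℝ) => eps (ZMod p) (fun j => lab (x j - w))) = 1 := by
  classical
  unfold I
  rw [← Germ.coe_one, Germ.coe_eq]
  filter_upwards [eventually_ge_atTop ⌈‖w‖ + 1⌉₊] with N hN
  have hN1 : ‖w‖ + 1 ≤ N := (Nat.le_ceil _).trans (by exact_mod_cast hN)
  have hNp : (0:ℝ) < N + 1 := by positivity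
  let u : Fin (k+1) → ℤ := fun i => ⌈w i * (N+1)⌉ - 1
  have hu : ∀ i (t : ℤ), (t:ℝ) / (N+1) - w i < 0 ↔ t ≤ u i := by
    intro i t
    rw [sub_neg, div_lt_iff₀ hNp, ← Int.lt_ceil]
    show _ ↔ t ≤ _ - 1
    omega
  unfold IN
  rw [Finset.sum_eq_single u, Finset.sum_eq_single 1]
  · simp only [Equiv.Perm.sign_one, Units.val_one, Int.cast_one, one_mul, Pi.one_apply]
    apply eps_id
    intro j
    apply le_antisymm
    · by_cases hj : (j:ℕ) < k+1
      · apply lab_le _ ⟨j, hj⟩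
        simp only [Pi.sub_apply, pt]
        rw [hu]
        have : ((1 : Equiv.Perm (Fin (k+1))).symm ⟨j, hj⟩) = ⟨j, hj⟩ := rfl
        simp [vert, ind, this]
      · rw [Fin.le_def]; omega
    · by_contra h
      rw [not_le, Fin.lt_def] at h
      have h2 := lab_neg (pt N (vert u 1 j) - w) ⟨_, lt_of_lt_of_le h (by omega)⟩ rfl
      simp only [Pi.sub_apply, pt] at h2
      rw [hu] at h2
      have h3 : ((lab (pt N (vert u 1 j) - w) : Fin (k+2)) : ℕ) < j := h
      simp only [vert, ind] at h2
      rw [if_pos] at h2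
      · omega
      · exact h3
  · intro π _ hπ
    by_contra h
    exact hπ (lab_mesh N w u hu u π (ZMod p) (right_ne_zero_of_mul h)).2
  · simp
  · intro v _ hv
    apply Finset.sum_eq_zero
    intro π _
    by_contra h
    exact hv (lab_mesh N w u hu v π (ZMod p) (right_ne_zero_of_mul h)).1
  · intro h
    exfalso
    apply h
    rw [mem_box]
    intro a
    have h1 : |w a| ≤ ‖w‖ := norm_le_pi_norm w a
    have h2 := Int.ceil_lt_add_one (w a * (N+1))
    have h3 := Int.le_ceil (w a * (N+1))
    have h4 : |w a * (N+1)| ≤ (N - 1) * (N+1) := by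
      rw [abs_mul, abs_of_pos hNp]
      gcongr
      linarith
    rw [abs_le] at h4 ⊢
    have h5 : ((u a : ℤ) : ℝ) = ⌈w a * (N+1)⌉ - 1 := by simp [u]
    constructor
    · have : -(((N:ℝ)+1)^2) ≤ u a := by rw [h5]; nlinarith
      exact_mod_cast this
    · have : (u a : ℝ) ≤ ((N:ℝ)+1)^2 := by rw [h5]; nlinarith
      exact_mod_cast this

end Mont

namespace Mont
open Filter
set_option autoImplicit false
variable {k p : ℕ}

theorem lab_close (R : Type*) [CommRing R] (y : Fin (k+2) → (Fin (k+1) → ℝ)) (y0 : Fin (k+1) → ℝ) (s : ℝ)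
    (hs : 0 < s) (h0 : s ≤ ‖y0‖) (h : ∀ j, dist (y j) y0 < s) : eps R (fun j => lab (y j)) = 0 := by
  by_contra hne
  have hsur := Finite.surjective_of_injective (eps_inj _ _ hne)
  have : ∃ i, s ≤ |y0 i| := by
    by_contra hcon
    push Not at hcon
    have := (pi_norm_lt_iff (x := y0) hs).2 hcon
    linarith
  obtain ⟨i, hi⟩ := this
  have hd : ∀ j, |y j i - y0 i| < s := fun j => lt_of_le_of_lt (dist_le_pi_dist (y j) y0 i) (h j)
  rcases le_total 0 (y0 i) with h1 | h1
  · rw [abs_of_nonneg h1] at hi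
    obtain ⟨j, hj⟩ := hsur i.castSucc
    have h2 := lab_neg (y j) i (by simpa using congrArg Fin.val hj)
    have := (abs_lt.1 (hd j)).1
    linarith
  · rw [abs_of_nonpos h1] at hi
    obtain ⟨j, hj⟩ := hsur (Fin.last _)
    have h2 := lab_min (y j) i (by rw [show lab (y j) = Fin.last _ from hj]; exact i.2)
    have := (abs_lt.1 (hd j)).2
    linarith

theorem homotopy {X : Type*} (c : (Fin (k+2) → X) → ZMod p) (φ ψ : (Fin (k+1) → ℝ) → X)
    {δ R₀ : ℝ} (hδ : 0 < δ)
    (h1 : ∀ x : Fin (k+2) → (Fin (k+1) → ℝ), sm δ x → ∀ i, cob c (pr φ ψ i x) = 0)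
    (h2 : ∀ x : Fin (k+1) → (Fin (k+1) → ℝ), sm δ x → (∃ j, R₀ < ‖x j‖) → ∀ i, c (pr φ ψ i x) = 0) :
    I (fun x => c (fun j => φ (x j))) = I (fun x => c (fun j => ψ (x j))) := by
  symm
  rw [← sub_eq_zero, ← I_sub]
  rw [I_congr hδ (fun x hx => prism φ ψ c x (h1 x hx))]
  apply I_cob hδ (R₀ := R₀)
  intro x hx hj
  apply Finset.sum_eq_zero
  intro i _
  rw [h2 x hx hj i, mul_zero]

theorem step_const {α : Type*} (J : ℝ → α) {a b η : ℝ} (hab : a ≤ b) (hη : 0 < η)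
    (h : ∀ t t', a ≤ t → t ≤ b → a ≤ t' → t' ≤ b → |t - t'| < η → J t = J t') : J a = J b := by
  have key : ∀ n : ℕ, J a = J (min b (a + n * (η/2))) := by
    intro n
    induction n with
    | zero => simp [hab]
    | succ n ih =>
      rw [ih]
      have : (0:ℝ) ≤ n * (η/2) := by positivity
      apply h
      · exact le_min hab (by linarith)
      · exact min_le_left _ _
      · exact le_min hab (by push_cast; nlinarith)
      · exact min_le_left _ _
      · refine lt_of_le_of_lt (abs_min_sub_min_le_max _ _ _ _) ?_
        push_cast
        simp only [sub_self, abs_zero]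
        rw [max_lt_iff]
        refine ⟨hη, ?_⟩
        rw [show a + n * (η/2) - (a + (n+1) * (η/2)) = -(η/2) by ring, abs_neg, abs_of_pos] <;> linarith
  obtain ⟨n, hn⟩ := exists_nat_ge ((b - a) / (η/2))
  rw [div_le_iff₀ (by positivity)] at hn
  rw [key n, min_eq_left (by linarith)]

theorem sm_mono {X : Type*} [PseudoMetricSpace X] {m : ℕ} {δ δ' : ℝ} (h : δ ≤ δ') {x : Fin m → X}
    (hx : sm δ x) : sm δ' x := fun i j => (hx i j).trans_le h

theorem sm_comp {X : Type*} [PseudoMetricSpace X] {m l : ℕ} {δ : ℝ} {x : Fin m → X}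
    (hx : sm δ x) (q : Fin l → Fin m) : sm δ (fun j => x (q j)) := fun _ _ => hx _ _

/-- each prism entry is a value of φ or ψ at some x j -/
theorem pr_mem {X V : Type*} {m : ℕ} (φ ψ : V → X) (i : Fin m) (x : Fin m → V) (j : Fin (m+1)) :
    ∃ a, pr φ ψ i x j = φ (x a) ∨ pr φ ψ i x j = ψ (x a) := by
  unfold pr
  split_ifs with h
  · exact ⟨_, Or.inl rfl⟩
  · exact ⟨_, Or.inr rfl⟩

/-- every index occurs in the prism -/
theorem pr_surj {X V : Type*} {m : ℕ} (φ ψ : V → X) (i : Fin m) (x : Fin m → V) (a : Fin m) :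
    ∃ j, pr φ ψ i x j = φ (x a) ∨ pr φ ψ i x j = ψ (x a) := by
  by_cases h : (a:ℕ) ≤ i
  · exact ⟨⟨a, by omega⟩, Or.inl (by unfold pr; rw [dif_pos h])⟩
  · refine ⟨⟨a+1, by omega⟩, Or.inr ?_⟩
    unfold pr
    rw [dif_neg (by simp; omega)]
    rfl

end Mont

namespace Mont
open Filter
set_option autoImplicit false
variable {k p : ℕ}

/-- compactly supported small cocycle -/
structure Coc (c : (Fin (k+2) → (Fin (k+1) → ℝ)) → ZMod p) (K : Set (Fin (k+1) → ℝ)) : Prop where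
  supp : ∀ x, c x ≠ 0 → ∀ i, x i ∈ K
  coc : ∃ δ > 0, ∀ x : Fin (k+3) → (Fin (k+1) → ℝ), sm δ x → cob c x = 0
  inj : ∀ x, c x ≠ 0 → Function.Injective x

/-- uniform modulus on a set -/
def UC {X Y : Type*} [PseudoMetricSpace X] [PseudoMetricSpace Y] (φ : X → Y) (S : Set X) (η : ℝ) : Prop :=
  ∃ δ > 0, ∀ a ∈ S, ∀ b, dist a b < δ → dist (φ a) (φ b) < η

theorem UC_of_compact {X Y : Type*} [PseudoMetricSpace X] [PseudoMetricSpace Y] {φ : X → Y} {S : Set X}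
    (hS : IsCompact S) (h : ∀ x ∈ S, ContinuousAt φ x) {η : ℝ} (hη : 0 < η) : UC φ S η := by
  have := hS.uniformContinuousAt_of_continuousAt φ h (Metric.dist_mem_uniformity hη)
  obtain ⟨δ, hδ, h2⟩ := Metric.mem_uniformity_dist.1 this
  exact ⟨δ, hδ, fun a ha b hab => h2 hab ha⟩

theorem coc_homotopy {c : (Fin (k+2) → (Fin (k+1) → ℝ)) → ZMod p} {K S : Set (Fin (k+1) → ℝ)}
    (hsupp : ∀ x, c x ≠ 0 → ∀ i, x i ∈ K)
    {δ : ℝ} (hδ : 0 < δ) (hcoc : ∀ x : Fin (k+3) → (Fin (k+1) → ℝ), sm δ x → cob c x = 0)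
    (hS : Bornology.IsBounded S) (φ ψ : (Fin (k+1) → ℝ) → (Fin (k+1) → ℝ))
    (hφ : ∀ x, φ x ∈ K → x ∈ S) (hψ : ∀ x, ψ x ∈ K → x ∈ S)
    (hφc : UC φ S (δ/4)) (hψc : UC ψ S (δ/4)) (hd : ∀ x ∈ S, dist (φ x) (ψ x) < δ/4) :
    I (fun x => c (fun j => φ (x j))) = I (fun x => c (fun j => ψ (x j))) := by
  obtain ⟨δ1, hδ1, h1⟩ := hφc
  obtain ⟨δ2, hδ2, h2⟩ := hψc
  obtain ⟨R, hR⟩ := hS.exists_norm_le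
  have hm : ∀ {m : ℕ} (i : Fin m) (x : Fin m → (Fin (k+1) → ℝ)) (j : Fin (m+1)),
      pr φ ψ i x j ∈ K → ∃ a, x a ∈ S := by
    intro m i x j hj
    obtain ⟨a, h | h⟩ := pr_mem φ ψ i x j
    · exact ⟨a, hφ _ (h ▸ hj)⟩
    · exact ⟨a, hψ _ (h ▸ hj)⟩
  apply homotopy c φ ψ (δ := min 1 (min δ1 δ2)) (R₀ := R + 1) (by positivity)
  · intro x hx i
    have hx1 : sm δ1 x := sm_mono ((min_le_right _ _).trans (min_le_left _ _)) hx
    have hx2 : sm δ2 x := sm_mono ((min_le_right _ _).trans (min_le_right _ _)) hx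
    by_cases hS : ∃ a, x a ∈ S
    · obtain ⟨a, ha⟩ := hS
      apply hcoc
      have key : ∀ j, dist (pr φ ψ i x j) (φ (x a)) < δ/2 := by
        intro j
        obtain ⟨b, h | h⟩ := pr_mem φ ψ i x j
        · rw [h, dist_comm]
          linarith [h1 _ ha (x b) (hx1 a b)]
        · rw [h, dist_comm]
          have := dist_triangle (φ (x a)) (ψ (x a)) (ψ (x b))
          linarith [h2 _ ha (x b) (hx2 a b), hd _ ha]
      intro j j'
      have := dist_triangle_right (pr φ ψ i x j) (pr φ ψ i x j') (φ (x a))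
      linarith [key j, key j']
    · unfold cob
      apply Finset.sum_eq_zero
      intro l _
      have : c (fun j => pr φ ψ i x (l.succAbove j)) = 0 := by
        by_contra hne
        exact hS (hm i x _ (hsupp _ hne 0))
      rw [this, mul_zero]
  · intro x hx ⟨j, hj⟩ i
    by_contra hne
    obtain ⟨a, ha⟩ := hm i x _ (hsupp _ hne 0)
    have h3 := hR _ ha
    have h4 := hx j a
    have h5 : dist (x j) (x a) < 1 := h4.trans_le (min_le_left _ _)
    rw [dist_eq_norm] at h5
    have := norm_sub_norm_le (x j) (x a)
    linarith

/-- scaling about a point -/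
def scl (w : Fin (k+1) → ℝ) (σ : ℝ) (x : Fin (k+1) → ℝ) : Fin (k+1) → ℝ := w + σ • (x - w)

/-- cone of a set -/
def cone (w : Fin (k+1) → ℝ) (K : Set (Fin (k+1) → ℝ)) : Set (Fin (k+1) → ℝ) :=
  {x | ∃ t ∈ Set.Icc (0:ℝ) 1, ∃ y ∈ K, x = scl w t y}

theorem cone_compact (w : Fin (k+1) → ℝ) {K : Set (Fin (k+1) → ℝ)} (hK : IsCompact K) :
    IsCompact (cone w K) := by
  have : cone w K = (fun q : ℝ × (Fin (k+1) → ℝ) => scl w q.1 q.2) '' (Set.Icc (0:ℝ) 1 ×ˢ K) := by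
    ext x
    simp only [cone, Set.mem_setOf_eq, Set.mem_image, Set.mem_prod, Prod.exists]
    constructor
    · rintro ⟨t, ht, y, hy, rfl⟩
      exact ⟨t, y, ⟨ht, hy⟩, rfl⟩
    · rintro ⟨t, y, ⟨ht, hy⟩, rfl⟩
      exact ⟨t, ht, y, hy, rfl⟩
  rw [this]
  apply (isCompact_Icc.prod hK).image
  unfold scl
  fun_prop

theorem cone_sub (w : Fin (k+1) → ℝ) {K Q : Set (Fin (k+1) → ℝ)} (hQ : Convex ℝ Q) (hw : w ∈ Q) (hK : K ⊆ Q) :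
    cone w K ⊆ Q := by
  rintro x ⟨t, ht, y, hy, rfl⟩
  exact hQ.add_smul_sub_mem hw (hK hy) ht

theorem mem_cone (w : Fin (k+1) → ℝ) {K : Set (Fin (k+1) → ℝ)} {σ : ℝ} (hσ : 1 ≤ σ) {x : Fin (k+1) → ℝ}
    (h : scl w σ x ∈ K) : ∃ y ∈ K, x = scl w σ⁻¹ y := by
  refine ⟨_, h, ?_⟩
  have : σ ≠ 0 := by positivity
  simp [scl, smul_smul, this]

theorem scale1 {c : (Fin (k+2) → (Fin (k+1) → ℝ)) → ZMod p} {K S : Set (Fin (k+1) → ℝ)}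
    (hc : Coc c K) (hK : IsCompact K) (w : Fin (k+1) → ℝ) (h : (Fin (k+1) → ℝ) → (Fin (k+1) → ℝ))
    (hS : IsCompact S) (hhS : ∀ x, h x ∈ cone w K ↔ x ∈ S) (hcont : ∀ x ∈ S, ContinuousAt h x) (T : ℝ) (hT : 1 ≤ T) :
    I (fun x => c (fun j => h (x j))) = I (fun x => c (fun j => scl w T (h (x j)))) := by
  obtain ⟨δ, hδ, hcoc⟩ := hc.coc
  obtain ⟨M, hM0, hM⟩ := ((cone_compact w hK).isBounded).exists_pos_norm_le
  let M' := M + ‖w‖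
  have hM' : 0 < M' := by positivity
  have e0 : (fun x : Fin (k+2) → (Fin (k+1) → ℝ) => c (fun j => h (x j))) = fun x => c (fun j => scl w 1 (h (x j))) := by
    simp [scl]
  rw [e0]
  apply step_const (fun σ => I (fun x => c (fun j => scl w σ (h (x j))))) hT (η := δ / 4 / M') (by positivity)
  intro t t' ht htT ht' htT' htt
  have hin : ∀ σ, 1 ≤ σ → ∀ x, scl w σ (h x) ∈ K → x ∈ S := by
    intro σ hσ x hx
    rw [← hhS]
    obtain ⟨y, hy, e⟩ := mem_cone w hσ hx
    exact ⟨σ⁻¹, ⟨by positivity, inv_le_one_of_one_le₀ hσ⟩, y, hy, e⟩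
  have huc : ∀ σ, UC (fun x => scl w σ (h x)) S (δ/4) := by
    intro σ
    apply UC_of_compact hS _ (by positivity)
    intro x hx
    have := hcont x hx
    unfold scl
    fun_prop
  apply coc_homotopy hc.supp hδ hcoc hS.isBounded (fun x => scl w t (h x)) (fun x => scl w t' (h x))
    (hin t ht) (hin t' ht') (huc t) (huc t')
  intro x hx
  rw [← hhS] at hx
  have h1 : scl w t (h x) - scl w t' (h x) = (t - t') • (h x - w) := by
    simp only [scl, sub_smul]; abel
  rw [dist_eq_norm, h1, norm_smul, Real.norm_eq_abs]
  have h2 : ‖h x - w‖ ≤ M' := (norm_sub_le _ _).trans (by have := hM _ hx; simp only [M']; linarith)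
  calc |t - t'| * ‖h x - w‖ ≤ |t - t'| * M' := by gcongr
    _ < δ / 4 / M' * M' := by gcongr
    _ = δ/4 := by field_simp

theorem scale {c : (Fin (k+2) → (Fin (k+1) → ℝ)) → ZMod p} {K S : Set (Fin (k+1) → ℝ)}
    (hc : Coc c K) (hK : IsCompact K) (w : Fin (k+1) → ℝ) (h : (Fin (k+1) → ℝ) → (Fin (k+1) → ℝ))
    (hS : IsCompact S) (hhS : ∀ x, h x ∈ cone w K ↔ x ∈ S) (hcont : ∀ x ∈ S, ContinuousAt h x)
    {ε : ℝ} (hε : 0 < ε) (hinj : Function.Injective h) (hfix : ∀ x ∈ Metric.ball w ε, h x = x) :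
    I (fun x => c (fun j => h (x j))) = I c := by
  obtain ⟨M, hM0, hM⟩ := (hK.isBounded).exists_pos_norm_le
  obtain ⟨T, hT1, hT2⟩ : ∃ T : ℝ, 1 ≤ T ∧ (M + ‖w‖) / ε < T :=
    ⟨max 1 ((M + ‖w‖) / ε + 1), le_max_left _ _, lt_of_lt_of_le (by linarith) (le_max_right _ _)⟩
  have hTp : 0 < T := by linarith
  have a1 := scale1 hc hK w h hS hhS hcont T hT1
  have a2 := scale1 hc hK w id (cone_compact w hK) (fun x => Iff.rfl) (fun x _ => continuousAt_id) T hT1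
  rw [a1]
  refine Eq.trans ?_ a2.symm
  congr 1
  ext x
  have hb : ∀ z, scl w T z ∈ K → z ∈ Metric.ball w ε := by
    intro z hz
    obtain ⟨y, hy, rfl⟩ := mem_cone w hT1 hz
    rw [mem_ball_iff_norm]
    have : scl w T⁻¹ y - w = T⁻¹ • (y - w) := by simp [scl]
    rw [this, norm_smul, norm_inv, Real.norm_eq_abs, abs_of_pos hTp]
    rw [div_lt_iff₀ hε] at hT2
    rw [inv_mul_lt_iff₀ hTp]
    have := norm_sub_le y w
    have := hM y hy
    linarith
  by_cases hall : ∀ j, h (x j) = x j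
  · simp [hall]
  · push Not at hall
    obtain ⟨j, hj⟩ := hall
    have e1 : c (fun j => scl w T (h (x j))) = 0 := by
      by_contra hne
      exact hj (hinj (hfix _ (hb _ (hc.supp _ hne j))))
    have e2 : c (fun j => scl w T (id (x j))) = 0 := by
      by_contra hne
      exact hj ((hfix _ (hb _ (hc.supp _ hne j))))
    rw [e1, e2]

end Mont

namespace Mont
open Filter
set_option autoImplicit false
variable {k p : ℕ}

theorem exists_pos_le {ι : Type*} [Finite ι] (f : ι → ℝ) (hf : ∀ i, 0 < f i) :
    ∃ θ > 0, ∀ i, θ ≤ f i := by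
  rcases isEmpty_or_nonempty ι with h | h
  · exact ⟨1, one_pos, fun i => h.elim i⟩
  · obtain ⟨i, hi⟩ := Finite.exists_min f
    exact ⟨f i, hf i, hi⟩

theorem exists_mis (q : ℝ) (y : Fin (k+1) → ℝ) :
    ∃ j : Fin (k+2), ∀ i, ∀ m : ℤ, ⌊y i / q⌋ ≠ m * (k+2) + (j:ℕ) := by
  by_contra hcon
  push Not at hcon
  choose i m him using hcon
  have hinj : Function.Injective i := by
    intro a b hab
    have h1 := him a
    have h2 := him b
    rw [hab] at h1
    rw [h1] at h2
    have ha := a.2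
    have hb := b.2
    have h3 := congrArg (· % ((k:ℤ)+2)) h2
    simp only [Int.add_comm _ ((_ : ℕ) : ℤ), Int.add_mul_emod_self_right] at h3
    rw [Int.emod_eq_of_lt (by positivity) (by omega), Int.emod_eq_of_lt (by positivity) (by omega)] at h3
    ext
    exact_mod_cast h3
  have := Fintype.card_le_of_injective i hinj
  simp at this

/-- a missed residue -/
noncomputable def mis (q : ℝ) (y : Fin (k+1) → ℝ) : Fin (k+2) := (exists_mis q y).choose

theorem mis_spec (q : ℝ) (y : Fin (k+1) → ℝ) (i) (m : ℤ) : ⌊y i / q⌋ ≠ m * (k+2) + (mis q y : ℕ) :=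
  (exists_mis q y).choose_spec i m

/-- the rounding -/
noncomputable def rd (q : ℝ) (y : Fin (k+1) → ℝ) : Fin (k+1) → ℝ :=
  fun i => q * ((k+2) * ⌊(y i / q - (mis q y : ℕ) - 1/2) / ((k:ℝ)+2)⌋)

theorem rd_dist {q : ℝ} (hq : 0 < q) (y : Fin (k+1) → ℝ) : dist (rd q y) y ≤ q * (2 * (k+2)) := by
  rw [dist_pi_le_iff (by positivity)]
  intro i
  rw [Real.dist_eq]
  set t := y i / q with ht
  have hy : y i = q * t := by rw [ht]; field_simp
  have hk : (0:ℝ) < k + 2 := by positivity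
  have h1 := Int.floor_le ((t - (mis q y : ℕ) - 1/2) / ((k:ℝ)+2))
  have h2 := Int.lt_floor_add_one ((t - (mis q y : ℕ) - 1/2) / ((k:ℝ)+2))
  rw [le_div_iff₀ hk] at h1
  rw [div_lt_iff₀ hk] at h2
  have h3 : ((mis q y : ℕ) : ℝ) ≤ k + 1 := by
    have := (mis q y).2
    exact_mod_cast Nat.lt_succ_iff.1 this
  have h4 : (0:ℝ) ≤ ((mis q y : ℕ) : ℝ) := by positivity
  unfold rd
  rw [← ht, hy, ← mul_sub, abs_mul, abs_of_pos hq]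
  gcongr
  rw [abs_le]
  constructor <;> nlinarith

theorem floor_aux {t t' : ℝ} (j : ℕ) (h : |t - t'| < 1) (ht : ∀ m : ℤ, ⌊t⌋ ≠ m * (k+2) + j)
    (ht' : ∀ m : ℤ, ⌊t'⌋ ≠ m * (k+2) + j) :
    ⌊(t' - j - 1/2) / ((k:ℝ)+2)⌋ ≤ ⌊(t - j - 1/2) / ((k:ℝ)+2)⌋ := by
  by_contra hcon
  rw [not_le] at hcon
  have hk : (0:ℝ) < k + 2 := by positivity
  set m := ⌊(t' - j - 1/2) / ((k:ℝ)+2)⌋ with hm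
  have h1 : (m:ℝ) ≤ (t' - j - 1/2) / ((k:ℝ)+2) := Int.floor_le _
  rw [Int.floor_lt, div_lt_iff₀ hk] at hcon
  rw [le_div_iff₀ hk] at h1
  have a1 : m * (k+2) + j ≤ ⌊t'⌋ := by
    rw [Int.le_floor]
    push_cast
    linarith
  have a2 : m * (k+2) + j + 1 ≤ ⌊t'⌋ := by
    have := ht' m
    omega
  rw [Int.le_floor] at a2
  push_cast at a2
  rw [abs_lt] at h
  apply ht m
  rw [Int.floor_eq_iff]
  push_cast
  constructor <;> linarith

theorem rd_key {q : ℝ} (hq : 0 < q) (y : Fin (k+2) → (Fin (k+1) → ℝ))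
    (hy : ∀ a b, dist (y a) (y b) < q) (i0 : Fin (k+1)) (h0 : ∀ a b, ⌊y a i0 / q⌋ = ⌊y b i0 / q⌋) :
    ¬ Function.Injective (fun a => rd q (y a)) := by
  intro hinj
  have h1 : ¬ Function.Injective (fun a => mis q (y a)) := by
    intro hi
    have hs := Finite.surjective_of_injective hi
    have hk : (0:ℤ) < (k:ℤ) + 2 := by positivity
    have e1 := Int.emod_nonneg ⌊y 0 i0 / q⌋ hk.ne'
    have e2 := Int.emod_lt_of_pos ⌊y 0 i0 / q⌋ hk
    obtain ⟨a, ha⟩ := hs ⟨(⌊y 0 i0 / q⌋ % ((k:ℤ)+2)).toNat, by omega⟩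
    apply mis_spec q (y a) i0 (⌊y 0 i0 / q⌋ / ((k:ℤ)+2))
    rw [show mis q (y a) = _ from ha, h0 a 0]
    simp only
    rw [Int.toNat_of_nonneg e1]
    have := Int.emod_add_mul_ediv ⌊y 0 i0 / q⌋ ((k:ℤ)+2)
    linarith
  simp only [Function.Injective] at h1
  push Not at h1
  obtain ⟨a, b, hab, hne⟩ := h1
  apply hne
  apply hinj
  ext i
  have key : ∀ a b, mis q (y a) = mis q (y b) →
    ⌊(y b i / q - (mis q (y b) : ℕ) - 1/2) / ((k:ℝ)+2)⌋ ≤ ⌊(y a i / q - (mis q (y a) : ℕ) - 1/2) / ((k:ℝ)+2)⌋ := by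
    intro a b hab
    rw [hab]
    apply floor_aux
    · rw [← sub_div, abs_div, abs_of_pos hq, div_lt_one hq]
      exact lt_of_le_of_lt (dist_le_pi_dist (y a) (y b) i) (hy a b)
    · rw [← hab]
      exact mis_spec q (y a) i
    · exact mis_spec q (y b) i
  have : ⌊(y b i / q - (mis q (y b) : ℕ) - 1/2) / ((k:ℝ)+2)⌋ = ⌊(y a i / q - (mis q (y a) : ℕ) - 1/2) / ((k:ℝ)+2)⌋ :=
    le_antisymm (key a b hab) (key b a hab.symm)
  show q * _ = q * _
  rw [this]

/-- good radii: box walls avoid the grid, with room θ -/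
theorem exists_wall {q : ℝ} (hq : 0 < q) (x1 : Fin (k+1) → ℝ) {a b : ℝ} (hab : a < b) :
    ∃ s θ, a < s ∧ s < b ∧ 0 < θ ∧ ∀ i t t', (|t - (x1 i + s)| < θ ∨ |t - (x1 i - s)| < θ) →
      (|t - t'| < θ) → ⌊t / q⌋ = ⌊t' / q⌋ := by
  have hc : (⋃ i : Fin (k+1), ⋃ m : ℤ, ({m * q - x1 i, x1 i - m * q} : Set ℝ)).Countable := by
    apply Set.countable_iUnion
    intro i
    apply Set.countable_iUnion
    intro m
    exact (Set.toFinite _).countable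
  obtain ⟨s, hs, has, hsb⟩ := (hc.dense_compl ℝ).exists_between hab
  simp only [Set.mem_compl_iff, Set.mem_iUnion, Set.mem_insert_iff, Set.mem_singleton_iff, not_exists, not_or] at hs
  have loc : ∀ u : ℝ, (∀ m : ℤ, u ≠ m * q) → ∃ θ > 0, ∀ t, |t - u| < θ → ⌊t/q⌋ = ⌊u/q⌋ := by
    intro u hu
    have h1 : (⌊u/q⌋ : ℝ) < u/q := by
      refine lt_of_le_of_ne (Int.floor_le _) ?_
      intro h
      apply hu ⌊u/q⌋
      rw [h]; field_simp
    have h2 := Int.lt_floor_add_one (u/q)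
    have : ∀ᶠ t in nhds u, (⌊u/q⌋:ℝ) < t/q ∧ t/q < ⌊u/q⌋ + 1 := by
      have hcont : ContinuousAt (fun t : ℝ => t / q) u := by fun_prop
      exact (hcont.eventually (lt_mem_nhds h1)).and (hcont.eventually (gt_mem_nhds h2))
    obtain ⟨θ, hθ, h⟩ := Metric.eventually_nhds_iff.1 this
    refine ⟨θ, hθ, fun t ht => ?_⟩
    have := h (y := t) ht
    rw [Int.floor_eq_iff]
    exact ⟨this.1.le, this.2⟩
  have l1 := fun i => loc (x1 i + s) (fun m hm => (hs i m).1 (by linarith))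
  have l2 := fun i => loc (x1 i - s) (fun m hm => (hs i m).2 (by linarith))
  choose θ1 hθ1 h1 using l1
  choose θ2 hθ2 h2 using l2
  have hall : ∃ θ > 0, ∀ i, θ ≤ θ1 i ∧ θ ≤ θ2 i := by
    obtain ⟨θ, hθ, h⟩ := exists_pos_le (fun i => min (θ1 i) (θ2 i)) (fun i => lt_min (hθ1 i) (hθ2 i))
    exact ⟨θ, hθ, fun i => ⟨(h i).trans (min_le_left _ _), (h i).trans (min_le_right _ _)⟩⟩
  obtain ⟨θ, hθ, hle⟩ := hall
  refine ⟨s, θ/2, has, hsb, by positivity, ?_⟩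
  intro i t t' ht htt
  have := hle i
  rw [abs_sub_comm] at htt
  rcases ht with ht | ht
  · rw [h1 i t (by linarith), h1 i t' (by have := abs_sub_le t' t (x1 i + s); linarith)]
  · rw [h2 i t (by linarith), h2 i t' (by have := abs_sub_le t' t (x1 i - s); linarith)]

end Mont

namespace Mont
open Filter
set_option autoImplicit false
variable {k p : ℕ}

/-- periodic action on an open set -/
structure Act (g : Equiv.Perm (Fin (k+1) → ℝ)) (U : Set (Fin (k+1) → ℝ)) (p : ℕ) : Prop where
  opn : IsOpen U
  maps : ∀ (j : ℤ) x, x ∈ U → (g^j) x ∈ U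
  cont : ∀ (j : ℤ) x, x ∈ U → ContinuousAt (g^j) x
  per : g^p = 1

theorem Act.range {g : Equiv.Perm (Fin (k+1) → ℝ)} {U : Set (Fin (k+1) → ℝ)} (h : Act g U p) (hp : 0 < p)
    (j : ℤ) : ∃ m : Fin p, g^j = g^((m:ℕ):ℤ) := by
  have h1 : g^(p:ℤ) = 1 := by rw [zpow_natCast]; exact h.per
  have e1 := Int.emod_nonneg j (show (p:ℤ) ≠ 0 by omega)
  have e2 := Int.emod_lt_of_pos j (show 0 < (p:ℤ) by omega)
  refine ⟨⟨(j % p).toNat, by omega⟩, ?_⟩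
  rw [zpow_eq_zpow_emod j h1]
  simp only
  rw [Int.toNat_of_nonneg e1]

theorem zp (g : Equiv.Perm (Fin (k+1) → ℝ)) (i j : ℤ) (x) : (g^i) ((g^j) x) = (g^(i+j)) x := by
  rw [zpow_add]; rfl

theorem zp0 (g : Equiv.Perm (Fin (k+1) → ℝ)) (x) : (g^(0:ℤ)) x = x := by simp

theorem Act.uc {g : Equiv.Perm (Fin (k+1) → ℝ)} {U S : Set (Fin (k+1) → ℝ)} (h : Act g U p) (hp : 0 < p)
    (hS : IsCompact S) (hSU : S ⊆ U) {η : ℝ} (hη : 0 < η) :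
    ∃ δ > 0, ∀ j : ℤ, ∀ a ∈ S, ∀ b, dist a b < δ → dist ((g^j) a) ((g^j) b) < η := by
  have h1 := fun m : Fin p => UC_of_compact hS (fun x hx => h.cont (m:ℕ) x (hSU hx)) hη
  choose δ hδ h2 using h1
  obtain ⟨θ, hθ, hle⟩ := exists_pos_le δ hδ
  refine ⟨θ, hθ, fun j a ha b hab => ?_⟩
  obtain ⟨m, hm⟩ := h.range hp j
  rw [hm]
  exact h2 m a ha b (hab.trans_le (hle m))

/-- union of all translates -/
def orb (g : Equiv.Perm (Fin (k+1) → ℝ)) (A : Set (Fin (k+1) → ℝ)) : Set (Fin (k+1) → ℝ) :=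
  {x | ∃ j : ℤ, (g^j) x ∈ A}

theorem sub_orb (g : Equiv.Perm (Fin (k+1) → ℝ)) (A : Set (Fin (k+1) → ℝ)) : A ⊆ orb g A :=
  fun x hx => ⟨0, by simpa using hx⟩

theorem orb_inv (g : Equiv.Perm (Fin (k+1) → ℝ)) (A : Set (Fin (k+1) → ℝ)) (j : ℤ) (x) :
    (g^j) x ∈ orb g A ↔ x ∈ orb g A := by
  constructor
  · rintro ⟨i, hi⟩
    exact ⟨i + j, by rwa [← zp]⟩
  · rintro ⟨i, hi⟩
    exact ⟨i - j, by rw [zp]; simpa using hi⟩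

theorem Act.orb_open {g : Equiv.Perm (Fin (k+1) → ℝ)} {U A : Set (Fin (k+1) → ℝ)} (h : Act g U p)
    (hA : IsOpen A) (hAU : A ⊆ U) : IsOpen (orb g A) := by
  rw [isOpen_iff_mem_nhds]
  rintro x ⟨j, hj⟩
  have hx : x ∈ U := by
    have := h.maps (-j) _ (hAU hj)
    rw [zp] at this
    simpa using this
  filter_upwards [(h.cont j x hx).eventually_mem (hA.mem_nhds hj)] with y hy
  exact ⟨j, hy⟩

theorem Act.orb_compact {g : Equiv.Perm (Fin (k+1) → ℝ)} {U A : Set (Fin (k+1) → ℝ)} (h : Act g U p)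
    (hp : 0 < p) (hA : IsCompact A) (hAU : A ⊆ U) : IsCompact (orb g A) := by
  have : orb g A = ⋃ m : Fin p, (g^((m:ℕ):ℤ)) '' A := by
    ext x
    simp only [orb, Set.mem_ofPred_eq, Set.mem_iUnion, Set.mem_image]
    constructor
    · rintro ⟨j, hj⟩
      obtain ⟨m, hm⟩ := h.range hp (-j)
      refine ⟨m, _, hj, ?_⟩
      rw [← hm, zp]
      simp
    · rintro ⟨m, y, hy, rfl⟩
      refine ⟨-((m:ℕ):ℤ), ?_⟩
      rw [zp]
      simpa using hy
  rw [this]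
  apply isCompact_iUnion
  intro m
  exact hA.image_of_continuousOn fun x hx => (h.cont _ x (hAU hx)).continuousWithinAt

/-- equivariant rounding -/
noncomputable def rho (g : Equiv.Perm (Fin (k+1) → ℝ)) (B : Set (Fin (k+1) → ℝ)) (q : ℝ)
    (x : Fin (k+1) → ℝ) : Fin (k+1) → ℝ := by
  classical
  exact if h : ∃ j : ℤ, (g^j) x ∈ B then (g^(-h.choose)) (rd q ((g^h.choose) x)) else x

/-- translates are disjoint -/
def Disj (g : Equiv.Perm (Fin (k+1) → ℝ)) (B : Set (Fin (k+1) → ℝ)) : Prop :=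
  ∀ y ∈ B, ∀ j : ℤ, (g^j) y ∈ B → g^j = 1

theorem Disj.eq {g : Equiv.Perm (Fin (k+1) → ℝ)} {B : Set (Fin (k+1) → ℝ)} (hB : Disj g B) {i j : ℤ} {x}
    (hi : (g^i) x ∈ B) (hj : (g^j) x ∈ B) : g^i = g^j := by
  have h1 : g^(j - i) = 1 := by
    apply hB _ hi
    rw [zp]
    simpa using hj
  rw [zpow_sub, mul_inv_eq_one] at h1
  exact h1.symm

theorem rho_eq {g : Equiv.Perm (Fin (k+1) → ℝ)} {B : Set (Fin (k+1) → ℝ)} (q : ℝ) (hB : Disj g B) {j : ℤ} {x}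
    (hj : (g^j) x ∈ B) : rho g B q x = (g^(-j)) (rd q ((g^j) x)) := by
  have h : ∃ j : ℤ, (g^j) x ∈ B := ⟨j, hj⟩
  unfold rho
  rw [dif_pos h]
  have := hB.eq h.choose_spec hj
  rw [zpow_neg, this, zpow_neg]

theorem rho_equi {g : Equiv.Perm (Fin (k+1) → ℝ)} {B : Set (Fin (k+1) → ℝ)} (q : ℝ) (hB : Disj g B) (m : ℤ) (x) :
    rho g B q ((g^m) x) = (g^m) (rho g B q x) := by
  by_cases h : ∃ j : ℤ, (g^j) x ∈ B
  · obtain ⟨j, hj⟩ := h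
    rw [rho_eq q hB hj, rho_eq (j := j - m) q hB (by rw [zp]; simpa using hj), zp, zp]
    congr 2
    · congr 1; ring
    · congr 2; ring_nf
  · have h2 : ¬ ∃ j : ℤ, (g^j) ((g^m) x) ∈ B := by
      rintro ⟨j, hj⟩
      exact h ⟨j + m, by rwa [← zp]⟩
    unfold rho
    rw [dif_neg h, dif_neg h2]

theorem rho_close {g : Equiv.Perm (Fin (k+1) → ℝ)} {U B S : Set (Fin (k+1) → ℝ)} (h : Act g U p) (hp : 0 < p)
    (hB : Disj g B) (hBS : B ⊆ S) (hS : IsCompact S) (hSU : S ⊆ U) {ε : ℝ} (hε : 0 < ε) :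
    ∃ q > 0, ∀ x, dist (rho g B q x) x < ε := by
  obtain ⟨δ, hδ, huc⟩ := h.uc hp hS hSU hε
  have hk : (0:ℝ) < 2 * (k+2) := by positivity
  refine ⟨δ / 2 / (2 * (k+2)), by positivity, fun x => ?_⟩
  by_cases h : ∃ j : ℤ, (g^j) x ∈ B
  · obtain ⟨j, hj⟩ := h
    rw [rho_eq _ hB hj]
    have h1 := rd_dist (q := δ / 2 / (2 * (k+2))) (by positivity) ((g^j) x)
    rw [div_mul_cancel₀ _ hk.ne', dist_comm] at h1
    have h2 := huc (-j) _ (hBS hj) _ (h1.trans_lt (by linarith))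
    rw [dist_comm, zp] at h2
    simpa using h2
  · unfold rho
    rw [dif_neg h]
    simpa using hε

theorem wall0 {g : Equiv.Perm (Fin (k+1) → ℝ)} {x1 : Fin (k+1) → ℝ} {r q : ℝ} (hr : 0 < r) (hq : 0 < q)
    (hB : Disj g (Metric.ball x1 (2*r))) (c : (Fin (k+2) → (Fin (k+1) → ℝ)) → ZMod p)
    (hinj : ∀ x, c x ≠ 0 → Function.Injective x) :
    ∃ s θ, r < s ∧ s < 2*r ∧ 0 < θ ∧ ∀ a ∈ Metric.ball x1 s, ∀ b, b ∉ Metric.ball x1 s → dist a b < θ →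
      ∀ x : Fin (k+2) → (Fin (k+1) → ℝ), (∀ i, dist (x i) a < θ) →
        c (fun i => rho g (Metric.ball x1 (2*r)) q (x i)) = 0 := by
  obtain ⟨s, θ0, hs1, hs2, hθ0, hw⟩ := exists_wall hq x1 (show r < 2*r by linarith)
  refine ⟨s, min θ0 (min (q/2) (2*r-s)), hs1, hs2, by
    have : 0 < 2*r - s := by linarith
    positivity, ?_⟩
  intro a ha b hb hab x hx
  by_contra hne
  have hi := hinj _ hne
  rw [lt_min_iff] at hab
  have hx1 : ∀ i, dist (x i) a < θ0 := fun i => (hx i).trans_le (min_le_left _ _)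
  have hx2 : ∀ i, dist (x i) a < q/2 := fun i => (hx i).trans_le ((min_le_right _ _).trans (min_le_left _ _))
  have hx3 : ∀ i, dist (x i) a < 2*r-s := fun i => (hx i).trans_le ((min_le_right _ _).trans (min_le_right _ _))
  have e : ∀ i, rho g (Metric.ball x1 (2*r)) q (x i) = rd q (x i) := by
    intro i
    have : (g^(0:ℤ)) (x i) ∈ Metric.ball x1 (2*r) := by
      rw [zp0, Metric.mem_ball]
      rw [Metric.mem_ball] at ha
      have := dist_triangle (x i) a x1
      linarith [hx3 i]
    rw [rho_eq q hB this]
    simp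
  simp only [e] at hi
  have hbi : ∃ i, s ≤ |b i - x1 i| := by
    by_contra hcon
    push Not at hcon
    apply hb
    rw [Metric.mem_ball, dist_pi_lt_iff (by linarith)]
    exact hcon
  obtain ⟨i0, hi0⟩ := hbi
  have hai : |a i0 - x1 i0| < s := lt_of_le_of_lt (dist_le_pi_dist a x1 i0) ha
  have habi : |a i0 - b i0| < θ0 := lt_of_le_of_lt (dist_le_pi_dist a b i0) hab.1
  have hf : ∀ j, ⌊a i0 / q⌋ = ⌊x j i0 / q⌋ := by
    intro j
    apply hw i0
    · rw [abs_lt] at hai habi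
      rcases le_abs.1 hi0 with h | h
      · left; rw [abs_lt]; constructor <;> linarith
      · right; rw [abs_lt]; constructor <;> linarith
    · rw [abs_sub_comm]
      exact lt_of_le_of_lt (dist_le_pi_dist (x j) a i0) (hx1 j)
  refine rd_key hq x (fun i j => ?_) i0 (fun i j => by rw [← hf i, ← hf j]) hi
  have := dist_triangle_right (x i) (x j) a
  linarith [hx2 i, hx2 j]

end Mont

namespace Mont
open Filter
set_option autoImplicit false
variable {k p : ℕ}

theorem face_zero {X R : Type*} [CommRing R] {m : ℕ} {c : (Fin m → X) → R} {x : Fin (m+1) → X}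
    (h : ∀ i : Fin (m+1), c (fun j => x (i.succAbove j)) = 0) : cob c x = 0 := by
  unfold cob
  exact Finset.sum_eq_zero fun i _ => by rw [h i, mul_zero]

/-- a ball with disjoint translates -/
structure GoodBall (g : Equiv.Perm (Fin (k+1) → ℝ)) (Q : Set (Fin (k+1) → ℝ)) (x1 : Fin (k+1) → ℝ) (r : ℝ) : Prop where
  pos : 0 < r
  sub : ∀ y ∈ Metric.closedBall x1 (2*r), ∀ j : ℤ, (g^j) y ∈ Q
  disj : Disj g (Metric.ball x1 (2*r))

/-- localization of a cochain -/
noncomputable def loc (c : (Fin (k+2) → (Fin (k+1) → ℝ)) → ZMod p) (W : Set (Fin (k+1) → ℝ))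
    (x : Fin (k+2) → (Fin (k+1) → ℝ)) : ZMod p := by
  classical
  exact if ∀ i, x i ∈ W then c x else 0

theorem loc_pos {c : (Fin (k+2) → (Fin (k+1) → ℝ)) → ZMod p} {W : Set (Fin (k+1) → ℝ)}
    {x : Fin (k+2) → (Fin (k+1) → ℝ)} (h : ∀ i, x i ∈ W) : loc c W x = c x := by
  unfold loc; rw [if_pos h]

theorem loc_neg {c : (Fin (k+2) → (Fin (k+1) → ℝ)) → ZMod p} {W : Set (Fin (k+1) → ℝ)}
    {x : Fin (k+2) → (Fin (k+1) → ℝ)} (i) (h : x i ∉ W) : loc c W x = 0 := by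
  unfold loc; rw [if_neg (fun h' => h (h' i))]

theorem loc_zero {c : (Fin (k+2) → (Fin (k+1) → ℝ)) → ZMod p} {W : Set (Fin (k+1) → ℝ)}
    {x : Fin (k+2) → (Fin (k+1) → ℝ)} (h : c x = 0) : loc c W x = 0 := by
  unfold loc; split_ifs <;> simp [h]

theorem loc_ne {c : (Fin (k+2) → (Fin (k+1) → ℝ)) → ZMod p} {W : Set (Fin (k+1) → ℝ)}
    {x : Fin (k+2) → (Fin (k+1) → ℝ)} (h : loc c W x ≠ 0) : (∀ i, x i ∈ W) ∧ c x ≠ 0 := by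
  by_cases h2 : ∀ i, x i ∈ W
  · exact ⟨h2, by rwa [loc_pos h2] at h⟩
  · push Not at h2
    obtain ⟨i, hi⟩ := h2
    exact absurd (loc_neg i hi) h

/-- wall condition -/
def Wall (c : (Fin (k+2) → (Fin (k+1) → ℝ)) → ZMod p) (W : Set (Fin (k+1) → ℝ)) (θ : ℝ) : Prop :=
  ∀ a ∈ W, ∀ b, b ∉ W → dist a b < θ →
      ∀ x : Fin (k+2) → (Fin (k+1) → ℝ), (∀ i, dist (x i) a < θ) → c x = 0

theorem loc_coc {c : (Fin (k+2) → (Fin (k+1) → ℝ)) → ZMod p} {K W K' : Set (Fin (k+1) → ℝ)} (hc : Coc c K)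
    {θ : ℝ} (hθ : 0 < θ) (hW : Wall c W θ) (hK : ∀ x ∈ K, x ∈ W → x ∈ K') : Coc (loc c W) K' := by
  refine ⟨fun x hx i => ?_, ?_, fun x hx => hc.inj x (loc_ne hx).2⟩
  · exact hK _ (hc.supp x (loc_ne hx).2 i) ((loc_ne hx).1 i)
  · obtain ⟨δ, hδ, h⟩ := hc.coc
    refine ⟨min δ θ, by positivity, fun x hx => ?_⟩
    by_cases h1 : ∃ i, x i ∈ W
    · obtain ⟨i, hi⟩ := h1
      by_cases h2 : ∃ j, x j ∉ W
      · obtain ⟨j, hj⟩ := h2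
        apply face_zero
        intro l
        apply loc_zero
        exact hW (x i) hi (x j) hj ((hx _ _).trans_le (min_le_right _ _)) _
          (fun _ => (hx _ _).trans_le (min_le_right _ _))
      · push Not at h2
        rw [← h x (sm_mono (min_le_left _ _) hx)]
        apply cob_congr
        intro l
        exact loc_pos fun _ => h2 _
    · push Not at h1
      apply face_zero
      intro l
      exact loc_neg 0 (h1 _)

theorem Wall.compl {c : (Fin (k+2) → (Fin (k+1) → ℝ)) → ZMod p} {W : Set (Fin (k+1) → ℝ)} {θ : ℝ} (hW : Wall c W θ) :
    Wall c Wᶜ (θ/2) := by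
  intro a ha b hb hab x hx
  rw [Set.mem_compl_iff, not_not] at hb
  have h0 : 0 < θ/2 := dist_nonneg.trans_lt hab
  refine hW b hb a ha (by rw [dist_comm]; linarith) x fun i => ?_
  have := dist_triangle (x i) a b
  linarith [hx i]

theorem piece_step {g : Equiv.Perm (Fin (k+1) → ℝ)} {U Q : Set (Fin (k+1) → ℝ)} (h : Act g U p) (hp : 0 < p)
    (hord : ∀ m m' : Fin p, g^((m:ℕ):ℤ) = g^((m':ℕ):ℤ) → m = m')
    (hQ : Convex ℝ Q) (hQU : Q ⊆ U) (w : Fin (k+1) → ℝ) (hw : w ∈ Q) {ε : ℝ} (hε : 0 < ε)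
    (hfix : ∀ x ∈ Metric.ball w ε, ∀ j : ℤ, (g^j) x = x)
    {x1 : Fin (k+1) → ℝ} {r : ℝ} (hgood : GoodBall g Q x1 r) (O : Set (Fin (k+1) → ℝ)) (hO : IsOpen O)
    (hOU : O ⊆ U) (hOinv : ∀ (j:ℤ) x, x ∈ O → (g^j) x ∈ O)
    (IH : ∀ (c : (Fin (k+2) → (Fin (k+1) → ℝ)) → ZMod p) (K : Set (Fin (k+1) → ℝ)), Coc c K → IsCompact K →
      (∀ (j:ℤ) x, x ∈ K → (g^j) x ∈ K) → (∀ (j:ℤ) x, c (fun i => (g^j) (x i)) = c x) → K ⊆ O → I c = 0)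
    (c : (Fin (k+2) → (Fin (k+1) → ℝ)) → ZMod p) (K : Set (Fin (k+1) → ℝ)) (hc : Coc c K) (hK : IsCompact K)
    (hcinv : ∀ (j:ℤ) x, c (fun i => (g^j) (x i)) = c x)
    (hKO : K ⊆ orb g (Metric.ball x1 r) ∪ O) : I c = 0 := by
  have hr := hgood.pos
  have hcb : Metric.closedBall x1 (2*r) ⊆ U := fun y hy => hQU (by simpa using hgood.sub y hy 0)
  have hB := hgood.disj
  set B := Metric.ball x1 (2*r) with hBdef
  have hbU : Metric.ball x1 r ⊆ U := fun y hy => hcb (Metric.closedBall_subset_closedBall (by linarith) (Metric.ball_subset_closedBall hy))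
  -- compact neighbourhood
  have hOO : IsOpen (orb g (Metric.ball x1 r) ∪ O) := (h.orb_open Metric.isOpen_ball hbU).union hO
  have hOOU : orb g (Metric.ball x1 r) ∪ O ⊆ U := by
    rintro x (⟨j, hj⟩ | hx)
    · have := h.maps (-j) _ (hbU hj)
      rw [zp] at this
      simpa using this
    · exact hOU hx
  obtain ⟨K1, hK1, hKK1, hK1O⟩ := exists_compact_between hK hOO hKO
  obtain ⟨ε1, hε1, hth⟩ := hK.exists_thickening_subset_open isOpen_interior hKK1
  set K2 := orb g K1 with hK2def
  have hK2 : IsCompact K2 := h.orb_compact hp hK1 (hK1O.trans hOOU)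
  have hK12 : K1 ⊆ K2 := sub_orb g K1
  have hK2O : K2 ⊆ orb g (Metric.ball x1 r) ∪ O := by
    rintro x ⟨j, hj⟩
    rcases hK1O hj with h1 | h1
    · left; exact (orb_inv g _ j x).1 h1
    · right
      have := hOinv (-j) _ h1
      rw [zp] at this
      simpa using this
  -- rounding
  obtain ⟨δ, hδ, hcoc⟩ := hc.coc
  obtain ⟨q, hq, hclose⟩ := rho_close h hp hB Metric.ball_subset_closedBall (isCompact_closedBall x1 (2*r)) hcb
    (show 0 < min ε1 (δ/12) by positivity)
  set ρ := rho g B q with hρ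
  have hcl1 : ∀ x, dist (ρ x) x < ε1 := fun x => (hclose x).trans_le (min_le_left _ _)
  have hcl2 : ∀ x, dist (ρ x) x < δ/12 := fun x => (hclose x).trans_le (min_le_right _ _)
  have hρK : ∀ x, ρ x ∈ K → x ∈ K2 := by
    intro x hx
    apply hK12
    apply interior_subset
    apply hth
    rw [Metric.mem_thickening_iff]
    exact ⟨_, hx, by rw [dist_comm]; exact hcl1 x⟩
  have hρd : ∀ a b, dist (ρ a) (ρ b) < dist a b + δ/6 := by
    intro a b
    have h1 := dist_triangle4 (ρ a) a b (ρ b)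
    have h2 := hcl2 a
    have h3 := hcl2 b
    rw [dist_comm] at h3
    linarith
  set c' : (Fin (k+2) → (Fin (k+1) → ℝ)) → ZMod p := fun x => c (fun i => ρ (x i)) with hc'
  have hI1 : I c = I c' := by
    apply coc_homotopy hc.supp hδ hcoc hK2.isBounded id ρ
    · intro x hx
      exact hK12 (interior_subset (hKK1 hx))
    · exact hρK
    · exact ⟨δ/4, by positivity, fun a _ b hab => hab⟩
    · exact ⟨δ/12, by positivity, fun a _ b hab => by linarith [hρd a b]⟩
    · intro x _
      rw [dist_comm]
      show dist (ρ x) x < _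
      linarith [hcl2 x]
  have hc'inv : ∀ (j:ℤ) x, c' (fun i => (g^j) (x i)) = c' x := by
    intro j x
    simp only [hc', hρ, rho_equi q hB]
    exact hcinv j _
  have hc'coc : Coc c' K2 := by
    refine ⟨fun x hx i => hρK _ (hc.supp _ hx i), ⟨δ/2, by positivity, fun x hx => ?_⟩, fun x hx => ?_⟩
    · apply hcoc (fun i => ρ (x i))
      intro i j
      linarith [hρd (x i) (x j), hx i j]
    · exact Function.Injective.of_comp (f := ρ) (hc.inj _ hx)
  obtain ⟨s, θ, hrs, hs2, hθ, hwall⟩ := wall0 hr hq hB c hc.inj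
  have hW : Wall c' (Metric.ball x1 s) θ := hwall
  set W := Metric.ball x1 s with hWdef
  have hWB : W ⊆ B := Metric.ball_subset_ball hs2.le
  have hWcb : W ⊆ Metric.closedBall x1 s := Metric.ball_subset_closedBall
  have hcbs : Metric.closedBall x1 s ⊆ U := fun y hy => hcb (Metric.closedBall_subset_closedBall hs2.le hy)
  have hDc := h.orb_compact hp (isCompact_closedBall x1 s) hcbs
  have hDU : orb g (Metric.closedBall x1 s) ⊆ U := by
    rintro x ⟨j, hj⟩
    have := h.maps (-j) _ (hcbs hj)
    rw [zp] at this
    simpa using this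
  obtain ⟨θ1, hθ1, huc⟩ := h.uc hp hDc hDU hθ
  obtain ⟨θ2, hθ2, huc2⟩ := h.uc hp hDc hDU (show 0 < 2*r - s by linarith)
  have hD : ∀ {x}, x ∈ orb g W → x ∈ orb g (Metric.closedBall x1 s) := fun ⟨j, hj⟩ => ⟨j, hWcb hj⟩
  have hWD : Wall c' (orb g W) θ1 := by
    rintro a ⟨j, hj⟩ b hb hab x hx
    rw [← hc'inv j]
    refine hW _ hj ((g^j) b) (fun hb' => hb ⟨j, hb'⟩) (huc j a (hD ⟨j, hj⟩) b hab) _ (fun i => ?_)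
    rw [dist_comm]
    exact huc j a (hD ⟨j, hj⟩) _ (by rw [dist_comm]; exact hx i)
  -- the two pieces
  have hI3 : I (loc c' (orb g W)ᶜ) = 0 := by
    apply IH _ (K2 \ orb g W)
    · apply loc_coc hc'coc (θ := θ1/2) (by positivity) hWD.compl
      intro x h1 h2
      exact ⟨h1, h2⟩
    · exact hK2.diff (h.orb_open Metric.isOpen_ball (hWcb.trans hcbs))
    · rintro j x ⟨h1, h2⟩
      exact ⟨(orb_inv g _ j x).2 h1, fun h3 => h2 ((orb_inv g _ j x).1 h3)⟩
    · intro j x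
      by_cases hx : ∀ i, x i ∈ (orb g W)ᶜ
      · rw [loc_pos hx, loc_pos, hc'inv]
        intro i h3
        exact hx i ((orb_inv g _ j _).1 h3)
      · push Not at hx
        obtain ⟨i, hi⟩ := hx
        rw [loc_neg i hi, loc_neg i]
        intro h3
        exact hi fun h4 => h3 ((orb_inv g _ j _).2 h4)
    · rintro x ⟨h1, h2⟩
      rcases hK2O h1 with ⟨j, hj⟩ | h3
      · exact absurd ⟨j, Metric.ball_subset_ball hrs.le hj⟩ h2
      · exact h3
  set b := loc c' W with hb
  have hbcoc : Coc b (Metric.closedBall x1 s) := loc_coc hc'coc hθ hW (fun x _ hx => hWcb hx)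
  have hIb : ∀ j : ℕ, I (fun x => b (fun i => (g^(j:ℤ)) (x i))) = I b := by
    intro j
    have hcone : cone w (Metric.closedBall x1 s) ⊆ U :=
      (cone_sub w hQ hw (fun y hy => by
        simpa using hgood.sub y (Metric.closedBall_subset_closedBall hs2.le hy) 0)).trans hQU
    apply scale hbcoc (isCompact_closedBall x1 s) w (⇑(g^(j:ℤ)))
      (S := (g^(-(j:ℤ))) '' (cone w (Metric.closedBall x1 s))) _ _ _ hε (Equiv.injective _)
      (fun x hx => hfix x hx j)
    · exact (cone_compact w (isCompact_closedBall x1 s)).image_of_continuousOn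
        fun x hx => (h.cont _ x (hcone hx)).continuousWithinAt
    · intro x
      constructor
      · intro hx
        refine ⟨_, hx, ?_⟩
        rw [zp]; simp
      · rintro ⟨y, hy, rfl⟩
        rw [zp]; simpa using hy
    · rintro _ ⟨y, hy, rfl⟩
      exact h.cont _ _ (h.maps _ _ (hcone hy))
  have hI2 : I (fun x => ∑ j : Fin p, b (fun i => (g^((j:ℕ):ℤ)) (x i))) = 0 := by
    rw [I_sum]
    simp only [hIb]
    simpa using I_nsmul b
  have hsplit : I c' = I (fun x => (∑ j : Fin p, b (fun i => (g^((j:ℕ):ℤ)) (x i))) + loc c' (orb g W)ᶜ x) := by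
    apply I_congr (δ := min θ1 θ2) (by positivity)
    intro x hx
    have hx1 : sm θ1 x := sm_mono (min_le_left _ _) hx
    have hx2 : sm θ2 x := sm_mono (min_le_right _ _) hx
    by_cases h1 : ∃ i, x i ∈ orb g W
    · obtain ⟨i, hi⟩ := h1
      rw [loc_neg i (Set.notMem_compl_iff.2 hi), add_zero]
      by_cases h2 : ∃ j, x j ∉ orb g W
      · obtain ⟨j, hj⟩ := h2
        have hz := hWD _ hi _ hj (hx1 _ _) x (fun l => hx1 l i)
        rw [hz]
        symm
        apply Finset.sum_eq_zero
        intro l _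
        apply loc_zero
        rw [hc'inv, hz]
      · push Not at h2
        obtain ⟨j0, hj0⟩ := hi
        obtain ⟨m, hm⟩ := h.range hp j0
        rw [hm] at hj0
        have hall : ∀ l, (g^((m:ℕ):ℤ)) (x l) ∈ W := by
          intro l
          obtain ⟨j1, hj1⟩ := h2 l
          have h3 := huc2 (m:ℕ) (x i) (hD ⟨_, hj0⟩) (x l) (hx2 i l)
          have h4 : (g^((m:ℕ):ℤ)) (x l) ∈ B := by
            rw [hBdef, Metric.mem_ball]
            rw [hWdef, Metric.mem_ball] at hj0
            rw [dist_comm] at h3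
            have := dist_triangle ((g^((m:ℕ):ℤ)) (x l)) ((g^((m:ℕ):ℤ)) (x i)) x1
            linarith
          rw [hB.eq h4 (hWB hj1)]
          exact hj1
        rw [Finset.sum_eq_single m]
        · rw [hb, loc_pos hall, hc'inv]
        · intro m' _ hm'
          apply loc_neg i
          intro h5
          exact hm' (hord _ _ (hB.eq (hWB h5) (hWB hj0)))
        · simp
    · push Not at h1
      rw [loc_pos (fun i => h1 i), Finset.sum_eq_zero, zero_add]
      intro j _
      apply loc_neg 0
      intro h3
      exact h1 0 ⟨_, h3⟩
  rw [hI1, hsplit, I_add, hI2, hI3, add_zero]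

end Mont

namespace Mont
open Filter
set_option autoImplicit false
variable {k p : ℕ}

theorem pieces {g : Equiv.Perm (Fin (k+1) → ℝ)} {U Q : Set (Fin (k+1) → ℝ)} (h : Act g U p) (hp : 0 < p)
    (hord : ∀ m m' : Fin p, g^((m:ℕ):ℤ) = g^((m':ℕ):ℤ) → m = m')
    (hQ : Convex ℝ Q) (hQU : Q ⊆ U) (w : Fin (k+1) → ℝ) (hw : w ∈ Q) {ε : ℝ} (hε : 0 < ε)
    (hfix : ∀ x ∈ Metric.ball w ε, ∀ j : ℤ, (g^j) x = x) (r : (Fin (k+1) → ℝ) → ℝ)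
    (t : Finset (Fin (k+1) → ℝ)) (ht : ∀ x ∈ t, GoodBall g Q x (r x)) :
    ∀ (c : (Fin (k+2) → (Fin (k+1) → ℝ)) → ZMod p) (K : Set (Fin (k+1) → ℝ)), Coc c K → IsCompact K →
      (∀ (j:ℤ) x, x ∈ K → (g^j) x ∈ K) → (∀ (j:ℤ) x, c (fun i => (g^j) (x i)) = c x) →
      K ⊆ (⋃ x ∈ t, orb g (Metric.ball x (r x))) → I c = 0 := by
  classical
  induction t using Finset.induction_on with
  | empty =>
    intro c K hc hK _ _ hsub
    rw [← I_zero]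
    congr 1
    ext x
    by_contra hne
    simpa using hsub (hc.supp x hne 0)
  | insert a t ha ih =>
    intro c K hc hK hKinv hcinv hsub
    have hbU : ∀ x ∈ t, Metric.ball x (r x) ⊆ U := by
      intro x hx y hy
      have hg := ht x (Finset.mem_insert_of_mem hx)
      have := hg.pos
      exact hQU (by simpa using hg.sub y (Metric.closedBall_subset_closedBall (by linarith) (Metric.ball_subset_closedBall hy)) 0)
    refine piece_step h hp hord hQ hQU w hw hε hfix (ht a (Finset.mem_insert_self _ _))
      (⋃ x ∈ t, orb g (Metric.ball x (r x))) ?_ ?_ ?_ (ih fun x hx => ht x (Finset.mem_insert_of_mem hx)) c K hc hK hcinv ?_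
    · exact isOpen_biUnion fun x hx => h.orb_open Metric.isOpen_ball (hbU x hx)
    · intro y hy
      simp only [Set.mem_iUnion] at hy
      obtain ⟨x, hx, j, hj⟩ := hy
      have := h.maps (-j) _ (hbU x hx hj)
      rw [zp] at this
      simpa using this
    · intro j y hy
      simp only [Set.mem_iUnion] at hy ⊢
      obtain ⟨x, hx, hy⟩ := hy
      exact ⟨x, hx, (orb_inv g _ j y).2 hy⟩
    · rwa [Finset.set_biUnion_insert] at hsub

theorem fix_of_prime {g : Equiv.Perm (Fin (k+1) → ℝ)} (hp : p.Prime) (hg : g^p = 1) {m : ℕ} (hm0 : 0 < m)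
    (hm : m < p) {x : Fin (k+1) → ℝ} (hx : (g^m) x = x) : g x = x := by
  have hc : Nat.Coprime m p := (Nat.coprime_of_lt_prime (n := m) hm0.ne' hm hp).symm
  have h1 : Function.IsPeriodicPt g m x := by
    rw [Function.IsPeriodicPt, Function.IsFixedPt, ← Equiv.Perm.coe_pow]; exact hx
  have h2 : Function.IsPeriodicPt g p x := by
    rw [Function.IsPeriodicPt, Function.IsFixedPt, ← Equiv.Perm.coe_pow, hg]; rfl
  have h3 := h1.gcd h2
  rw [hc.gcd_eq_one] at h3
  simpa [Function.IsPeriodicPt, Function.IsFixedPt] using h3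

theorem exists_good {g : Equiv.Perm (Fin (k+1) → ℝ)} {U Q : Set (Fin (k+1) → ℝ)} (h : Act g U p) (hp : p.Prime)
    (hQo : IsOpen Q) (x : Fin (k+1) → ℝ) (hxU : x ∈ U) (hxQ : ∀ j : ℤ, (g^j) x ∈ Q)
    (hx : g x ≠ x) : ∃ r, GoodBall g Q x r := by
  have key : ∀ m : Fin p, ∃ δ > 0, ∀ y, dist y x < δ → (g^((m:ℕ):ℤ)) y ∈ Q ∧
      (0 < (m:ℕ) → ¬ dist ((g^((m:ℕ):ℤ)) y) x < δ) := by
    intro m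
    have hc := h.cont (m:ℕ) x hxU
    obtain ⟨δ1, hδ1, h1⟩ := Metric.eventually_nhds_iff.1 (hc.eventually_mem (hQo.mem_nhds (hxQ _)))
    by_cases hm : 0 < (m:ℕ)
    · have hd : 0 < dist ((g^((m:ℕ):ℤ)) x) x := by
        rw [dist_pos]
        intro he
        rw [zpow_natCast] at he
        exact hx (fix_of_prime hp h.per hm m.2 he)
      obtain ⟨δ2, hδ2, h2⟩ := Metric.continuousAt_iff.1 hc _ (half_pos hd)
      refine ⟨min δ1 (min δ2 (dist ((g^((m:ℕ):ℤ)) x) x / 2)), by positivity, fun y hy => ?_⟩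
      simp only [lt_min_iff] at hy ⊢
      refine ⟨h1 hy.1, fun _ h3 => ?_⟩
      have h4 := h2 hy.2.1
      have := dist_triangle_left ((g^((m:ℕ):ℤ)) x) x ((g^((m:ℕ):ℤ)) y)
      linarith [h3.2.2]
    · exact ⟨δ1, hδ1, fun y hy => ⟨h1 hy, fun h => absurd h hm⟩⟩
  choose δ hδ hk using key
  obtain ⟨θ, hθ, hle⟩ := exists_pos_le δ hδ
  refine ⟨θ/4, by positivity, ?_, ?_⟩
  · intro y hy j
    obtain ⟨m, hm⟩ := h.range hp.pos j
    rw [hm]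
    rw [Metric.mem_closedBall] at hy
    exact (hk m y (by linarith [hle m])).1
  · intro y hy j hj
    obtain ⟨m, hm⟩ := h.range hp.pos j
    rw [hm] at hj ⊢
    rw [Metric.mem_ball] at hy hj
    by_contra hne
    have hm0 : 0 < (m:ℕ) := by
      rw [Nat.pos_iff_ne_zero]
      intro h0
      apply hne
      rw [h0]; simp
    exact (hk m y (by linarith [hle m])).2 hm0 (by linarith [hle m])

theorem piece {g : Equiv.Perm (Fin (k+1) → ℝ)} {U Q : Set (Fin (k+1) → ℝ)} (h : Act g U p) (hp : p.Prime)
    (hg : g ≠ 1) (hQo : IsOpen Q)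
    (hQ : Convex ℝ Q) (hQU : Q ⊆ U) (w : Fin (k+1) → ℝ) (hw : w ∈ Q) {ε : ℝ} (hε : 0 < ε)
    (hfix : ∀ x ∈ Metric.ball w ε, ∀ j : ℤ, (g^j) x = x)
    (c : (Fin (k+2) → (Fin (k+1) → ℝ)) → ZMod p) (K : Set (Fin (k+1) → ℝ)) (hc : Coc c K) (hK : IsCompact K)
    (hKinv : ∀ (j:ℤ) x, x ∈ K → (g^j) x ∈ K) (hcinv : ∀ (j:ℤ) x, c (fun i => (g^j) (x i)) = c x)
    (hKQ : K ⊆ Q) (hKF : ∀ x ∈ K, g x ≠ x) : I c = 0 := by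
  have hord : ∀ m m' : Fin p, g^((m:ℕ):ℤ) = g^((m':ℕ):ℤ) → m = m' := by
    have := Fact.mk hp
    have ho : orderOf g = p := orderOf_eq_prime h.per hg
    intro m m' hmm
    rw [zpow_natCast, zpow_natCast] at hmm
    ext
    exact pow_injOn_Iio_orderOf (by rw [ho]; exact m.2) (by rw [ho]; exact m'.2) hmm
  have hgood : ∀ x, ∃ r, x ∈ K → GoodBall g Q x r := by
    intro x
    by_cases hx : x ∈ K
    · obtain ⟨r, hr⟩ := exists_good h hp hQo x (hQU (hKQ hx)) (fun j => hKQ (hKinv j x hx)) (hKF x hx)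
      exact ⟨r, fun _ => hr⟩
    · exact ⟨1, fun h => absurd h hx⟩
  choose r hr using hgood
  obtain ⟨t, htK, ht⟩ := hK.elim_nhds_subcover (fun x => Metric.ball x (r x)) (fun x hx => Metric.ball_mem_nhds x (hr x hx).pos)
  refine pieces h hp.pos hord hQ hQU w hw hε hfix r t (fun x hx => hr x (htK x hx)) c K hc hK hKinv hcinv ?_
  intro x hx
  have := ht hx
  simp only [Set.mem_iUnion] at this ⊢
  obtain ⟨y, hy, hxy⟩ := this
  exact ⟨y, hy, sub_orb _ _ hxy⟩

end Mont

namespace Mont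
open Filter
set_option autoImplicit false
variable {k p : ℕ}

/-- sign of a partially defined vector tuple -/
noncomputable def til (p : ℕ) (u : Fin (k+2) → Option (Fin (k+1) → ℝ)) : ZMod p := by
  classical
  exact if ∀ i, u i ≠ none then eps (ZMod p) (fun i => lab ((u i).getD 0)) else 0

/-- restriction to D -/
noncomputable def res (D : Set (Fin (k+1) → ℝ)) (a : (Fin (k+1) → ℝ) → (Fin (k+1) → ℝ)) (x : Fin (k+1) → ℝ) :
    Option (Fin (k+1) → ℝ) := by
  classical
  exact if x ∈ D then some (a x) else none

theorem res_pos {D : Set (Fin (k+1) → ℝ)} {a : (Fin (k+1) → ℝ) → (Fin (k+1) → ℝ)} {x : Fin (k+1) → ℝ} (h : x ∈ D) :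
    res D a x = some (a x) := by unfold res; rw [if_pos h]

theorem res_neg {D : Set (Fin (k+1) → ℝ)} {a : (Fin (k+1) → ℝ) → (Fin (k+1) → ℝ)} {x : Fin (k+1) → ℝ} (h : x ∉ D) :
    res D a x = none := by unfold res; rw [if_neg h]

theorem res_ne {D : Set (Fin (k+1) → ℝ)} {a : (Fin (k+1) → ℝ) → (Fin (k+1) → ℝ)} {x : Fin (k+1) → ℝ} 
    (h : res D a x ≠ none) : x ∈ D := by
  by_contra h2
  exact h (res_neg h2)

theorem til_none {u : Fin (k+2) → Option (Fin (k+1) → ℝ)} (i) (h : u i = none) : til p u = 0 := by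
  unfold til; rw [if_neg (fun h2 => h2 i h)]

theorem til_some {u : Fin (k+2) → Option (Fin (k+1) → ℝ)} (h : ∀ i, u i ≠ none) :
    til p u = eps (ZMod p) (fun i => lab ((u i).getD 0)) := by
  unfold til; rw [if_pos h]

theorem til_cob [Fact p.Prime] {u : Fin (k+3) → Option (Fin (k+1) → ℝ)} (h : ∀ i, u i ≠ none) :
    cob (til p) u = 0 := by
  have := cob_eps (n := k+1) (ZMod p) (fun i => lab ((u i).getD 0))
  rw [← this]
  unfold cob
  refine Finset.sum_congr rfl fun i _ => ?_
  rw [til_some (fun _ => h _)]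

/-- boundary condition -/
def BC (p : ℕ) (D : Set (Fin (k+1) → ℝ)) (δ : ℝ) (a a' : (Fin (k+1) → ℝ) → (Fin (k+1) → ℝ)) : Prop :=
  ∀ b, b ∉ D → ∀ u : Fin (k+2) → (Fin (k+1) → ℝ), (∀ i, ∃ x ∈ D, dist x b < δ ∧ (u i = a x ∨ u i = a' x)) →
    eps (ZMod p) (fun i => lab (u i)) = 0

theorem til_bc {D : Set (Fin (k+1) → ℝ)} {δ : ℝ} {a a' : (Fin (k+1) → ℝ) → (Fin (k+1) → ℝ)} (h : BC p D δ a a')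
    {b} (hb : b ∉ D) {u : Fin (k+2) → Option (Fin (k+1) → ℝ)}
    (hu : ∀ i, ∃ x, dist x b < δ ∧ (u i = res D a x ∨ u i = res D a' x)) : til p u = 0 := by
  by_contra hne
  have hall : ∀ i, u i ≠ none := fun i hi => hne (til_none i hi)
  rw [til_some hall] at hne
  apply hne
  apply h b hb
  intro i
  obtain ⟨x, hx, h1 | h1⟩ := hu i
  · have hD : x ∈ D := res_ne (h1 ▸ hall i)
    refine ⟨x, hD, hx, Or.inl ?_⟩
    rw [h1, res_pos hD]; rfl
  · have hD : x ∈ D := res_ne (h1 ▸ hall i)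
    refine ⟨x, hD, hx, Or.inr ?_⟩
    rw [h1, res_pos hD]; rfl

theorem til_step [Fact p.Prime] {D : Set (Fin (k+1) → ℝ)} (hD : Bornology.IsBounded D) {δ : ℝ} (hδ : 0 < δ)
    {a a' : (Fin (k+1) → ℝ) → (Fin (k+1) → ℝ)} (h : BC p D δ a a') :
    I (fun x => til p (fun j => res D a (x j))) = I (fun x => til p (fun j => res D a' (x j))) := by
  obtain ⟨R, hR⟩ := hD.exists_norm_le
  apply homotopy (til p) (res D a) (res D a') (δ := min 1 δ) (R₀ := R + 1) (by positivity)
  · intro x hx i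
    by_cases hb : ∃ b, x b ∉ D
    · obtain ⟨b, hb⟩ := hb
      apply face_zero
      intro l
      apply til_bc h hb
      intro j
      obtain ⟨c, hc⟩ := pr_mem (res D a) (res D a') i x (l.succAbove j)
      exact ⟨x c, (hx _ _).trans_le (min_le_right _ _), hc⟩
    · push Not at hb
      apply til_cob
      intro j
      obtain ⟨c, hc | hc⟩ := pr_mem (res D a) (res D a') i x j
      · rw [hc, res_pos (hb c)]; simp
      · rw [hc, res_pos (hb c)]; simp
  · intro x hx ⟨j, hj⟩ i
    have hn : x j ∉ D := fun hD => by
      have := hR _ hD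
      linarith
    obtain ⟨c, hc⟩ := pr_surj (res D a) (res D a') i x j
    apply til_none c
    rcases hc with hc | hc
    · rw [hc, res_neg hn]
    · rw [hc, res_neg hn]

theorem til_coc [Fact p.Prime] {D : Set (Fin (k+1) → ℝ)} {δ : ℝ}
    {a : (Fin (k+1) → ℝ) → (Fin (k+1) → ℝ)} (h : BC p D δ a a) (x : Fin (k+3) → (Fin (k+1) → ℝ)) (hx : sm δ x) :
    cob (fun x => til p (fun j => res D a (x j))) x = 0 := by
  by_cases hb : ∃ b, x b ∉ D
  · obtain ⟨b, hb⟩ := hb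
    apply face_zero
    intro l
    apply til_bc h hb
    intro j
    exact ⟨_, hx _ _, Or.inl rfl⟩
  · push Not at hb
    apply til_cob (u := fun j => res D a (x j))
    intro j
    rw [res_pos (hb j)]; simp

theorem til_ne {D : Set (Fin (k+1) → ℝ)} {a : (Fin (k+1) → ℝ) → (Fin (k+1) → ℝ)}
    {x : Fin (k+2) → (Fin (k+1) → ℝ)} (h : til p (fun j => res D a (x j)) ≠ 0) :
    (∀ j, x j ∈ D) ∧ eps (ZMod p) (fun j => lab (a (x j))) ≠ 0 := by
  have h1 : ∀ j, x j ∈ D := by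
    intro j
    by_contra hj
    exact h (til_none j (res_neg hj))
  refine ⟨h1, ?_⟩
  rw [til_some (fun j => by rw [res_pos (h1 j)]; simp)] at h
  simpa [res_pos, h1] using h

/-- orbit mean -/
noncomputable def mean (p : ℕ) (g : Equiv.Perm (Fin (k+1) → ℝ)) (x : Fin (k+1) → ℝ) : Fin (k+1) → ℝ :=
  (p:ℝ)⁻¹ • ∑ j ∈ Finset.range p, (g^(j:ℤ)) x

/-- orbit deviation -/
noncomputable def dev (p : ℕ) (g : Equiv.Perm (Fin (k+1) → ℝ)) (x : Fin (k+1) → ℝ) : ℝ :=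
  ‖fun j : Fin p => (g^((j:ℕ):ℤ)) x - mean p g x‖

theorem dev_nonneg {g : Equiv.Perm (Fin (k+1) → ℝ)} (x : Fin (k+1) → ℝ) : 0 ≤ dev p g x := norm_nonneg _

section
variable {g : Equiv.Perm (Fin (k+1) → ℝ)} {U : Set (Fin (k+1) → ℝ)}

theorem mean_g (h : Act g U p) (x) : mean p g (g x) = mean p g x := by
  unfold mean
  congr 1
  have h1 := Finset.sum_range_succ (fun j : ℕ => (g^(j:ℤ)) x) p
  rw [Finset.sum_range_succ'] at h1
  have h2 : (g^((p:ℕ):ℤ)) x = x := by rw [zpow_natCast, h.per]; rfl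
  rw [h2] at h1
  simp only [Nat.cast_zero, zpow_zero, Equiv.Perm.one_apply, add_left_inj] at h1
  rw [← h1]
  refine Finset.sum_congr rfl fun j _ => ?_
  push_cast
  rw [zpow_add]
  simp


theorem mean_inv (h : Act g U p) (hp : 0 < p) (j : ℤ) (x) : mean p g ((g^j) x) = mean p g x := by
  obtain ⟨⟨m, hm1⟩, hm⟩ := h.range hp j
  rw [hm]
  show mean p g ((g^((m:ℕ):ℤ)) x) = mean p g x
  clear hm hm1
  simp only [zpow_natCast]
  induction m with
  | zero => simp
  | succ m ih => rw [pow_succ', Equiv.Perm.mul_apply, mean_g h, ih]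

theorem dev_le (h : Act g U p) (hp : 0 < p) {x} {t : ℝ} (ht : 0 ≤ t) : dev p g x ≤ t ↔ ∀ j : ℤ, ‖(g^j) x - mean p g x‖ ≤ t := by
  unfold dev
  rw [pi_norm_le_iff_of_nonneg ht]
  constructor
  · intro h1 j
    obtain ⟨m, hm⟩ := h.range hp j
    rw [hm]
    exact h1 m
  · intro h1 m
    exact h1 _

theorem dev_inv_le (h : Act g U p) (hp : 0 < p) (j : ℤ) (x) : dev p g ((g^j) x) ≤ dev p g x := by
  rw [dev_le h hp (dev_nonneg x)]
  intro i
  rw [mean_inv h hp, zp]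
  exact (dev_le h hp (dev_nonneg x)).1 le_rfl _

theorem dev_inv (h : Act g U p) (hp : 0 < p) (j : ℤ) (x) : dev p g ((g^j) x) = dev p g x := by
  apply le_antisymm (dev_inv_le h hp j x)
  have := dev_inv_le h hp (-j) ((g^j) x)
  rw [zp] at this
  simpa using this

theorem norm_le_dev (h : Act g U p) (hp : 0 < p) (j : ℤ) (x) : ‖(g^j) x - mean p g x‖ ≤ dev p g x :=
  (dev_le h hp (dev_nonneg x)).1 le_rfl _

theorem norm_le_dev0 (h : Act g U p) (hp : 0 < p) (x) : ‖x - mean p g x‖ ≤ dev p g x := by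
  simpa using norm_le_dev h hp 0 x

theorem fix_of_dev (h : Act g U p) (hp : 0 < p) {x} (hx : dev p g x ≤ 0) : g x = x := by
  have h1 := norm_le_dev0 h hp x
  have h2 := norm_le_dev h hp 1 x
  have e1 : x - mean p g x = 0 := by
    rw [← norm_eq_zero]; exact le_antisymm (h1.trans hx) (norm_nonneg _)
  have e2 : (g^(1:ℤ)) x - mean p g x = 0 := by
    rw [← norm_eq_zero]; exact le_antisymm (h2.trans hx) (norm_nonneg _)
  rw [sub_eq_zero] at e1 e2
  rw [zpow_one] at e2
  rw [e2]; exact e1.symm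

theorem mean_fix (h : Act g U p) (hp : 0 < p) {x} (hx : ∀ j : ℤ, (g^j) x = x) : mean p g x = x := by
  unfold mean
  simp only [hx, Finset.sum_const, Finset.card_range]
  rw [← Nat.cast_smul_eq_nsmul ℝ, smul_smul, inv_mul_cancel₀ (by positivity), one_smul]

theorem dev_fix (h : Act g U p) (hp : 0 < p) {x} (hx : ∀ j : ℤ, (g^j) x = x) : dev p g x = 0 := by
  apply le_antisymm
  · rw [dev_le h hp le_rfl]
    intro j
    rw [hx, mean_fix h hp hx]; simp
  · exact norm_nonneg _


theorem mean_cont (h : Act g U p) {x} (hx : x ∈ U) : ContinuousAt (mean p g) x := by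
  unfold mean
  have := fun j : ℤ => h.cont j x hx
  have h2 : Tendsto (fun x => ∑ j ∈ Finset.range p, (g ^ ((j:ℕ):ℤ)) x) (nhds x) (nhds (∑ j ∈ Finset.range p, (g ^ ((j:ℕ):ℤ)) x)) :=
    tendsto_finsetSum _ fun j _ => this j
  exact h2.const_smul _

theorem dev_cont (h : Act g U p) {x} (hx : x ∈ U) : ContinuousAt (dev p g) x := by
  unfold dev
  apply ContinuousAt.norm
  rw [continuousAt_pi]
  intro j
  exact (h.cont _ x hx).sub (mean_cont h hx)

end

end Mont

namespace Mont
open Filter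
set_option autoImplicit false
variable {k p : ℕ}

/-- configuration for the Newman argument -/
structure Cfg (p : ℕ) (g : Equiv.Perm (Fin (k+1) → ℝ)) (U : Set (Fin (k+1) → ℝ)) (z w y : Fin (k+1) → ℝ)
    (r R s κ : ℝ) : Prop where
  act : Act g U p
  rpos : 0 < r
  kpos : 0 < κ
  ks : κ ≤ s / 2
  kr : κ ≤ r / 2
  fix : ∀ x ∈ Metric.ball w (4*r), ∀ j : ℤ, (g^j) x = x
  sub8 : Metric.ball z (R+8*r) ⊆ U
  hw : w ∈ Metric.ball z R
  hy : y ∈ Metric.ball z R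
  hdev : ∀ x ∈ Metric.ball y s, κ ≤ dev p g x

/-- cut-off -/
noncomputable def tau (p : ℕ) (g : Equiv.Perm (Fin (k+1) → ℝ)) (r κ : ℝ) (x : Fin (k+1) → ℝ) : ℝ :=
  max 0 (min 1 ((r - dev p g x) / (r - κ)))

/-- moved base point -/
noncomputable def base (w y : Fin (k+1) → ℝ) (t : ℝ) : Fin (k+1) → ℝ := w + t • (y - w)

/-- the map -/
noncomputable def mp (p : ℕ) (g : Equiv.Perm (Fin (k+1) → ℝ)) (w y : Fin (k+1) → ℝ) (r κ l : ℝ) (x : Fin (k+1) → ℝ) :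
    Fin (k+1) → ℝ := mean p g x - base w y (l * tau p g r κ x)

/-- the domain -/
def dom (p : ℕ) (g : Equiv.Perm (Fin (k+1) → ℝ)) (z : Fin (k+1) → ℝ) (r R : ℝ) : Set (Fin (k+1) → ℝ) :=
  {x | dev p g x < 2*r ∧ dist (mean p g x) z < R + 5*r}

section
variable {g : Equiv.Perm (Fin (k+1) → ℝ)} {U : Set (Fin (k+1) → ℝ)} {z w y : Fin (k+1) → ℝ}
    {r R s κ : ℝ}

theorem tau_nonneg (x) : 0 ≤ tau p g r κ x := le_max_left _ _
theorem tau_le (x) : tau p g r κ x ≤ 1 := max_le zero_le_one (min_le_left _ _)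

theorem Cfg.tau_zero (C : Cfg p g U z w y r R s κ) {x} (hx : r ≤ dev p g x) : tau p g r κ x = 0 := by
  unfold tau
  have := C.kr; have := C.rpos
  apply max_eq_left
  apply (min_le_right _ _).trans
  apply div_nonpos_of_nonpos_of_nonneg <;> linarith

theorem Cfg.tau_one (C : Cfg p g U z w y r R s κ) {x} (hx : dev p g x ≤ κ) : tau p g r κ x = 1 := by
  unfold tau
  have := C.kr; have := C.rpos
  rw [min_eq_left, max_eq_right zero_le_one]
  rw [le_div_iff₀ (by linarith)]; linarith

theorem Cfg.base_mem (C : Cfg p g U z w y r R s κ) {t : ℝ} (h0 : 0 ≤ t) (h1 : t ≤ 1) :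
    dist (base w y t) z < R := by
  have := (convex_ball z R).add_smul_sub_mem C.hw C.hy ⟨h0, h1⟩
  exact this

theorem Cfg.dom_near (C : Cfg p g U z w y r R s κ) (hp : 0 < p) {x} (h1 : dev p g x ≤ 2*r)
    (h2 : dist (mean p g x) z ≤ R + 5*r) : x ∈ Metric.closedBall z (R+7*r) := by
  have h3 := norm_le_dev0 C.act hp x
  rw [← dist_eq_norm] at h3
  rw [Metric.mem_closedBall]
  have := dist_triangle x (mean p g x) z
  linarith

theorem Cfg.dom_sub (C : Cfg p g U z w y r R s κ) (hp : 0 < p) {x} (h1 : x ∈ dom p g z r R) :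
    x ∈ Metric.closedBall z (R+7*r) := C.dom_near hp h1.1.le h1.2.le

theorem Cfg.sub (C : Cfg p g U z w y r R s κ) : Metric.closedBall z (R+7*r) ⊆ U :=
  (Metric.closedBall_subset_ball (by linarith [C.rpos])).trans C.sub8

theorem Cfg.uc (C : Cfg p g U z w y r R s κ) {η : ℝ} (hη : 0 < η) : ∃ δ > 0, ∀ x ∈ Metric.closedBall z (R+7*r),
    ∀ b, dist x b < δ → dist (mean p g x) (mean p g b) < η ∧ |dev p g x - dev p g b| < η ∧
      |tau p g r κ x - tau p g r κ b| < η := by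
  have hc : IsCompact (Metric.closedBall z (R+7*r)) := isCompact_closedBall _ _
  obtain ⟨δ1, h1, H1⟩ := UC_of_compact hc (φ := mean p g) (fun x hx => mean_cont C.act (C.sub hx)) hη
  obtain ⟨δ2, h2, H2⟩ := UC_of_compact hc (φ := dev p g) (fun x hx => dev_cont C.act (C.sub hx)) hη
  obtain ⟨δ3, h3, H3⟩ := UC_of_compact hc (φ := tau p g r κ) (fun x hx => by
    have := dev_cont C.act (C.sub hx)
    unfold tau
    exact continuousAt_const.max (continuousAt_const.min ((continuousAt_const.sub this).div_const _))) hη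
  refine ⟨min δ1 (min δ2 δ3), by positivity, fun x hx b hb => ?_⟩
  simp only [lt_min_iff] at hb
  exact ⟨H1 x hx b hb.1, H2 x hx b hb.2.1, H3 x hx b hb.2.2⟩

theorem Cfg.far (C : Cfg p g U z w y r R s κ) (hp : 0 < p) {x} (h0 : 0 < dev p g x) (h1 : dev p g x < 2*r) :
    2*r ≤ dist (mean p g x) w := by
  by_contra! hlt
  have h3 := norm_le_dev0 C.act hp x
  rw [← dist_eq_norm] at h3
  have := dist_triangle x (mean p g x) w
  have h4 := dev_fix C.act hp (C.fix x (by rw [Metric.mem_ball]; linarith))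
  linarith

theorem mp_dist {l l' : ℝ} (x x') (hl : 0 ≤ l) (hl1 : l ≤ 1) :
    dist (mp p g w y r κ l x) (mp p g w y r κ l' x') ≤ dist (mean p g x) (mean p g x') +
      (|l - l'| + |tau p g r κ x - tau p g r κ x'|) * ‖y - w‖ := by
  have e : mp p g w y r κ l x - mp p g w y r κ l' x' = (mean p g x - mean p g x') +
      (l' * tau p g r κ x' - l * tau p g r κ x) • (y - w) := by
    unfold mp base
    rw [sub_smul]; abel
  rw [dist_eq_norm, e]
  refine (norm_add_le _ _).trans ?_
  rw [← dist_eq_norm, norm_smul, Real.norm_eq_abs]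
  gcongr
  have e2 : l' * tau p g r κ x' - l * tau p g r κ x = -((l - l') * tau p g r κ x' + l * (tau p g r κ x - tau p g r κ x')) := by
    ring
  rw [e2, abs_neg]
  refine (abs_add_le _ _).trans ?_
  rw [abs_mul, abs_mul, abs_of_nonneg (tau_nonneg x'), abs_of_nonneg hl]
  gcongr
  · exact mul_le_of_le_one_right (abs_nonneg _) (tau_le _)
  · exact mul_le_of_le_one_left (abs_nonneg _) hl1

theorem Cfg.bc (C : Cfg p g U z w y r R s κ) (hp : 0 < p) : ∃ η > 0, ∃ δ > 0, ∀ l l' : ℝ, 0 ≤ l → l ≤ 1 → 0 ≤ l' → l' ≤ 1 →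
    |l - l'| < η → BC p (dom p g z r R) δ (mp p g w y r κ l) (mp p g w y r κ l') := by
  have hr := C.rpos
  set M := ‖y - w‖ with hM
  have hM0 : 0 ≤ M := norm_nonneg _
  set η := min (r/8) (r/(8*(M+1))) with hη
  have hηpos : 0 < η := by positivity
  have hη1 : η ≤ r/8 := min_le_left _ _
  have hη2 : η * M ≤ r/8 := by
    have : η ≤ r/(8*(M+1)) := min_le_right _ _
    calc η * M ≤ r/(8*(M+1)) * (M+1) := by gcongr; linarith
      _ = r/8 := by field_simp
  obtain ⟨δ, hδ, H⟩ := C.uc hηpos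
  refine ⟨η, hηpos, δ, hδ, ?_⟩
  intro l l' hl0 hl1 hl0' hl1' hll b hb u hu
  have hu' : ∀ i, ∃ x ∈ dom p g z r R, dist x b < δ ∧ ∃ t, 0 ≤ t ∧ t ≤ 1 ∧ (t = l ∨ t = l') ∧ u i = mp p g w y r κ t x := by
    intro i
    obtain ⟨x, hx, hd, h1 | h1⟩ := hu i
    · exact ⟨x, hx, hd, l, hl0, hl1, Or.inl rfl, h1⟩
    · exact ⟨x, hx, hd, l', hl0', hl1', Or.inr rfl, h1⟩
  choose x hx hd t ht0 ht1 ht hut using hu'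
  have H' := fun i => H (x i) (C.dom_sub hp (hx i)) b (hd i)
  refine lab_close (ZMod p) u (u 0) r hr ?_ ?_
  · obtain ⟨h1, h2, h3⟩ := H' 0
    rw [hut 0]
    unfold mp
    rw [← dist_eq_norm]
    have hb' : 2*r ≤ dev p g b ∨ R + 5*r ≤ dist (mean p g b) z := by
      by_contra! h4
      exact hb h4
    rcases hb' with hb' | hb'
    · have h4 : r ≤ dev p g (x 0) := by
        have := (abs_lt.1 h2).1
        linarith
      rw [C.tau_zero h4]
      have := C.far hp (hr.trans_le h4) (hx 0).1
      simp only [base, mul_zero, zero_smul, add_zero]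
      linarith
    · have h4 := C.base_mem (t := t 0 * tau p g r κ (x 0)) (mul_nonneg (ht0 0) (tau_nonneg _))
        (mul_le_one₀ (ht1 0) (tau_nonneg _) (tau_le _))
      have h6 := dist_triangle (mean p g b) (mean p g (x 0)) z
      have h7 := dist_triangle (mean p g (x 0)) (base w y (t 0 * tau p g r κ (x 0))) z
      rw [dist_comm] at h1
      linarith
  · intro j
    rw [hut j, hut 0]
    refine (mp_dist _ _ (ht0 j) (ht1 j)).trans_lt ?_
    obtain ⟨h1, h2, h3⟩ := H' 0
    obtain ⟨h1', h2', h3'⟩ := H' j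
    have e1 := dist_triangle_right (mean p g (x j)) (mean p g (x 0)) (mean p g b)
    have e2 : |tau p g r κ (x j) - tau p g r κ (x 0)| ≤ 2*η := by
      rw [abs_lt] at h3 h3'
      rw [abs_le]; constructor <;> linarith
    have e3 : |t j - t 0| ≤ η := by
      rcases ht j with h | h <;> rcases ht 0 with h' | h' <;> rw [h, h']
      · simpa using hηpos.le
      · exact hll.le
      · rw [abs_sub_comm]; exact hll.le
      · simpa using hηpos.le
    have e4 : (|t j - t 0| + |tau p g r κ (x j) - tau p g r κ (x 0)|) * M ≤ (η + 2*η) * M := by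
      gcongr
    linarith

/-- the cochain -/
noncomputable def FF (p : ℕ) (g : Equiv.Perm (Fin (k+1) → ℝ)) (z w y : Fin (k+1) → ℝ) (r R κ l : ℝ)
    (x : Fin (k+2) → (Fin (k+1) → ℝ)) : ZMod p :=
  til p (fun j => res (dom p g z r R) (mp p g w y r κ l) (x j))

theorem Cfg.move [Fact p.Prime] (C : Cfg p g U z w y r R s κ) (hp : 0 < p) :
    I (FF p g z w y r R κ 0) = I (FF p g z w y r R κ 1) := by
  obtain ⟨η, hη, δ, hδ, H⟩ := C.bc hp
  refine step_const (fun l => I (FF p g z w y r R κ l)) zero_le_one hη ?_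
  intro t t' h1 h2 h3 h4 h5
  refine til_step ?_ hδ (H t t' h1 h2 h3 h4 h5)
  exact Metric.isBounded_closedBall.subset fun x hx => C.dom_sub hp hx

theorem Cfg.at_zero [Fact p.Prime] (C : Cfg p g U z w y r R s κ) (hp : 0 < p) :
    I (FF p g z w y r R κ 0) = 1 := by
  have hr := C.rpos
  obtain ⟨δ, hδ, H⟩ := C.uc hr
  rw [← I_lab w]
  refine I_congr (δ := min δ r) (by positivity) ?_
  intro x hx
  have hmp : ∀ x, mp p g w y r κ 0 x = mean p g x - w := by
    intro x; simp [mp, base]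
  by_cases hall : ∀ j, x j ∈ Metric.ball w (4*r)
  · have hD : ∀ j, x j ∈ dom p g z r R := by
      intro j
      refine ⟨?_, ?_⟩
      · rw [dev_fix C.act hp (C.fix _ (hall j))]; linarith
      · rw [mean_fix C.act hp (C.fix _ (hall j))]
        have h1 := hall j
        have h2 := C.hw
        rw [Metric.mem_ball] at h1 h2
        linarith [dist_triangle (x j) w z]
    unfold FF
    rw [til_some (fun j => by rw [res_pos (hD j)]; simp)]
    congr 1
    ext j
    rw [res_pos (hD j)]
    simp only [Option.getD_some]
    rw [hmp, mean_fix C.act hp (C.fix _ (hall j))]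
  · push Not at hall
    obtain ⟨i, hi⟩ := hall
    rw [Metric.mem_ball, not_lt] at hi
    rw [lab_close (ZMod p) (fun j => x j - w) (x i - w) r hr (by rw [← dist_eq_norm]; linarith)
      (fun j => by rw [dist_sub_right]; exact (hx j i).trans_le (min_le_right _ _))]
    by_contra hne
    obtain ⟨hD, hne⟩ := til_ne hne
    apply hne
    have h3 := norm_le_dev0 C.act hp (x i)
    rw [← dist_eq_norm] at h3
    have h4 := (hD i).1
    have h5 := dist_triangle (x i) (mean p g (x i)) w
    refine lab_close (ZMod p) _ (mean p g (x i) - w) r hr (by rw [← dist_eq_norm]; linarith) ?_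
    intro j
    have h6 := (H (x j) (C.dom_sub hp (hD j)) (x i) ((hx j i).trans_le (min_le_left _ _))).1
    simp only [hmp]
    rwa [dist_sub_right]

theorem Cfg.small (C : Cfg p g U z w y r R s κ) (hp : 0 < p) : ∃ δ > 0, ∀ x : Fin (k+2) → (Fin (k+1) → ℝ), sm δ x →
    FF p g z w y r R κ 1 x = loc (FF p g z w y r R κ 1) {x | κ/2 ≤ dev p g x} x := by
  have hk := C.kpos
  obtain ⟨δ, hδ, H⟩ := C.uc (half_pos hk)
  refine ⟨δ, hδ, fun x hx => ?_⟩
  by_cases hall : ∀ i, x i ∈ {x | κ/2 ≤ dev p g x}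
  · rw [loc_pos hall]
  · push Not at hall
    obtain ⟨i, hi⟩ := hall
    rw [loc_neg i hi]
    simp only [Set.mem_ofPred_eq, not_le] at hi
    by_contra hne
    obtain ⟨hD, hne⟩ := til_ne hne
    apply hne
    have H' := fun j => H (x j) (C.dom_sub hp (hD j)) (x i) (hx j i)
    have hmp : ∀ j, mp p g w y r κ 1 (x j) = mean p g (x j) - y := by
      intro j
      have h1 := (abs_lt.1 (H' j).2.1).2
      unfold mp base
      rw [C.tau_one (by linarith)]
      simp
    simp only [hmp]
    have h3 := norm_le_dev0 C.act hp (x i)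
    rw [← dist_eq_norm] at h3
    have h4 : s ≤ dist (x i) y := by
      by_contra! h5
      linarith [C.hdev (x i) h5]
    refine lab_close (ZMod p) _ (mean p g (x i) - y) κ hk ?_ ?_
    · rw [← dist_eq_norm]
      linarith [dist_triangle (x i) (mean p g (x i)) y, C.ks]
    · intro j
      rw [dist_sub_right]
      linarith [(H' j).1]

theorem Cfg.at_one [Fact p.Prime] (C : Cfg p g U z w y r R s κ) (hp : 0 < p) (hg : g ≠ 1) :
    I (FF p g z w y r R κ 1) = 0 := by
  have hr := C.rpos
  have hk := C.kpos
  obtain ⟨δ, hδ, H⟩ := C.small hp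
  rw [I_congr hδ H]
  have hKsub : ∀ x ∈ {x | κ/2 ≤ dev p g x ∧ dev p g x ≤ 2*r ∧ dist (mean p g x) z ≤ R + 5*r}, 
      x ∈ Metric.closedBall z (R+7*r) := fun x hx => C.dom_near hp hx.2.1 hx.2.2
  refine piece C.act Fact.out hg (Q := Metric.ball z (R+8*r)) Metric.isOpen_ball (convex_ball _ _) C.sub8 w 
    (Metric.ball_subset_ball (by linarith) C.hw) (ε := 4*r) (by linarith) C.fix _ 
    {x | κ/2 ≤ dev p g x ∧ dev p g x ≤ 2*r ∧ dist (mean p g x) z ≤ R + 5*r} ?_ ?_ ?_ ?_ ?_ ?_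
  · refine ⟨?_, ?_, ?_⟩
    · intro x hx i
      obtain ⟨h1, h2⟩ := loc_ne hx
      obtain ⟨h3, -⟩ := til_ne h2
      exact ⟨h1 i, (h3 i).1.le, (h3 i).2.le⟩
    · obtain ⟨η, hη, δ', hδ', H2⟩ := C.bc hp
      have hb := H2 1 1 zero_le_one le_rfl zero_le_one le_rfl (by simpa using hη)
      refine ⟨min δ δ', by positivity, fun x hx => ?_⟩
      rw [← til_coc hb x (sm_mono (min_le_right _ _) hx)]
      refine cob_congr fun i => ?_
      rw [← H]
      · rfl
      · intro a b
        exact (hx _ _).trans_le (min_le_left _ _)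
    · intro x hx
      obtain ⟨h1, h2⟩ := loc_ne hx
      obtain ⟨-, h4⟩ := til_ne h2
      have := eps_inj _ _ h4
      intro a b hab
      apply this
      simp only [hab]
  · have hcc : IsCompact (Metric.closedBall z (R+7*r)) := isCompact_closedBall _ _
    have hd : ContinuousOn (dev p g) (Metric.closedBall z (R+7*r)) := fun x hx => 
      (dev_cont C.act (C.sub hx)).continuousWithinAt
    have hm : ContinuousOn (fun x => dist (mean p g x) z) (Metric.closedBall z (R+7*r)) := fun x hx => 
      ContinuousAt.continuousWithinAt (Filter.Tendsto.dist (mean_cont C.act (C.sub hx)) tendsto_const_nhds)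
    have h1 := hd.preimage_isClosed_of_isClosed hcc.isClosed (isClosed_Icc (a := κ/2) (b := 2*r))
    have h2 := hm.preimage_isClosed_of_isClosed hcc.isClosed (isClosed_Iic (a := R + 5*r))
    have h3 := hcc.of_isClosed_subset (h1.inter h2) (fun x hx => hx.1.1)
    convert h3 using 1
    ext x
    constructor
    · intro hx
      exact ⟨⟨hKsub x hx, hx.1, hx.2.1⟩, hKsub x hx, hx.2.2⟩
    · rintro ⟨⟨_, h3, h4⟩, _, h5⟩
      exact ⟨h3, h4, h5⟩
  · intro j x hx
    simp only [Set.mem_ofPred_eq] at hx ⊢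
    rwa [dev_inv C.act hp, mean_inv C.act hp]
  · intro j x
    have e1 : ∀ x, res (dom p g z r R) (mp p g w y r κ 1) ((g^j) x) = res (dom p g z r R) (mp p g w y r κ 1) x := by
      intro x
      unfold res mp tau dom
      simp only [Set.mem_ofPred_eq, dev_inv C.act hp, mean_inv C.act hp]
      congr
    unfold loc FF
    simp only [e1, Set.mem_ofPred_eq, dev_inv C.act hp]
  · exact fun x hx => Metric.closedBall_subset_ball (by linarith) (hKsub x hx)
  · intro x hx hfx
    have h1 : ∀ j : ℤ, (g^j) x = x := fun j => Equiv.Perm.zpow_apply_eq_self_of_apply_eq_self hfx j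
    have h2 := hx.1
    rw [dev_fix C.act hp h1] at h2
    linarith

theorem Cfg.false [Fact p.Prime] (C : Cfg p g U z w y r R s κ) (hp : 0 < p) (hg : g ≠ 1) : False := by
  have h1 := C.at_zero hp
  rw [C.move hp, C.at_one hp hg] at h1
  have h2 : ((fun _ => 0 : ℕ → ZMod p) : Germ (atTop : Filter ℕ) (ZMod p)) = ((fun _ => 1 : ℕ → ZMod p) : Germ (atTop : Filter ℕ) (ZMod p)) := h1
  rw [Germ.coe_eq] at h2
  obtain ⟨n, hn⟩ := h2.exists
  exact zero_ne_one hn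

theorem newman_prime [Fact p.Prime] (h : Act g U p) (hzU : z ∈ U)
    (hz1 : ∀ ε > 0, ∃ w ∈ Metric.ball z ε, ∃ ε' > 0, ∀ x ∈ Metric.ball w ε', g x = x)
    (hz2 : ∀ ε > 0, ∃ y ∈ Metric.ball z ε, g y ≠ y) : False := by
  have hp : 0 < p := (Fact.out : p.Prime).pos
  obtain ⟨Rq, hRq, hQ⟩ := Metric.isOpen_iff.1 h.opn z hzU
  obtain ⟨w, hw, ε', hε', hfix⟩ := hz1 (Rq/2) (by positivity)
  obtain ⟨y, hy, hgy⟩ := hz2 (Rq/2) (by positivity)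
  have hd : 0 < dev p g y := by
    by_contra! h2
    exact hgy (fix_of_dev h hp h2)
  have hyU : y ∈ U := hQ (Metric.ball_subset_ball (by linarith) hy)
  obtain ⟨s, hs, hdev⟩ := Metric.continuousAt_iff.1 (dev_cont h hyU) _ (half_pos hd)
  set r := min (ε'/4) (Rq/16) with hr
  have hr0 : 0 < r := by positivity
  have hr1 : r ≤ ε'/4 := min_le_left _ _
  have hr2 : r ≤ Rq/16 := min_le_right _ _
  set κ := min (dev p g y/2) (min (s/2) (r/2)) with hκ
  have hg : g ≠ 1 := by rintro rfl; exact hgy rfl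
  refine Cfg.false (z := z) (w := w) (y := y) (r := r) (R := Rq/2) (s := s) (κ := κ) (U := U) ⟨h, hr0, by positivity, ?_, ?_, ?_, ?_, hw, hy, ?_⟩ hp hg
  · exact (min_le_right _ _).trans (min_le_left _ _)
  · exact (min_le_right _ _).trans (min_le_right _ _)
  · intro x hx j
    exact Equiv.Perm.zpow_apply_eq_self_of_apply_eq_self (hfix x (Metric.ball_subset_ball (by linarith) hx)) j
  · exact (Metric.ball_subset_ball (by linarith)).trans hQ
  · intro x hx
    have h1 := hdev hx
    rw [Real.dist_eq, abs_lt] at h1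
    have : κ ≤ dev p g y/2 := min_le_left _ _
    linarith [h1.1]

end

end Mont

namespace Mont
open Filter
set_option autoImplicit false
variable {k p : ℕ}

/-- extension by the identity -/
noncomputable def extId {V : Type*} (U : Set V) (g : V → V) (x : V) : V := by
  classical
  exact if x ∈ U then g x else x

theorem extId_pos {V : Type*} {U : Set V} {g : V → V} {x : V} (h : x ∈ U) : extId U g x = g x := by
  unfold extId; rw [if_pos h]

theorem extId_neg {V : Type*} {U : Set V} {g : V → V} {x : V} (h : x ∉ U) : extId U g x = x := by
  unfold extId; rw [if_neg h]

theorem newman1 (hp : p.Prime) (U : Set (Fin (k+1) → ℝ)) (hU : IsOpen U) (hUc : IsPreconnected U)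
    (g : (Fin (k+1) → ℝ) → (Fin (k+1) → ℝ))
    (hm : Set.MapsTo g U U) (hc : ContinuousOn g U) (hN : ∀ x ∈ U, g^[p] x = x) (O : Set (Fin (k+1) → ℝ)) 
    (hO : IsOpen O) (hOne : O.Nonempty) (hOU : O ⊆ U) (hfix : ∀ x ∈ O, g x = x) : ∀ x ∈ U, g x = x := by
  have hmm : ∀ (n : ℕ) x, x ∈ U → (extId U g)^[n] x ∈ U ∧ (extId U g)^[n] x = g^[n] x := by
    intro n x hx
    induction n with
    | zero => exact ⟨hx, rfl⟩
    | succ n ih => 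
      rw [Function.iterate_succ_apply', Function.iterate_succ_apply', ← ih.2, extId_pos ih.1]
      exact ⟨hm ih.1, rfl⟩
  have hper : ∀ x, (extId U g)^[p] x = x := by
    intro x
    by_cases hx : x ∈ U
    · rw [(hmm p x hx).2, hN x hx]
    · exact Function.iterate_fixed (extId_neg hx) p
  have hp1 : p - 1 + 1 = p := Nat.sub_add_cancel hp.pos
  let G : Equiv.Perm (Fin (k+1) → ℝ) := 
    ⟨extId U g, (extId U g)^[p-1], fun x => by rw [← Function.iterate_succ_apply, Nat.succ_eq_add_one, hp1, hper],
      fun x => by rw [← Function.iterate_succ_apply' (extId U g), Nat.succ_eq_add_one, hp1, hper]⟩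
  have hGp : ∀ (n : ℕ) x, (G^n) x = (extId U g)^[n] x := by
    intro n x
    rw [Equiv.Perm.coe_pow]; rfl
  have hG1 : G^p = 1 := by
    ext1 x
    rw [hGp, hper]; rfl
  have hGz : ∀ j : ℤ, ∃ n : ℕ, G^j = G^n := by
    intro j
    refine ⟨(j % p).toNat, ?_⟩
    have h1 : ((j % p).toNat : ℤ) = j % p := Int.toNat_of_nonneg (Int.emod_nonneg _ (by exact_mod_cast hp.ne_zero))
    rw [← zpow_natCast, h1]
    conv_lhs => rw [← Int.emod_add_mul_ediv j p]
    rw [zpow_add, zpow_mul, zpow_natCast, hG1, one_zpow, mul_one]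
  have hcont : ∀ x ∈ U, ContinuousAt (extId U g) x := by
    intro x hx
    refine (hc.continuousAt (hU.mem_nhds hx)).congr ?_
    filter_upwards [hU.mem_nhds hx] with y hy
    exact (extId_pos hy).symm
  have hA : Act G U p := by
    refine ⟨hU, ?_, ?_, hG1⟩
    · intro j x hx
      obtain ⟨n, hn⟩ := hGz j
      rw [hn, hGp]
      exact (hmm n x hx).1
    · intro j x hx
      obtain ⟨n, hn⟩ := hGz j
      rw [hn, Equiv.Perm.coe_pow]
      show ContinuousAt ((extId U g)^[n]) x
      induction n with
      | zero => exact continuousAt_id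
      | succ n ih => 
        rw [Function.iterate_succ']
        clear hn
        have : ContinuousAt ((extId U g)^[n]) x := by
          clear ih
          induction n with
          | zero => exact continuousAt_id
          | succ n ih =>
            rw [Function.iterate_succ']
            exact ContinuousAt.comp (hcont _ (hmm n x hx).1) ih
        exact ContinuousAt.comp (hcont _ (hmm n x hx).1) this
  have : Fact p.Prime := ⟨hp⟩
  have hsub : U ⊆ interior {x | extId U g x = x} := by
    refine hUc.subset_of_closure_inter_subset isOpen_interior ?_ ?_
    · obtain ⟨x, hx⟩ := hOne
      refine ⟨x, hOU hx, interior_maximal ?_ hO hx⟩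
      intro y hy
      show extId U g y = y
      rw [extId_pos (hOU hy), hfix y hy]
    · rintro z ⟨hz, hzU⟩
      by_contra hn
      refine newman_prime hA hzU ?_ ?_
      · intro ε hε
        obtain ⟨w, hw, hd⟩ := Metric.mem_closure_iff.1 hz ε hε
        refine ⟨w, by rwa [Metric.mem_ball, dist_comm], ?_⟩
        obtain ⟨ε', h1, h2⟩ := Metric.isOpen_iff.1 isOpen_interior w hw
        exact ⟨ε', h1, fun x hx => (interior_subset (h2 hx) : x ∈ {x | extId U g x = x})⟩
      · intro ε hε
        by_contra! h2
        exact hn (interior_maximal (t := Metric.ball z ε) (fun x hx => h2 x hx) Metric.isOpen_ball (Metric.mem_ball_self hε))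
  intro x hx
  have h1 : x ∈ {x | extId U g x = x} := interior_subset (hsub hx)
  rw [Set.mem_ofPred_eq] at h1
  rwa [extId_pos hx] at h1

theorem newman2 {V : Type*} [NormedAddCommGroup V] [NormedSpace ℝ V] [FiniteDimensional ℝ V] 
    (hp : p.Prime) (U : Set V) (hU : IsOpen U) (hUc : IsPreconnected U)
    (g : V → V)
    (hm : Set.MapsTo g U U) (hc : ContinuousOn g U) (hN : ∀ x ∈ U, g^[p] x = x) (O : Set V) 
    (hO : IsOpen O) (hOne : O.Nonempty) (hOU : O ⊆ U) (hfix : ∀ x ∈ O, g x = x) : ∀ x ∈ U, g x = x := by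
  rcases Nat.eq_zero_or_pos (Module.finrank ℝ V) with h0 | h0
  · have := Module.finrank_zero_iff.1 h0
    exact fun x _ => Subsingleton.elim _ _
  obtain ⟨k, hk⟩ : ∃ k, Module.finrank ℝ V = k + 1 := ⟨_, (Nat.sub_add_cancel h0).symm⟩
  let e : V ≃L[ℝ] (Fin (k+1) → ℝ) := ContinuousLinearEquiv.ofFinrankEq (by simp [hk])
  have hit : ∀ n x, (fun x => e (g (e.symm x)))^[n] x = e (g^[n] (e.symm x)) := by
    intro n x
    induction n with
    | zero => simp
    | succ n ih => rw [Function.iterate_succ_apply', ih, Function.iterate_succ_apply']; simp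
  have key := newman1 (k := k) hp (e.symm ⁻¹' U) (hU.preimage e.symm.continuous) ?_ (fun x => e (g (e.symm x))) ?_ ?_ ?_ 
    (e.symm ⁻¹' O) (hO.preimage e.symm.continuous) ?_ (Set.preimage_mono hOU) ?_
  · intro x hx
    have := key (e x) (by simpa using hx)
    simpa using this
  · have : e.symm ⁻¹' U = e '' U := by
      ext x
      constructor
      · intro hx; exact ⟨_, hx, by simp⟩
      · rintro ⟨y, hy, rfl⟩; simpa using hy
    rw [this]
    exact hUc.image _ e.continuous.continuousOn
  · intro x hx
    simpa using hm hx
  · exact e.continuous.comp_continuousOn (hc.comp e.symm.continuous.continuousOn (fun x hx => hx))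
  · intro x hx
    rw [hit, hN _ hx]; simp
  · obtain ⟨x, hx⟩ := hOne
    exact ⟨e x, by simpa using hx⟩
  · intro x hx
    rw [hfix _ hx]; simp

theorem newman {V : Type*} [NormedAddCommGroup V] [NormedSpace ℝ V] [FiniteDimensional ℝ V] 
    (U : Set V) (hU : IsOpen U) (hUc : IsPreconnected U) (g : V → V)
    (hm : Set.MapsTo g U U) (hc : ContinuousOn g U) (O : Set V) 
    (hO : IsOpen O) (hOne : O.Nonempty) (hOU : O ⊆ U) (hfix : ∀ x ∈ O, g x = x) (N : ℕ) (hN0 : 0 < N)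
    (hN : ∀ x ∈ U, g^[N] x = x) : ∀ x ∈ U, g x = x := by
  induction N using Nat.strong_induction_on with
  | _ N ih =>
    by_cases h1 : N = 1
    · subst h1; exact hN
    have hq := Nat.minFac_prime h1
    obtain ⟨m, hmN⟩ := Nat.minFac_dvd N
    have hm0 : 0 < m := by
      rcases Nat.eq_zero_or_pos m with h | h
      · rw [h] at hmN; omega
      · exact h
    have hlt : m < N := by
      have := hq.two_le
      nlinarith
    refine ih m hlt hm0 ?_
    refine newman2 hq U hU hUc (g^[m]) (hm.iterate m) (hc.iterate hm m) ?_ O hO hOne hOU ?_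
    · intro x hx
      rw [← Function.iterate_mul, mul_comm, ← hmN, hN x hx]
    · intro x hx
      exact Function.iterate_fixed (hfix x hx) m

end Mont

namespace Mont
open Filter
set_option autoImplicit false

section
variable {V : Type*} {Ω : Set V} {F : V → V}

/-- period set -/
def PS (Ω : Set V) (F : V → V) (n : ℕ) : Set V := {x | x ∈ Ω ∧ F^[n.factorial] x = x}

theorem PS_mono {n m : ℕ} (h : n ≤ m) : PS Ω F n ⊆ PS Ω F m := by
  rintro x ⟨hx, hp⟩
  refine ⟨hx, ?_⟩
  obtain ⟨c, hc⟩ := Nat.factorial_dvd_factorial h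
  rw [hc, Function.iterate_mul]
  exact Function.iterate_fixed hp c

theorem back (hper : ∀ x ∈ Ω, ∃ p : ℕ, 1 ≤ p ∧ F^[p] x = x) {x} (hx : x ∈ Ω) : ∃ n, F^[n] (F x) = x := by
  obtain ⟨p, hp, h⟩ := hper x hx
  refine ⟨p-1, ?_⟩
  rw [← Function.iterate_succ_apply, Nat.succ_eq_add_one, Nat.sub_add_cancel hp, h]

theorem fix_back (hper : ∀ x ∈ Ω, ∃ p : ℕ, 1 ≤ p ∧ F^[p] x = x) {x} (hx : x ∈ Ω) {N : ℕ} (h : F^[N] (F x) = F x) :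
    F^[N] x = x := by
  obtain ⟨n, hn⟩ := back hper hx
  have : F^[N] (F^[n] (F x)) = F^[n] (F x) := by
    rw [← Function.iterate_add_apply, add_comm, Function.iterate_add_apply, h]
  rwa [hn] at this

variable [TopologicalSpace V]

theorem int_inv (hΩ : IsOpen Ω) (hm : Set.MapsTo F Ω Ω) (hc : ContinuousOn F Ω)
    (hper : ∀ x ∈ Ω, ∃ p : ℕ, 1 ≤ p ∧ F^[p] x = x) {B : Set V} (hB : B ⊆ Ω) (h : ∀ y ∈ Ω, F y ∈ B → y ∈ B) :
    Set.MapsTo F (interior B) (interior B) := by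
  have h1 : ∀ y ∈ Ω, F y ∈ interior B → y ∈ interior B := by
    intro y hy hFy
    refine interior_maximal (t := Ω ∩ F ⁻¹' interior B) ?_ (hc.isOpen_inter_preimage hΩ isOpen_interior) ⟨hy, hFy⟩
    rintro x ⟨hx, hFx⟩
    exact h x hx (interior_subset hFx)
  have h2 : ∀ n, ∀ y ∈ Ω, F^[n] y ∈ interior B → y ∈ interior B := by
    intro n
    induction n with
    | zero => intro y _ h; exact h
    | succ n ih => 
      intro y hy h
      rw [Function.iterate_succ_apply] at h
      exact h1 y hy (ih _ (hm hy) h)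
  intro x hx
  have hxΩ := hB (interior_subset hx)
  obtain ⟨n, hn⟩ := back hper hxΩ
  apply h2 n _ (hm hxΩ)
  rwa [hn]

theorem O_inv (hΩ : IsOpen Ω) (hm : Set.MapsTo F Ω Ω) (hc : ContinuousOn F Ω)
    (hper : ∀ x ∈ Ω, ∃ p : ℕ, 1 ≤ p ∧ F^[p] x = x) (n : ℕ) : 
    Set.MapsTo F (interior (PS Ω F n)) (interior (PS Ω F n)) :=
  int_inv hΩ hm hc hper (fun x hx => hx.1) (fun y hy h => ⟨hy, fix_back hper hy h.2⟩)

theorem comp_inv {A : Set V} {h : V → V} (hA : Set.MapsTo h A A) (hc : ContinuousOn h A) {x y : V}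
    (hy : y ∈ connectedComponentIn A x) (hfy : h y = y) : 
    Set.MapsTo h (connectedComponentIn A x) (connectedComponentIn A x) := by
  have h1 : h '' (connectedComponentIn A x) ⊆ connectedComponentIn A y := by
    refine IsPreconnected.subset_connectedComponentIn ?_ ⟨y, hy, hfy⟩ ?_
    · exact isPreconnected_connectedComponentIn.image _ (hc.mono (connectedComponentIn_subset _ _))
    · rintro _ ⟨z, hz, rfl⟩
      exact hA (connectedComponentIn_subset _ _ hz)
  rw [← connectedComponentIn_eq hy] at h1
  exact fun z hz => h1 ⟨z, hz, rfl⟩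

end

section
variable {V : Type*} [NormedAddCommGroup V] [NormedSpace ℝ V] [FiniteDimensional ℝ V] {Ω : Set V} {F : V → V}

theorem O_closed (hΩ : IsOpen Ω) (hm : Set.MapsTo F Ω Ω) (hc : ContinuousOn F Ω)
    (hper : ∀ x ∈ Ω, ∃ p : ℕ, 1 ≤ p ∧ F^[p] x = x) {k m : ℕ} {x : V} (hx : x ∈ interior (PS Ω F m))
    (hcl : x ∈ closure (interior (PS Ω F k))) : x ∈ interior (PS Ω F k) := by
  set C := connectedComponentIn (interior (PS Ω F m)) x with hC
  have hCo : IsOpen C := isOpen_interior.connectedComponentIn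
  have hxC : x ∈ C := mem_connectedComponentIn hx
  have hCs : C ⊆ interior (PS Ω F m) := connectedComponentIn_subset _ _
  have hsub : interior (PS Ω F m) ⊆ Ω := fun y hy => (interior_subset hy).1
  obtain ⟨y, hyC, hyO⟩ := mem_closure_iff.1 hcl C hCo hxC
  have hci : ContinuousOn (F^[k.factorial]) (interior (PS Ω F m)) := (hc.iterate hm _).mono hsub
  have key := newman C hCo isPreconnected_connectedComponentIn (F^[k.factorial])
    (comp_inv ((O_inv hΩ hm hc hper m).iterate _) hci hyC (interior_subset hyO).2) (hci.mono hCs) 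
    (C ∩ interior (PS Ω F k)) (hCo.inter isOpen_interior) ⟨y, hyC, hyO⟩ Set.inter_subset_left 
    (fun z hz => (interior_subset hz.2).2) m.factorial (Nat.factorial_pos m) (by
      intro z hz
      rw [← Function.iterate_mul, mul_comm, Function.iterate_mul]
      exact Function.iterate_fixed (interior_subset (hCs hz)).2 _)
  exact interior_maximal (t := C) (s := PS Ω F k) (fun z hz => ⟨hsub (hCs hz), key z hz⟩) hCo hxC

theorem exists_baire (hΩ : IsOpen Ω) (hm : Set.MapsTo F Ω Ω) (hc : ContinuousOn F Ω)
    (hper : ∀ x ∈ Ω, ∃ p : ℕ, 1 ≤ p ∧ F^[p] x = x) {G : Set V} (hG : IsOpen G) (hne : (Ω \ G).Nonempty) :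
    ∃ k : ℕ, ∃ e ∈ Ω \ G, e ∈ interior {y | y ∈ Ω ∧ (y ∈ Ω \ G → F^[k.factorial] y = y)} := by
  have hlc : IsLocallyClosed (Ω \ G) := hΩ.isLocallyClosed.inter hG.isClosed_compl.isLocallyClosed
  have : LocallyCompactSpace ↥(Ω \ G) := hlc.locallyCompactSpace
  have : Nonempty ↥(Ω \ G) := hne.to_subtype
  obtain ⟨k, ⟨e, he⟩, hek⟩ := nonempty_interior_of_iUnion_of_closed 
    (f := fun n : ℕ => {x : ↥(Ω \ G) | F^[n.factorial] x = x}) (fun n => by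
      refine isClosed_eq ?_ continuous_subtype_val
      exact ((hc.iterate hm _).mono Set.sdiff_subset).domRestrict) (by
      rw [Set.eq_univ_iff_forall]
      intro x
      obtain ⟨p, hp, hx⟩ := hper x x.2.1
      rw [Set.mem_iUnion]
      refine ⟨p, ?_⟩
      obtain ⟨c, hcc⟩ := Nat.dvd_factorial hp le_rfl
      show F^[p.factorial] x = x
      rw [hcc, Function.iterate_mul]
      exact Function.iterate_fixed hx c)
  refine ⟨k, e, he, ?_⟩
  rw [mem_interior_iff_mem_nhds, mem_nhds_subtype] at hek
  obtain ⟨u, hu, hsub⟩ := hek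
  rw [mem_interior_iff_mem_nhds]
  filter_upwards [hu, hΩ.mem_nhds he.1] with y hy hyΩ
  refine ⟨hyΩ, fun hyE => ?_⟩
  exact hsub (a := ⟨y, hyE⟩) hy

theorem no_bad (hΩ : IsOpen Ω) (hm : Set.MapsTo F Ω Ω) (hc : ContinuousOn F Ω)
    (hper : ∀ x ∈ Ω, ∃ p : ℕ, 1 ≤ p ∧ F^[p] x = x) : Ω ⊆ ⋃ n, interior (PS Ω F n) := by
  set G := ⋃ n, interior (PS Ω F n) with hG
  by_contra hns
  have hne : (Ω \ G).Nonempty := Set.sdiff_nonempty.2 hns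
  obtain ⟨k, e, he, hek⟩ := exists_baire hΩ hm hc hper (isOpen_iUnion fun n => isOpen_interior) hne
  set B := {y | y ∈ Ω ∧ (y ∈ Ω \ G → F^[k.factorial] y = y)} with hB
  have hBΩ : B ⊆ Ω := fun x hx => hx.1
  have hOi := O_inv hΩ hm hc hper
  have hBi : Set.MapsTo F (interior B) (interior B) := by
    refine int_inv hΩ hm hc hper hBΩ ?_
    intro y hy hFy
    refine ⟨hy, fun hyE => ?_⟩
    apply fix_back hper hy
    apply hFy.2
    refine ⟨hFy.1, fun hn => hyE.2 ?_⟩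
    rw [hG, Set.mem_iUnion] at hn ⊢
    obtain ⟨n, hn⟩ := hn
    obtain ⟨j, hj⟩ := back hper hy
    refine ⟨n, ?_⟩
    rw [← hj]
    exact (hOi n).iterate j hn
  set h := F^[k.factorial] with hh
  set C := connectedComponentIn (interior B) e with hC
  have hCo : IsOpen C := isOpen_interior.connectedComponentIn
  have heC : e ∈ C := mem_connectedComponentIn hek
  have hCB : C ⊆ B := (connectedComponentIn_subset _ _).trans interior_subset
  have hCΩ : C ⊆ Ω := hCB.trans hBΩ
  have hhc : ContinuousOn h Ω := hc.iterate hm _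
  have hhC : Set.MapsTo h C C := comp_inv (hBi.iterate _) (hhc.mono (interior_subset.trans hBΩ)) heC ((interior_subset hek).2 he)
  have hcl : ∀ m x, x ∈ G → x ∉ interior (PS Ω F m) → x ∉ closure (interior (PS Ω F m)) := by
    intro m x hxG hx hxc
    rw [hG, Set.mem_iUnion] at hxG
    obtain ⟨n, hn⟩ := hxG
    exact hx (O_closed hΩ hm hc hper hn hxc)
  have key : ∀ m, k ≤ m → ∀ x ∈ C, extId (interior (PS Ω F m)) h x = x := by
    intro m hkm
    set O := interior (PS Ω F m) with hO
    have hOh : Set.MapsTo h O O := (hOi m).iterate _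
    refine newman C hCo isPreconnected_connectedComponentIn _ ?_ ?_ (C \ closure O) (hCo.sdiff isClosed_closure) ?_ 
      Set.sdiff_subset ?_ m.factorial (Nat.factorial_pos m) ?_
    · intro x hx
      by_cases hxO : x ∈ O
      · rw [extId_pos hxO]; exact hhC hx
      · rwa [extId_neg hxO]
    · intro x hx
      apply ContinuousAt.continuousWithinAt
      have hhx : ContinuousAt h x := hhc.continuousAt (hΩ.mem_nhds (hCΩ hx))
      by_cases hxO : x ∈ O
      · refine hhx.congr ?_
        filter_upwards [isOpen_interior.mem_nhds hxO] with y hy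
        rw [extId_pos hy]
      by_cases hxG : x ∈ G
      · refine continuousAt_id.congr ?_
        filter_upwards [isClosed_closure.isOpen_compl.mem_nhds (hcl m x hxG hxO)] with y hy
        rw [extId_neg (fun h => hy (subset_closure h))]; rfl
      · have hfx : h x = x := (hCB hx).2 ⟨hCΩ hx, hxG⟩
        intro U hU
        rw [extId_neg hxO] at hU
        have h1 : ∀ᶠ y in nhds x, h y ∈ U := hhx (by rwa [hfx])
        rw [Filter.mem_map]
        filter_upwards [h1, hU] with y hy1 hy2
        by_cases hyO : y ∈ O
        · show extId O h y ∈ U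
          rwa [extId_pos hyO]
        · show extId O h y ∈ U
          rwa [extId_neg hyO]
    · have heO : e ∉ O := fun h => he.2 (Set.mem_iUnion.2 ⟨m, h⟩)
      have : ¬ C ⊆ PS Ω F m := fun hs => heO (interior_maximal hs hCo heC)
      obtain ⟨y, hyC, hyP⟩ := Set.not_subset.1 this
      refine ⟨y, hyC, hcl m y ?_ (fun h => hyP (interior_subset h))⟩
      by_contra hyG
      exact hyP (PS_mono hkm ⟨hCΩ hyC, (hCB hyC).2 ⟨hCΩ hyC, hyG⟩⟩)
    · intro x hx
      exact extId_neg (fun h => hx.2 (subset_closure h))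
    · intro x hx
      by_cases hxO : x ∈ O
      · have h1 : ∀ n, (extId O h)^[n] x = h^[n] x := by
          intro n
          induction n with
          | zero => rfl
          | succ n ih => 
            rw [Function.iterate_succ_apply', Function.iterate_succ_apply', ih, extId_pos (hOh.iterate n hxO)]
        rw [h1, hh, ← Function.iterate_mul, mul_comm, Function.iterate_mul]
        exact Function.iterate_fixed (interior_subset hxO).2 _
      · exact Function.iterate_fixed (extId_neg hxO) _
  apply he.2
  refine Set.mem_iUnion.2 ⟨k, interior_maximal (t := C) ?_ hCo heC⟩
  intro x hx
  refine ⟨hCΩ hx, ?_⟩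
  by_cases hxG : x ∈ G
  · rw [hG, Set.mem_iUnion] at hxG
    obtain ⟨n, hn⟩ := hxG
    have := key (max n k) (le_max_right _ _) x hx
    rwa [extId_pos (interior_mono (PS_mono (le_max_left _ _)) hn)] at this
  · exact (hCB hx).2 ⟨hCΩ hx, hxG⟩

theorem montgomery (hΩ : IsOpen Ω) (hΩc : IsPreconnected Ω) (hne : Ω.Nonempty) (hm : Set.MapsTo F Ω Ω) (hc : ContinuousOn F Ω)
    (hper : ∀ x ∈ Ω, ∃ p : ℕ, 1 ≤ p ∧ F^[p] x = x) : ∃ p : ℕ, 1 ≤ p ∧ ∀ x ∈ Ω, F^[p] x = x := by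
  have hG := no_bad hΩ hm hc hper
  obtain ⟨x, hx⟩ := hne
  obtain ⟨k, hk⟩ := Set.mem_iUnion.1 (hG hx)
  have : Ω ⊆ interior (PS Ω F k) := by
    refine hΩc.subset_of_closure_inter_subset isOpen_interior ⟨x, hx, hk⟩ ?_
    rintro y ⟨hy1, hy2⟩
    obtain ⟨m, hm'⟩ := Set.mem_iUnion.1 (hG hy2)
    exact O_closed hΩ hm hc hper hm' hy1
  exact ⟨k.factorial, Nat.factorial_pos k, fun y hy => (interior_subset (this hy)).2⟩

end

end Mont

/-- Montgomery's theorem: a homeomorphism of a nonempty open connected subset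
of a finite-dimensional real vector space, all of whose points are periodic,
is periodic. -/
theorem periodic_of_forall_periodic_point
    {V : Type*} [NormedAddCommGroup V] [NormedSpace ℝ V] [FiniteDimensional ℝ V]
    (Ω : Set V) (hΩne : Ω.Nonempty) (hΩopen : IsOpen Ω) (hΩconn : IsConnected Ω)
    (f : Ω ≃ₜ Ω)
    (hper : ∀ x : Ω, ∃ p : ℕ, 1 ≤ p ∧ (⇑f)^[p] x = x) :
    ∃ p : ℕ, 1 ≤ p ∧ ∀ x : Ω, (⇑f)^[p] x = x := by
  classical
  let F : V → V := fun x => if hx : x ∈ Ω then (f ⟨x, hx⟩ : V) else x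
  have hF : ∀ x : Ω, F x = f x := by
    intro x
    simp [F, x.2]
  have hit : ∀ (n : ℕ) (x : Ω), F^[n] x = ((⇑f)^[n] x : Ω) := by
    intro n x
    induction n with
    | zero => rfl
    | succ n ih => rw [Function.iterate_succ_apply', Function.iterate_succ_apply', ih, hF]
  have key := Mont.montgomery (F := F) hΩopen hΩconn.isPreconnected hΩne ?_ ?_ ?_
  · obtain ⟨p, hp, h⟩ := key
    refine ⟨p, hp, fun x => Subtype.ext ?_⟩
    rw [← hit, h x x.2]
  · intro x hx
    rw [hF ⟨x, hx⟩]
    exact (f ⟨x, hx⟩).2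
  · rw [continuousOn_iff_continuous_domRestrict]
    have : Ω.domRestrict F = fun x => (f x : V) := funext hF
    rw [this]
    exact continuous_subtype_val.comp f.continuous
  · intro x hx
    obtain ⟨p, hp, h⟩ := hper ⟨x, hx⟩
    refine ⟨p, hp, ?_⟩
    rw [hit p ⟨x, hx⟩, h]
end
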